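/- Let K be a number field and h ≥ 2 an integer. Then ∑_{𝔪 ∈ S_h(x)} ω(𝔪)² = (κ_K/ζ_K(h))·x·(log log x)² + (κ_K(2ℭ₁ + 1)/ζ_K(h))·x·log log x + (κ_K·ℭ₂/ζ_K(h))·x + O_h(x·log log x/log x) as the real number x → ∞, where the implied constant depends only on h and K. -/

import Mathlib

open Filter Topology Asymptotics NumberField

noncomputable section

/-- The number of distinct (nonzero) prime ideals dividing the ideal `I`. -/
def omegaK {K : Type*} [Field K] [NumberField K] (I : Ideal (𝓞 K)) : ℕ :=
  {p : Ideal (𝓞 K) | p.IsPrime ∧ p ≠ ⊥ ∧ p ∣ I}.ncard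

/-- The ideal `I` is `h`-free: no prime ideal divides it to order `h`. -/
def HFreeI {K : Type*} [Field K] [NumberField K] (h : ℕ) (I : Ideal (𝓞 K)) : Prop :=
  ∀ p : Ideal (𝓞 K), p.IsPrime → p ≠ ⊥ → ¬ p ^ h ∣ I

/-- The ideal `I` is `h`-full: every prime ideal dividing it divides it to
order at least `h`. -/
def HFullI {K : Type*} [Field K] [NumberField K] (h : ℕ) (I : Ideal (𝓞 K)) : Prop :=
  ∀ p : Ideal (𝓞 K), p.IsPrime → p ≠ ⊥ → p ∣ I → p ^ h ∣ I

/-- The ideal-counting constant `κ_K = 2^{r₁} (2π)^{r₂} h_K R_K / (w_K √|d_K|)`. -/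
def kappaK (K : Type*) [Field K] [NumberField K] : ℝ :=
  (2 ^ InfinitePlace.nrRealPlaces K * (2 * Real.pi) ^ InfinitePlace.nrComplexPlaces K *
      (classNumber K) * Units.regulator K) /
    ((Units.torsionOrder K : ℕ) * Real.sqrt |(discr K : ℝ)|)

/-- The Dedekind zeta value `ζ_K(h) = ∑_{𝔞 ≠ 0} N(𝔞)^{-h}`. -/
def zetaK (K : Type*) [Field K] [NumberField K] (h : ℕ) : ℝ :=
  ∑' I : {I : Ideal (𝓞 K) // I ≠ ⊥}, 1 / (Ideal.absNorm I.val : ℝ) ^ h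

/-- `A` is the Mertens constant `𝔄` for the prime ideals of `K`:
`𝔄 = lim (∑_{N(𝔭) ≤ x} 1/N(𝔭) − log log x)`. -/
def MertensK (K : Type*) [Field K] [NumberField K] (A : ℝ) : Prop :=
  Tendsto (fun x : ℝ =>
      (∑ᶠ p ∈ {p : Ideal (𝓞 K) | p.IsPrime ∧ p ≠ ⊥ ∧ (Ideal.absNorm p : ℝ) ≤ x},
        1 / (Ideal.absNorm p : ℝ)) - Real.log (Real.log x))
    atTop (𝓝 A)

/-- The constant `𝔅 = -π²/6`. -/
def BconstK : ℝ := -(Real.pi ^ 2) / 6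

/-- The constant `ℭ₁` for `K`, given the Mertens constant `A`. -/
def C1K (K : Type*) [Field K] [NumberField K] (h : ℕ) (A : ℝ) : ℝ :=
  A - ∑' p : {p : Ideal (𝓞 K) // p.IsPrime ∧ p ≠ ⊥},
    ((Ideal.absNorm p.val : ℝ) - 1) /
      ((Ideal.absNorm p.val : ℝ) * ((Ideal.absNorm p.val : ℝ) ^ h - 1))

/-- The constant `ℭ₂` for `K`, given the Mertens constant `A`. -/
def C2K (K : Type*) [Field K] [NumberField K] (h : ℕ) (A : ℝ) : ℝ :=
  C1K K h A ^ 2 + C1K K h A + BconstK -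
    ∑' p : {p : Ideal (𝓞 K) // p.IsPrime ∧ p ≠ ⊥},
      (((Ideal.absNorm p.val : ℝ) ^ (h - 1) - 1) /
        ((Ideal.absNorm p.val : ℝ) ^ h - 1)) ^ 2

/-- The constant `γ_h` for `K`. -/
def gammaK (K : Type*) [Field K] [NumberField K] (h : ℕ) : ℝ :=
  ∏' p : {p : Ideal (𝓞 K) // p.IsPrime ∧ p ≠ ⊥},
    (1 + ((Ideal.absNorm p.val : ℝ) - (Ideal.absNorm p.val : ℝ) ^ (1 / (h : ℝ))) /
      ((Ideal.absNorm p.val : ℝ) ^ 2 *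
        ((Ideal.absNorm p.val : ℝ) ^ (1 / (h : ℝ)) - 1)))

/-- The convergent series `𝔏_h(r)` for `K`. -/
def LhK (K : Type*) [Field K] [NumberField K] (h : ℕ) (r : ℝ) : ℝ :=
  ∑' p : {p : Ideal (𝓞 K) // p.IsPrime ∧ p ≠ ⊥},
    1 / ((Ideal.absNorm p.val : ℝ) ^ (r / (h : ℝ) - 1) *
      ((Ideal.absNorm p.val : ℝ) -
        (Ideal.absNorm p.val : ℝ) ^ (1 - 1 / (h : ℝ)) + 1))

/-- The constant `𝔇₁` for `K`, given the Mertens constant `A`. -/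
def D1K (K : Type*) [Field K] [NumberField K] (h : ℕ) (A : ℝ) : ℝ :=
  A - Real.log (h : ℝ) + LhK K h ((h : ℝ) + 1) - LhK K h (2 * (h : ℝ))

/-- The constant `𝔇₂` for `K`, given the Mertens constant `A`. -/
def D2K (K : Type*) [Field K] [NumberField K] (h : ℕ) (A : ℝ) : ℝ :=
  D1K K h A ^ 2 + D1K K h A + BconstK -
    ∑' p : {p : Ideal (𝓞 K) // p.IsPrime ∧ p ≠ ⊥},
      ((Ideal.absNorm p.val : ℝ) -
        (Ideal.absNorm p.val : ℝ) ^ (1 - 1 / (h : ℝ)) + 1)⁻¹ ^ 2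

/-!
Write `ω(I) ^ 2` as the sum over pairs of primes dividing `I`. The ideals of norm at most `x` are
counted, class by class, as lattice points in a dilated fundamental cone; since the boundary layer
of the cone has small volume, their number is `κ x + O(x ^ θ)` for some `θ < 1`. By
inclusion-exclusion over the `h`-th powers of primes the `h`-free ideals number
`(κ / ζ_K(h)) x + O(x ^ θ)`. Passing to multiples of one more prime `p` leads to a recursion which
multiplies the density by `δ(p) = (N(p) ^ (h - 1) - 1) / (N(p) ^ h - 1)` and the error by
`O(N(p) ^ (-θ))`. It remains to evaluate the sums of `δ(p)` over `N(p) ≤ x` and of `δ(p) δ(q)` over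
`N(p) N(q) ≤ x`, the diagonal terms giving `∑ δ(p) ^ 2`.

The ideal count also yields the estimate `∑ log N(p) / N(p) = log x + O(1)` over `N(p) ≤ x`, and
hence Mertens' theorem with error `O(1 / log x)`. In the double sum the hyperbola method reduces
everything to sums over `N(p) ≤ √x` of `δ(p) log (1 - log N(p) / log x)`, which tend to minus the
dilogarithm at `1 / 2`; Euler's evaluation `2 Li₂(1/2) + (log 2) ^ 2 = π ^ 2 / 6` produces the
constant `-π ^ 2 / 6`.
-/

section LatticePoints

open MeasureTheory Module Pointwise

/-- The points within distance `ε` of a point on the other side of the boundary of `X`. -/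
def boundaryLayer {E : Type*} [SeminormedAddCommGroup E] (X : Set E) (ε : ℝ) : Set E :=
  {y | ∃ y', ‖y' - y‖ ≤ ε ∧ ¬(y ∈ X ↔ y' ∈ X)}

theorem boundaryLayer_subset_cthickening {E : Type*} [SeminormedAddCommGroup E] (X : Set E)
    (ε : ℝ) : boundaryLayer X ε ⊆ Metric.cthickening ε X := by
  rintro y ⟨y', hdist, hside⟩
  by_cases hy : y ∈ X
  · exact Metric.self_subset_cthickening X hy
  · have hy' : y' ∈ X := by tauto
    exact Metric.mem_cthickening_of_dist_le y y' ε X hy' (by rwa [dist_comm, dist_eq_norm])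

theorem boundaryLayer_smul {E : Type*} [SeminormedAddCommGroup E] [NormedSpace ℝ E] (X : Set E)
    (ε : ℝ) {t : ℝ} (ht : 0 < t) :
    boundaryLayer (t • X) ε ⊆ t • boundaryLayer X (ε / t) := by
  rintro y ⟨y', hdist, hside⟩
  simp only [Set.mem_smul_set_iff_inv_smul_mem₀ ht.ne'] at hside ⊢
  refine ⟨t⁻¹ • y', ?_, hside⟩
  rw [← smul_sub, norm_smul, Real.norm_of_nonneg (by positivity), div_eq_inv_mul]
  gcongr

variable {E : Type*} [NormedAddCommGroup E] [NormedSpace ℝ E] [FiniteDimensional ℝ E]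
  [MeasurableSpace E] [BorelSpace E] (μ : Measure E) [μ.IsAddHaarMeasure]
  {ι : Type*} [Finite ι] (b : Basis ι ℝ E)

theorem pairwiseDisjoint_vadd_fundamentalDomain {E ι : Type*} [NormedAddCommGroup E]
    [NormedSpace ℝ E] [Finite ι] (b : Basis ι ℝ E) :
    (Submodule.span ℤ (Set.range b) : Set E).PairwiseDisjoint
      fun l => l +ᵥ ZSpan.fundamentalDomain b := by
  have := Fintype.ofFinite ι
  intro l hl l' hl' hne
  rw [Function.onFun, Set.disjoint_left]
  rintro _ ⟨u, hu, rfl⟩ ⟨v, hv, hvu⟩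
  have hfract : ∀ {m w : E}, m ∈ Submodule.span ℤ (Set.range b) →
      w ∈ ZSpan.fundamentalDomain b → ZSpan.fract b (m + w) = w := fun hm hw => by
    rw [ZSpan.fract_zSpan_add b _ hm, ZSpan.fract_eq_self.2 hw]
  simp only [vadd_eq_add] at hvu
  have huv : u = v := by rw [← hfract hl hu, ← hvu, hfract hl' hv]
  exact hne (add_right_cancel (huv ▸ hvu)).symm

theorem measure_vadd_fundamentalDomain_ne_top (l : E) :
    μ (l +ᵥ ZSpan.fundamentalDomain b) ≠ ⊤ := by
  have hproper : ProperSpace E := FiniteDimensional.proper ℝ E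
  have := Fintype.ofFinite ι
  rw [measure_vadd]
  exact (ZSpan.fundamentalDomain_isBounded b).measure_lt_top.ne

theorem measureReal_biUnion_vadd_fundamentalDomain (S : Finset E)
    (hS : (S : Set E) ⊆ Submodule.span ℤ (Set.range b)) :
    μ.real (⋃ l ∈ S, l +ᵥ ZSpan.fundamentalDomain b) =
      S.card * μ.real (ZSpan.fundamentalDomain b) := by
  have := Fintype.ofFinite ι
  have hvadd (l : E) : μ.real (l +ᵥ ZSpan.fundamentalDomain b) =
      μ.real (ZSpan.fundamentalDomain b) := by rw [measureReal_def, measure_vadd, measureReal_def]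
  rw [measureReal_biUnion_finset ((pairwiseDisjoint_vadd_fundamentalDomain b).subset hS)
    (fun l _ => (ZSpan.fundamentalDomain_measurableSet b).const_vadd l)
    fun l _ => measure_vadd_fundamentalDomain_ne_top μ b l]
  simp only [hvadd, Finset.sum_const, nsmul_eq_mul]

-- A translate of the fundamental domain attached to a lattice point of `X` either stays in `X`
-- or lies in the boundary layer, and conversely `X` is covered by these translates and the layer.
theorem abs_ncard_inter_span_mul_sub_le {X : Set E} (hX : Bornology.IsBounded X) {D : ℝ}
    (hD : ∀ z ∈ ZSpan.fundamentalDomain b, ‖z‖ ≤ D) :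
    |((X ∩ Submodule.span ℤ (Set.range b)).ncard : ℝ) * μ.real (ZSpan.fundamentalDomain b) -
      μ.real X| ≤ μ.real (boundaryLayer X D) := by
  have hproper : ProperSpace E := FiniteDimensional.proper ℝ E
  have := Fintype.ofFinite ι
  have hfin : (X ∩ Submodule.span ℤ (Set.range b)).Finite := ZSpan.setFinite_inter b hX
  have hXfin : μ X ≠ ⊤ := hX.measure_lt_top.ne
  have hlayer : μ (boundaryLayer X D) ≠ ⊤ :=
    (hX.cthickening.subset (boundaryLayer_subset_cthickening X D)).measure_lt_top.ne
  have htiles := measureReal_biUnion_vadd_fundamentalDomain μ b hfin.toFinset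
    fun l hl => (hfin.mem_toFinset.1 hl).2
  rw [Set.ncard_eq_toFinset_card _ hfin, ← htiles, abs_sub_le_iff, sub_le_iff_le_add',
    sub_le_iff_le_add']
  have htiles_fin : μ (⋃ l ∈ hfin.toFinset, l +ᵥ ZSpan.fundamentalDomain b) ≠ ⊤ :=
    measure_biUnion_ne_top hfin.toFinset.finite_toSet fun l _ =>
      measure_vadd_fundamentalDomain_ne_top μ b l
  constructor
  · refine (measureReal_mono ?_ (measure_union_ne_top hXfin hlayer)).trans
      (measureReal_union_le _ _)
    intro y hy
    simp only [Set.mem_iUnion, hfin.mem_toFinset] at hy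
    obtain ⟨l, hl, z, hz, rfl⟩ := hy
    refine or_iff_not_imp_left.2 fun hout => ⟨l, ?_, fun hiff => hout (hiff.2 hl.1)⟩
    simpa using hD z hz
  · refine (measureReal_mono ?_ (measure_union_ne_top htiles_fin hlayer)).trans
      (measureReal_union_le _ _)
    intro y hy
    by_cases hfloor : (ZSpan.floor b y : E) ∈ X
    · refine Or.inl (Set.mem_biUnion (hfin.mem_toFinset.2 ⟨hfloor, (ZSpan.floor b y).2⟩)
        ⟨ZSpan.fract b y, ZSpan.fract_mem_fundamentalDomain b y, ?_⟩)
      simp [ZSpan.fract_apply]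
    · refine Or.inr ⟨ZSpan.floor b y, ?_, fun hiff => hfloor (hiff.1 hy)⟩
      rw [norm_sub_rev, ← ZSpan.fract_apply]
      exact hD _ (ZSpan.fract_mem_fundamentalDomain b y)

theorem measureReal_smul_set {t : ℝ} (ht : 0 ≤ t) (X : Set E) :
    μ.real (t • X) = t ^ finrank ℝ E * μ.real X := by
  rw [measureReal_def, Measure.addHaar_smul, abs_of_nonneg (by positivity), ENNReal.toReal_mul,
    ENNReal.toReal_ofReal (by positivity), measureReal_def]

theorem measureReal_boundaryLayer_smul_le {X : Set E} (hX : Bornology.IsBounded X) (ε : ℝ) {t : ℝ}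
    (ht : 0 < t) :
    μ.real (boundaryLayer (t • X) ε) ≤ t ^ finrank ℝ E * μ.real (boundaryLayer X (ε / t)) := by
  have hproper : ProperSpace E := FiniteDimensional.proper ℝ E
  rw [← measureReal_smul_set μ ht.le]
  refine measureReal_mono (boundaryLayer_smul X ε ht) (Bornology.IsBounded.measure_lt_top ?_).ne
  exact (hX.cthickening.subset (boundaryLayer_subset_cthickening X _)).smul₀ t

theorem isBigO_ncard_smul_inter_span_sub {X : Set E} (hX : Bornology.IsBounded X) {α : ℝ}
    (hα : (fun ε => μ.real (boundaryLayer X ε)) =O[𝓝[>] 0] fun ε => ε ^ α) :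
    (fun t : ℝ => ((t • X ∩ Submodule.span ℤ (Set.range b)).ncard : ℝ) -
        μ.real X / μ.real (ZSpan.fundamentalDomain b) * t ^ finrank ℝ E)
      =O[atTop] fun t => t ^ (finrank ℝ E - α) := by
  have hproper : ProperSpace E := FiniteDimensional.proper ℝ E
  have := Fintype.ofFinite ι
  obtain ⟨D, hDpos, hD⟩ := (ZSpan.fundamentalDomain_isBounded b).exists_pos_norm_le
  have hcovol : 0 < μ.real (ZSpan.fundamentalDomain b) :=
    ENNReal.toReal_pos (ZSpan.measure_fundamentalDomain_ne_zero b)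
      (ZSpan.fundamentalDomain_isBounded b).measure_lt_top.ne
  have hshrink : Tendsto (fun t : ℝ => D / t) atTop (𝓝[>] 0) :=
    tendsto_nhdsWithin_iff.2 ⟨tendsto_const_nhds.div_atTop tendsto_id,
      (eventually_gt_atTop 0).mono fun t ht => div_pos hDpos ht⟩
  have hlayer : (fun t : ℝ => t ^ finrank ℝ E * μ.real (boundaryLayer X (D / t)))
      =O[atTop] fun t => t ^ (finrank ℝ E - α) := by
    refine ((isBigO_refl _ _).mul (hα.comp_tendsto hshrink)).trans
      (IsBigO.of_bound (D ^ α) ((eventually_gt_atTop 0).mono fun t ht => le_of_eq ?_))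
    rw [Function.comp_apply, Real.div_rpow hDpos.le ht.le, Real.rpow_sub ht, Real.rpow_natCast,
      Real.norm_of_nonneg (by positivity), Real.norm_of_nonneg (by positivity)]
    ring
  refine IsBigO.trans (IsBigO.of_bound (μ.real (ZSpan.fundamentalDomain b))⁻¹ ?_) hlayer
  filter_upwards [eventually_gt_atTop 0] with t ht
  have hcount := abs_ncard_inter_span_mul_sub_le μ b (hX.smul₀ t) hD
  rw [measureReal_smul_set μ ht.le] at hcount
  rw [Real.norm_eq_abs, Real.norm_of_nonneg (by positivity), inv_mul_eq_div, le_div_iff₀ hcovol,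
    ← abs_of_pos hcovol, ← abs_mul, abs_of_pos hcovol]
  calc _ = |((t • X ∩ Submodule.span ℤ (Set.range b)).ncard : ℝ) *
          μ.real (ZSpan.fundamentalDomain b) - t ^ finrank ℝ E * μ.real X| := by
        congr 1; field_simp
    _ ≤ _ := hcount.trans (measureReal_boundaryLayer_smul_le μ hX D ht)

end LatticePoints

section FundamentalConeBoundary

open MeasureTheory ENNReal Module
open NumberField.InfinitePlace NumberField.mixedEmbedding NumberField.mixedEmbedding.fundamentalCone
  NumberField.Units NumberField.Units.dirichletUnitTheorem

open scoped Classical in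
theorem setLIntegral_pi_apply {ι : Type*} [Fintype ι] (i : ι) {f : ℝ → ℝ≥0∞} (hf : Measurable f)
    (s : ι → Set ℝ) :
    ∫⁻ x : ι → ℝ in Set.univ.pi s, f (x i) =
      (∫⁻ t in s i, f t) * ∏ j ∈ Finset.univ.erase i, volume (s j) := by
  rw [volume_pi, Measure.restrict_pi_pi, lintegral_eq_lmarginal_univ 0,
    lmarginal_erase' _ (by fun_prop) (Finset.mem_univ i)]
  simp_rw [Function.update_self, lmarginal, lintegral_const, Measure.pi_univ,
    Measure.restrict_apply_univ]
  rw [Finset.prod_coe_sort (Finset.univ.erase i) fun j => volume (s j)]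

theorem addHaar_closedBall_zero_le {E : Type*} [NormedAddCommGroup E] [NormedSpace ℝ E]
    [FiniteDimensional ℝ E] [Nontrivial E] [MeasurableSpace E] [BorelSpace E] (μ : Measure E)
    [μ.IsAddHaarMeasure] {r : ℝ} (hr : r ∈ Set.Icc (0 : ℝ) 1) :
    μ (Metric.closedBall 0 r) ≤ .ofReal (μ.real (Metric.ball 0 1) * r) := by
  rw [Measure.addHaar_closedBall _ _ hr.1, mul_comm, ENNReal.ofReal_mul measureReal_nonneg,
    ofReal_measureReal measure_ball_lt_top.ne]
  gcongr
  exact pow_le_of_le_one hr.1 hr.2 finrank_pos.ne'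

theorem abs_log_sub_log_le_div {a b c : ℝ} (hc : 0 < c) (ha : c ≤ a) (hb : c ≤ b) :
    |Real.log a - Real.log b| ≤ |a - b| / c := by
  have hlip : ∀ {u v : ℝ}, c ≤ u → c ≤ v → Real.log u - Real.log v ≤ |u - v| / c := by
    intro u v hu hv
    have hu0 : 0 < u := hc.trans_le hu
    have hv0 : 0 < v := hc.trans_le hv
    calc Real.log u - Real.log v = Real.log (u / v) := (Real.log_div hu0.ne' hv0.ne').symm
      _ ≤ u / v - 1 := Real.log_le_sub_one_of_pos (by positivity)
      _ = (u - v) / v := by field_simp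
      _ ≤ |u - v| / c := div_le_div₀ (abs_nonneg _) (le_abs_self _) hc hv
  exact abs_sub_le_iff.2 ⟨hlip ha hb, abs_sub_comm a b ▸ hlip hb ha⟩

theorem exists_mem_frontier_abs_sub_le {s : Set ℝ} {a b : ℝ} (hside : ¬(a ∈ s ↔ b ∈ s)) :
    ∃ e ∈ frontier s, |a - e| ≤ |a - b| := by
  by_contra! hfar
  have hcover : Set.uIcc a b ⊆ interior s ∪ interior sᶜ := by
    rw [← compl_frontier_eq_union_interior]
    intro e he hfr
    refine (hfar e hfr).not_ge ?_
    rw [abs_sub_comm a e, abs_sub_comm a b]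
    exact Set.abs_sub_left_of_mem_uIcc he
  have hdisj : Disjoint (interior s) (interior sᶜ) :=
    disjoint_compl_right.mono interior_subset interior_subset
  rcases isPreconnected_uIcc.subset_or_subset isOpen_interior isOpen_interior hdisj hcover with
    hsub | hsub
  · exact hside (iff_of_true (interior_subset (hsub Set.left_mem_uIcc))
      (interior_subset (hsub Set.right_mem_uIcc)))
  · exact hside (iff_of_false (interior_subset (hsub Set.left_mem_uIcc))
      (interior_subset (hsub Set.right_mem_uIcc)))

variable {K : Type*} [Field K] [NumberField K]

open scoped Classical in
theorem normAtPlace_le_norm (w : InfinitePlace K) (x : mixedSpace K) : normAtPlace w x ≤ ‖x‖ := by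
  rw [norm_eq_sup'_normAtPlace]
  exact Finset.le_sup' (fun w => normAtPlace w x) (Finset.mem_univ w)

open scoped Classical in
theorem abs_normAtPlace_sub_le_norm_sub (w : InfinitePlace K) (x y : mixedSpace K) :
    |normAtPlace w x - normAtPlace w y| ≤ ‖x - y‖ := by
  have htri : ∀ u v : mixedSpace K, normAtPlace w u - normAtPlace w v ≤ ‖u - v‖ := fun u v => by
    have hadd := normAtPlace_add_le w (u - v) v
    rw [sub_add_cancel] at hadd
    linarith [normAtPlace_le_norm w (u - v)]
  exact abs_sub_le_iff.2 ⟨htri x y, norm_sub_rev x y ▸ htri y x⟩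

/-- The coordinates of `y` with respect to the parametrization of the fundamental cone by `w₀` (the
logarithm of the norm) and a system of fundamental units. -/
def logCoords (y : mixedSpace K) : realSpace K :=
  expMapBasis.symm (normAtAllPlaces y)

theorem mem_preimage_expMapBasis_image_iff {y : mixedSpace K} (hy : ∀ w, 0 < normAtPlace w y)
    (S : Set (realSpace K)) :
    y ∈ normAtAllPlaces ⁻¹' (expMapBasis '' S) ↔ logCoords y ∈ S := by
  have h : expMapBasis (logCoords y) = normAtAllPlaces y :=
    expMapBasis.right_inv (Set.mem_univ_pi.mpr hy)
  rw [Set.mem_preimage, ← h, (injective_expMapBasis K).mem_set_image]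

open scoped Classical in
theorem exists_abs_logCoords_sub_le (K : Type*) [Field K] [NumberField K] :
    ∃ M : ℝ, 0 < M ∧ ∀ (y y' : mixedSpace K) (η : ℝ), 0 < η →
      (∀ w, η ≤ normAtPlace w y) → (∀ w, η ≤ normAtPlace w y') →
      ∀ w, |logCoords y w - logCoords y' w| ≤ M * (‖y - y'‖ / η) := by
  let L : realSpace K →L[ℝ] (InfinitePlace K → ℝ) := ((completeBasis K).equivFunL : _ ≃L[ℝ] _)
  refine ⟨2 * ‖L‖ + 1, by positivity, fun y y' η hη hy hy' w => ?_⟩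
  have hlog : ‖expMap.symm (normAtAllPlaces y) - expMap.symm (normAtAllPlaces y')‖ ≤
      2 * (‖y - y'‖ / η) := by
    refine (pi_norm_le_iff_of_nonneg (by positivity)).2 fun v => ?_
    rw [Pi.sub_apply, expMap_symm_apply, expMap_symm_apply, normAtAllPlaces_apply,
      normAtAllPlaces_apply, ← mul_sub, norm_mul, Real.norm_eq_abs, Real.norm_eq_abs, Nat.abs_cast]
    have hmult : (v.mult : ℝ) ≤ 2 := by
      unfold InfinitePlace.mult
      split_ifs <;> norm_num
    gcongr
    refine (abs_log_sub_log_le_div hη (hy v) (hy' v)).trans ?_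
    gcongr
    exact abs_normAtPlace_sub_le_norm_sub v y y'
  calc |logCoords y w - logCoords y' w| ≤ ‖logCoords y - logCoords y'‖ :=
        norm_le_pi_norm (logCoords y - logCoords y') w
    _ = ‖L (expMap.symm (normAtAllPlaces y) - expMap.symm (normAtAllPlaces y'))‖ := by
        rw [map_sub]; rfl
    _ ≤ ‖L‖ * (2 * (‖y - y'‖ / η)) := (L.le_opNorm _).trans (by gcongr)
    _ = 2 * ‖L‖ * (‖y - y'‖ / η) := by ring
    _ ≤ (2 * ‖L‖ + 1) * (‖y - y'‖ / η) := by gcongr; linarith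

theorem continuous_expMapBasis_div (v w : InfinitePlace K) :
    Continuous fun c : realSpace K => expMapBasis c v / expMapBasis c w :=
  ((continuous_apply v).comp (continuous_expMapBasis K)).div
    ((continuous_apply w).comp (continuous_expMapBasis K)) fun c => (expMapBasis_pos c w).ne'

open scoped Classical in
-- On `normLeOne K` the ratio of two absolute values does not involve the `w₀` coordinate, and the
-- remaining coordinates stay in a compact set.
theorem exists_norm_le_mul_normAtPlace (K : Type*) [Field K] [NumberField K] :
    ∃ M : ℝ, 0 ≤ M ∧ ∀ x ∈ normLeOne K, ∀ w, ‖x‖ ≤ M * normAtPlace w x := by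
  let Q : Set (realSpace K) := Set.univ.pi fun w ↦ if w = w₀ then {0} else Set.Icc 0 1
  have hQ : IsCompact Q := isCompact_univ_pi fun w => by
    split_ifs
    exacts [isCompact_singleton, isCompact_Icc]
  choose C hC using fun v w : InfinitePlace K =>
    hQ.exists_bound_of_continuousOn (continuous_expMapBasis_div v w).continuousOn
  refine ⟨∑ v, ∑ w, |C v w|, by positivity, fun x hx w => ?_⟩
  rw [normLeOne_eq_preimage] at hx
  obtain ⟨c, hc, hcx⟩ := hx
  let c' : realSpace K := fun i ↦ if i = w₀ then 0 else c i
  have hc' : c' ∈ Q := fun i _ => by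
    have hi := hc i (Set.mem_univ i)
    by_cases h : i = w₀
    · simp [c', h]
    · simp only [h, if_false] at hi
      simpa [c', h] using ⟨hi.1, hi.2.le⟩
  have hscale : ∀ v, normAtPlace v x = Real.exp (c w₀) * expMapBasis c' v := fun v => by
    rw [← normAtAllPlaces_apply, ← hcx, expMapBasis_apply'' c]
    rfl
  have hCsum : ∀ v, C v w ≤ ∑ v, ∑ w, |C v w| := fun v =>
    calc C v w ≤ |C v w| := le_abs_self _
      _ ≤ ∑ w, |C v w| := Finset.single_le_sum (f := fun w => |C v w|)
          (fun _ _ => abs_nonneg _) (Finset.mem_univ w)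
      _ ≤ ∑ v, ∑ w, |C v w| := Finset.single_le_sum (f := fun v => ∑ w, |C v w|)
          (fun _ _ => by positivity) (Finset.mem_univ v)
  rw [norm_eq_sup'_normAtPlace]
  refine Finset.sup'_le _ _ fun v _ ↦ ?_
  have hratio := (le_abs_self _).trans ((hC v w c' hc').trans (hCsum v))
  rw [div_le_iff₀ (expMapBasis_pos c' w)] at hratio
  rw [hscale, hscale, mul_left_comm]
  gcongr

open scoped Classical in
/-- The density of the `w`-th logarithmic coordinate: the pullback of Lebesgue measure under the
parametrization of the fundamental cone is, up to a constant, the product of these measures. -/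
def coordMeasure (w : InfinitePlace K) : Measure ℝ :=
  if w = w₀ then volume.withDensity fun t => .ofReal (Real.exp (t * finrank ℚ K)) else volume

open scoped Classical in
theorem exists_volume_preimage_expMapBasis_image_pi (K : Type*) [Field K] [NumberField K] :
    ∃ C : ℝ≥0∞, C ≠ ∞ ∧ ∀ s : InfinitePlace K → Set ℝ, (∀ w, MeasurableSet (s w)) →
      volume ((normAtAllPlaces : mixedSpace K → realSpace K) ⁻¹' (expMapBasis '' Set.univ.pi s)) =
        C * ∏ w, coordMeasure w (s w) := by
  refine ⟨2 ^ nrRealPlaces K * ENNReal.ofReal (2 * Real.pi) ^ nrComplexPlaces K *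
    (2⁻¹ ^ nrComplexPlaces K * ENNReal.ofReal (regulator K) * finrank ℚ K),
    by finiteness, fun s hs => ?_⟩
  have hpi : MeasurableSet (Set.univ.pi s) := MeasurableSet.univ_pi hs
  have hpre : MeasurableSet
      ((normAtAllPlaces : mixedSpace K → realSpace K) ⁻¹' (expMapBasis '' Set.univ.pi s)) :=
    (hpi.image_of_continuousOn_injOn (continuous_expMapBasis K).continuousOn
      (injective_expMapBasis K).injOn).preimage (continuous_normAtAllPlaces K).measurable
  have hprod : ∏ w, coordMeasure w (s w) =
      ∫⁻ x : realSpace K in Set.univ.pi s, .ofReal (Real.exp (x w₀ * finrank ℚ K)) := by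
    rw [setLIntegral_pi_apply w₀ (f := fun t => .ofReal (Real.exp (t * finrank ℚ K)))
      (by fun_prop), ← Finset.mul_prod_erase _ _ (Finset.mem_univ w₀), coordMeasure, if_pos rfl,
      withDensity_apply _ (hs w₀)]
    congr 1
    refine Finset.prod_congr rfl fun w hw => ?_
    rw [coordMeasure, if_neg (Finset.ne_of_mem_erase hw)]
  rw [volume_eq_two_pow_mul_two_pi_pow_mul_integral Set.preimage_image_preimage hpre,
    normAtAllPlaces_image_preimage_expMapBasis, setLIntegral_expMapBasis_image hpi (by fun_prop),
    hprod]
  simp_rw [ENNReal.inv_mul_cancel_right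
    (Finset.prod_ne_zero_iff.mpr fun _ _ ↦ ofReal_ne_zero_iff.mpr (expMapBasis_pos _ _))
    (prod_ne_top fun _ _ ↦ ofReal_ne_top), ← mul_assoc]

theorem coordMeasure_Icc_le (w : InfinitePlace K) {a b : ℝ} (hb : 0 ≤ b) :
    coordMeasure w (Set.Icc a b) ≤
      .ofReal (Real.exp (b * finrank ℚ K)) * .ofReal (b - a) := by
  unfold coordMeasure
  split_ifs
  · rw [withDensity_apply _ measurableSet_Icc, ← Real.volume_Icc, ← setLIntegral_const]
    refine setLIntegral_mono' measurableSet_Icc fun t ht => ?_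
    gcongr
    exact ht.2
  · rw [Real.volume_Icc]
    exact le_mul_of_one_le_left' (ENNReal.one_le_ofReal.2 (Real.one_le_exp (by positivity)))

open scoped Classical in
/-- A box containing the unit neighbourhood of `paramSet K`. -/
def paramBox (w : InfinitePlace K) : Set ℝ :=
  if w = w₀ then Set.Iic 1 else Set.Icc (-1) 2

theorem measurableSet_paramBox (w : InfinitePlace K) : MeasurableSet (paramBox w) := by
  unfold paramBox
  split_ifs
  exacts [measurableSet_Iic, measurableSet_Icc]

theorem coordMeasure_paramBox_ne_top (w : InfinitePlace K) :
    coordMeasure w (paramBox w) ≠ ∞ := by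
  unfold coordMeasure paramBox
  split_ifs
  · rw [withDensity_apply _ measurableSet_Iic]
    have hint := integrableOn_exp_mul_Iic
      (Nat.cast_pos.2 (finrank_pos (R := ℚ) (M := K)) : (0 : ℝ) < finrank ℚ K) 1
    simp_rw [mul_comm (finrank ℚ K : ℝ)] at hint
    exact hint.lintegral_lt_top.ne
  · exact measure_Icc_lt_top.ne

open scoped Classical in
/-- The part of the box `paramBox` where the `i`-th coordinate is within `r` of `e`. -/
def paramSlab (i : InfinitePlace K) (e r : ℝ) : Set (realSpace K) :=
  Set.univ.pi (Function.update paramBox i (Set.Icc (e - r) (e + r)))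

open scoped Classical in
theorem exists_volume_preimage_paramSlab_le (i : InfinitePlace K) :
    ∃ C : ℝ, 0 ≤ C ∧ ∀ e ∈ Set.Icc (0 : ℝ) 1, ∀ r ∈ Set.Icc (0 : ℝ) 1,
      volume ((normAtAllPlaces : mixedSpace K → realSpace K) ⁻¹' (expMapBasis '' paramSlab i e r))
        ≤ .ofReal (C * r) := by
  obtain ⟨C₀, hC₀, hvol⟩ := exists_volume_preimage_expMapBasis_image_pi K
  let P : ℝ≥0∞ := ∏ w ∈ Finset.univ.erase i, coordMeasure w (paramBox w)
  have hP : P ≠ ∞ := prod_ne_top fun w _ => coordMeasure_paramBox_ne_top w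
  let C : ℝ≥0∞ := C₀ * P * .ofReal (Real.exp (2 * finrank ℚ K)) * 2
  have hC : C ≠ ∞ := by finiteness
  refine ⟨C.toReal, ENNReal.toReal_nonneg, fun e he r hr => ?_⟩
  have hmeas : ∀ w, MeasurableSet (Function.update paramBox i (Set.Icc (e - r) (e + r)) w) :=
    fun w => by
      rcases eq_or_ne w i with rfl | hw
      · simpa only [Function.update_self] using measurableSet_Icc
      · simpa only [Function.update_of_ne hw] using measurableSet_paramBox w
  have hslab : coordMeasure i (Set.Icc (e - r) (e + r)) ≤
      .ofReal (Real.exp (2 * finrank ℚ K)) * (2 * .ofReal r) := by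
    refine (coordMeasure_Icc_le i (add_nonneg he.1 hr.1)).trans ?_
    rw [← ENNReal.ofReal_ofNat 2, ← ENNReal.ofReal_mul zero_le_two,
      show e + r - (e - r) = 2 * r by ring]
    gcongr
    linarith [he.2, hr.2]
  have herase : ∏ w ∈ Finset.univ.erase i,
      coordMeasure w (Function.update paramBox i (Set.Icc (e - r) (e + r)) w) = P :=
    Finset.prod_congr rfl fun w hw => by rw [Function.update_of_ne (Finset.ne_of_mem_erase hw)]
  rw [paramSlab, hvol _ hmeas, ← Finset.mul_prod_erase _ _ (Finset.mem_univ i), herase,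
    Function.update_self, ENNReal.ofReal_mul ENNReal.toReal_nonneg, ENNReal.ofReal_toReal hC]
  calc C₀ * (coordMeasure i (Set.Icc (e - r) (e + r)) * P)
      ≤ C₀ * (.ofReal (Real.exp (2 * finrank ℚ K)) * (2 * .ofReal r) * P) := by gcongr
    _ = C * .ofReal r := by ring

open scoped Classical in
theorem exists_mem_paramSlab {u v : realSpace K} {r : ℝ} (hr : r ≤ 1)
    (hside : ¬(u ∈ paramSet K ↔ v ∈ paramSet K)) (huv : ∀ w, |u w - v w| ≤ r) :
    ∃ i, ∃ e ∈ ({0, 1} : Set ℝ), u ∈ paramSlab i e r := by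
  let I : InfinitePlace K → Set ℝ := fun w => if w = w₀ then Set.Iic 0 else Set.Ico 0 1
  have hmem : ∀ x : realSpace K, x ∈ paramSet K ↔ ∀ w, x w ∈ I w := fun x => Set.mem_univ_pi
  have hfrontier : ∀ w, frontier (I w) ⊆ {0, 1} := fun w => by
    by_cases hw : w = w₀
    · simp [I, hw]
    · simp [I, hw, frontier_Ico]
  have hI : ∀ {x y : realSpace K} (w), |x w - y w| ≤ r → y w ∈ I w → x w ∈ paramBox w := by
    intro x y w hxy hy
    obtain ⟨h₁, h₂⟩ := abs_le.1 hxy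
    by_cases hw : w = w₀
    · simp only [I, paramBox, hw, if_true, Set.mem_Iic] at hy h₂ ⊢
      linarith
    · simp only [I, paramBox, hw, if_false, Set.mem_Ico, Set.mem_Icc] at hy ⊢
      constructor <;> linarith
  have hbox : ∀ w, u w ∈ paramBox w := by
    by_cases hu : u ∈ paramSet K
    · exact fun w => hI w (by simpa using (abs_nonneg _).trans (huv w)) ((hmem u).1 hu w)
    · exact fun w => hI w (huv w) ((hmem v).1 (by tauto) w)
  obtain ⟨i, hi⟩ : ∃ i, ¬(u i ∈ I i ↔ v i ∈ I i) := by
    by_contra! hall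
    exact hside (by rw [hmem, hmem]; exact forall_congr' hall)
  obtain ⟨e, he, hdist⟩ := exists_mem_frontier_abs_sub_le hi
  refine ⟨i, e, hfrontier i he, fun w _ => ?_⟩
  rcases eq_or_ne w i with rfl | hw
  · rw [Function.update_self, ← Real.closedBall_eq_Icc, Metric.mem_closedBall, Real.dist_eq]
    exact hdist.trans (huv w)
  · rw [Function.update_of_ne hw]
    exact hbox w

open scoped Classical in
theorem norm_le_of_mem_boundaryLayer_normLeOne {M : ℝ} (hM : 0 ≤ M)
    (hbal : ∀ x ∈ normLeOne K, ∀ w, ‖x‖ ≤ M * normAtPlace w x) {y : mixedSpace K} {ε η : ℝ}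
    (hy : y ∈ boundaryLayer (normLeOne K) ε) {w : InfinitePlace K} (hw : normAtPlace w y ≤ η) :
    ‖y‖ ≤ M * (η + ε) + ε := by
  obtain ⟨y', hdist, hside⟩ := hy
  have hε : 0 ≤ ε := (norm_nonneg _).trans hdist
  by_cases hin : y ∈ normLeOne K
  · calc ‖y‖ ≤ M * normAtPlace w y := hbal y hin w
      _ ≤ M * (η + ε) := by gcongr; linarith
      _ ≤ M * (η + ε) + ε := by linarith
  · have hw' : normAtPlace w y' ≤ η + ε := by
      linarith [(abs_le.1 ((abs_normAtPlace_sub_le_norm_sub w y' y).trans hdist)).2]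
    calc ‖y‖ ≤ ‖y'‖ + ‖y' - y‖ := by simpa using norm_sub_le y' (y' - y)
      _ ≤ M * normAtPlace w y' + ε := add_le_add (hbal y' (by tauto) w) hdist
      _ ≤ M * (η + ε) + ε := by gcongr

open scoped Classical in
-- At distance `√ε` from the coordinate hyperplanes `logCoords` is Lipschitz with constant
-- `O(1/√ε)`, so it maps the boundary layer into slabs of width `O(√ε)`; the rest lies in a small
-- ball because all absolute values of a point of `normLeOne K` are comparable.
theorem exists_boundaryLayer_normLeOne_subset (K : Type*) [Field K] [NumberField K] :
    ∃ M : ℝ, 0 < M ∧ ∀ ε ∈ Set.Ioc (0 : ℝ) 1, M * √ε ≤ 1 →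
      boundaryLayer (normLeOne K) ε ⊆
        (⋃ i, ⋃ e ∈ ({0, 1} : Finset ℝ),
          normAtAllPlaces ⁻¹' (expMapBasis '' paramSlab i e (M * √ε))) ∪
        Metric.closedBall 0 (M * √ε) := by
  obtain ⟨M₁, hM₁, hlip⟩ := exists_abs_logCoords_sub_le K
  obtain ⟨M₂, hM₂, hbal⟩ := exists_norm_le_mul_normAtPlace K
  refine ⟨M₁ + (3 * M₂ + 1), by positivity, fun ε hε hsmall y hy => ?_⟩
  have hε0 : 0 < ε := hε.1
  have hsqrt : 0 < √ε := Real.sqrt_pos.2 hε0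
  have hle : ε ≤ √ε := Real.le_sqrt_of_sq_le (by nlinarith [hε.2])
  by_cases hall : ∀ w, 2 * √ε ≤ normAtPlace w y
  · obtain ⟨y', hdist, hside⟩ := hy
    rw [norm_sub_rev] at hdist
    have hy : ∀ w, √ε ≤ normAtPlace w y := fun w => by linarith [hall w]
    have hy' : ∀ w, √ε ≤ normAtPlace w y' := fun w => by
      linarith [hall w, (abs_le.1 ((abs_normAtPlace_sub_le_norm_sub w y y').trans hdist)).2]
    have hpos : ∀ w, 0 < normAtPlace w y := fun w => hsqrt.trans_le (hy w)
    rw [normLeOne_eq_preimage, mem_preimage_expMapBasis_image_iff hpos,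
      mem_preimage_expMapBasis_image_iff fun w => hsqrt.trans_le (hy' w)] at hside
    have hclose : ∀ w, |logCoords y w - logCoords y' w| ≤ (M₁ + (3 * M₂ + 1)) * √ε := fun w =>
      calc |logCoords y w - logCoords y' w| ≤ M₁ * (‖y - y'‖ / √ε) := hlip y y' _ hsqrt hy hy' w
        _ ≤ M₁ * (ε / √ε) := by gcongr
        _ = M₁ * √ε := by rw [Real.div_sqrt]
        _ ≤ (M₁ + (3 * M₂ + 1)) * √ε := by gcongr; linarith
    obtain ⟨i, e, he, hmem⟩ := exists_mem_paramSlab hsmall (by tauto) hclose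
    refine Or.inl (Set.mem_iUnion_of_mem i (Set.mem_biUnion (x := e) (by simpa using he) ?_))
    rwa [mem_preimage_expMapBasis_image_iff hpos]
  · push Not at hall
    obtain ⟨w, hw⟩ := hall
    right
    rw [mem_closedBall_zero_iff]
    calc ‖y‖ ≤ M₂ * (2 * √ε + ε) + ε :=
          norm_le_of_mem_boundaryLayer_normLeOne hM₂ hbal hy hw.le
      _ ≤ M₂ * (2 * √ε + √ε) + √ε := by gcongr
      _ ≤ (M₁ + (3 * M₂ + 1)) * √ε := by nlinarith [mul_pos hM₁ hsqrt]

open scoped Classical in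
theorem exists_volume_iUnion_preimage_paramSlab_le (K : Type*) [Field K] [NumberField K] :
    ∃ C : ℝ, 0 ≤ C ∧ ∀ r ∈ Set.Icc (0 : ℝ) 1,
      volume (⋃ i, ⋃ e ∈ ({0, 1} : Finset ℝ), (normAtAllPlaces : mixedSpace K → realSpace K) ⁻¹'
        (expMapBasis '' paramSlab i e r)) ≤ .ofReal (C * r) := by
  choose C hC hslab using exists_volume_preimage_paramSlab_le (K := K)
  refine ⟨∑ i, 2 * C i, Finset.sum_nonneg fun i _ => mul_nonneg zero_le_two (hC i),
    fun r hr => ?_⟩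
  have hmem : ∀ e ∈ ({0, 1} : Finset ℝ), e ∈ Set.Icc (0 : ℝ) 1 := by simp
  calc volume (⋃ i, ⋃ e ∈ ({0, 1} : Finset ℝ), (normAtAllPlaces : mixedSpace K → realSpace K) ⁻¹'
        (expMapBasis '' paramSlab i e r))
      ≤ ∑ i, ∑ e ∈ ({0, 1} : Finset ℝ), volume
          ((normAtAllPlaces : mixedSpace K → realSpace K) ⁻¹' (expMapBasis '' paramSlab i e r)) :=
        (measure_iUnion_fintype_le _ _).trans
          (Finset.sum_le_sum fun i _ => measure_biUnion_finset_le _ _)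
    _ ≤ ∑ i, ∑ _e ∈ ({0, 1} : Finset ℝ), ENNReal.ofReal (C i * r) := by
        gcongr with i _ e he
        exact hslab i e (hmem e he) r hr
    _ = .ofReal ((∑ i, 2 * C i) * r) := by
        rw [Finset.sum_mul, ENNReal.ofReal_sum_of_nonneg
          fun i _ => mul_nonneg (mul_nonneg zero_le_two (hC i)) hr.1]
        simp [mul_assoc, ENNReal.ofReal_mul]

open scoped Classical in
theorem isBigO_volume_boundaryLayer_normLeOne (K : Type*) [Field K] [NumberField K] :
    (fun ε => volume.real (boundaryLayer (normLeOne K) ε)) =O[𝓝[>] 0]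
      fun ε => ε ^ (1 / 2 : ℝ) := by
  obtain ⟨M, hM, hcover⟩ := exists_boundaryLayer_normLeOne_subset K
  obtain ⟨C, hC, hslabs⟩ := exists_volume_iUnion_preimage_paramSlab_le K
  let B : ℝ := volume.real (Metric.ball (0 : mixedSpace K) 1)
  have hsmall : ∀ᶠ ε : ℝ in 𝓝[>] 0, M * √ε ≤ 1 := by
    have hlim : Tendsto (fun ε => M * √ε) (𝓝[>] 0) (𝓝 0) := by
      simpa using ((Real.continuous_sqrt.tendsto 0).const_mul M).mono_left nhdsWithin_le_nhds
    exact hlim.eventually_le_const one_pos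
  refine IsBigO.of_bound ((C + B) * M) ?_
  filter_upwards [Ioc_mem_nhdsGT one_pos, hsmall] with ε hε hε1
  have hr : M * √ε ∈ Set.Icc (0 : ℝ) 1 := ⟨by positivity, hε1⟩
  rw [Real.norm_of_nonneg measureReal_nonneg, ← Real.sqrt_eq_rpow,
    Real.norm_of_nonneg (Real.sqrt_nonneg ε), mul_assoc]
  refine ENNReal.toReal_le_of_le_ofReal (by positivity) ?_
  rw [add_mul, ENNReal.ofReal_add (by positivity) (by positivity)]
  exact (measure_mono (hcover ε hε hε1)).trans ((measure_union_le _ _).trans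
    (add_le_add (hslabs _ hr) (addHaar_closedBall_zero_le volume hr)))

end FundamentalConeBoundary

section IdealCount

open MeasureTheory Module nonZeroDivisors Ideal Pointwise
open NumberField.InfinitePlace NumberField.mixedEmbedding NumberField.mixedEmbedding.fundamentalCone
  NumberField.Units

variable {K : Type*} [Field K] [NumberField K]

theorem card_absNorm_le_mk0_eq {C : ClassGroup (𝓞 K)} {J : (Ideal (𝓞 K))⁰} (s : ℝ)
    (hJ : ClassGroup.mk0 J = C⁻¹) :
    Nat.card {I : (Ideal (𝓞 K))⁰ // absNorm (I : Ideal (𝓞 K)) ≤ s ∧ ClassGroup.mk0 I = C} =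
      Nat.card {I : (Ideal (𝓞 K))⁰ // (J : Ideal (𝓞 K)) ∣ I ∧
        Submodule.IsPrincipal (I : Ideal (𝓞 K)) ∧
        absNorm (I : Ideal (𝓞 K)) ≤ s * absNorm (J : Ideal (𝓞 K))} := by
  have hpos : (0 : ℝ) < absNorm (J : Ideal (𝓞 K)) :=
    Nat.cast_pos.2 (absNorm_pos_of_nonZeroDivisors J)
  have hmul : ∀ I : (Ideal (𝓞 K))⁰, (absNorm (I : Ideal (𝓞 K)) ≤ s ∧ ClassGroup.mk0 I = C) ↔
      Submodule.IsPrincipal ((J * I : (Ideal (𝓞 K))⁰) : Ideal (𝓞 K)) ∧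
        absNorm ((J * I : (Ideal (𝓞 K))⁰) : Ideal (𝓞 K)) ≤ s * absNorm (J : Ideal (𝓞 K)) := by
    intro I
    rw [← ClassGroup.mk0_eq_one_iff (J * I).2, Subtype.coe_eta, map_mul, hJ, inv_mul_eq_one,
      Submonoid.coe_mul, map_mul, Nat.cast_mul, mul_comm s, mul_le_mul_iff_of_pos_left hpos,
      eq_comm (a := C), and_comm]
  refine Nat.card_eq_of_bijective
    (fun I => ⟨J * I.1, dvd_mul_right _ _, (hmul I.1).1 I.2⟩) ⟨fun I I' hII' => ?_, fun I => ?_⟩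
  · exact Subtype.ext (mul_left_cancel (congrArg Subtype.val hII'))
  · obtain ⟨I, hdvd, hI⟩ := I
    obtain ⟨I', rfl⟩ := nonZeroDivisors_dvd_iff_dvd_coe.2 hdvd
    exact ⟨⟨I', (hmul I').2 hI⟩, rfl⟩

theorem mem_smul_normLeOne_iff {t : ℝ} (ht : 0 < t) {x : mixedSpace K} :
    x ∈ t • normLeOne K ↔
      x ∈ fundamentalCone K ∧ mixedEmbedding.norm x ≤ t ^ finrank ℚ K := by
  rw [Set.mem_smul_set_iff_inv_smul_mem₀ ht.ne', mem_normLeOne,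
    smul_mem_iff_mem (inv_ne_zero ht.ne'), mixedEmbedding.norm_smul, abs_of_pos (inv_pos.2 ht),
    inv_pow, inv_mul_le_iff₀ (by positivity), mul_one]

theorem card_idealSet_norm_le (J : (Ideal (𝓞 K))⁰) {t : ℝ} (ht : 0 < t) :
    Nat.card {a : idealSet K J // mixedEmbedding.norm (a : mixedSpace K) ≤ t ^ finrank ℚ K} =
      (t • normLeOne K ∩ Submodule.span ℤ (Set.range
        (fractionalIdealLatticeBasis K (FractionalIdeal.mk0 K J)))).ncard := by
  rw [← Nat.card_coe_set_eq]
  refine Nat.card_congr ((Equiv.subtypeSubtypeEquivSubtypeInter (· ∈ idealSet K J)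
    (mixedEmbedding.norm · ≤ t ^ finrank ℚ K)).trans (Equiv.subtypeEquivProp (funext fun x => ?_)))
  refine propext (Iff.trans ?_ (and_congr (mem_smul_normLeOne_iff ht) Iff.rfl).symm)
  rw [SetLike.mem_coe, span_idealLatticeBasis, idealSet, Set.mem_inter_iff]
  exact and_right_comm

open scoped Classical in
theorem exists_isBigO_card_absNorm_le_mk0_eq_sub (C : ClassGroup (𝓞 K)) :
    ∃ c : ℝ, (fun s : ℝ => (Nat.card {I : (Ideal (𝓞 K))⁰ //
        absNorm (I : Ideal (𝓞 K)) ≤ s ∧ ClassGroup.mk0 I = C} : ℝ) - c * s) =O[atTop]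
      fun s => s ^ (1 - 1 / (2 * (finrank ℚ K : ℝ))) := by
  obtain ⟨J, hJ⟩ := ClassGroup.mk0_surjective C⁻¹
  let d : ℝ := finrank ℚ K
  have hd : 0 < d := Nat.cast_pos.2 finrank_pos
  let N : ℝ := absNorm (J : Ideal (𝓞 K))
  have hN : 0 < N := Nat.cast_pos.2 (absNorm_pos_of_nonZeroDivisors J)
  have hτ : (torsionOrder K : ℝ) ≠ 0 := Nat.cast_ne_zero.2 (torsionOrder_ne_zero K)
  let t : ℝ → ℝ := fun s => (s * N) ^ (1 / d)
  have ht : Tendsto t atTop atTop :=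
    (tendsto_rpow_atTop (by positivity)).comp (tendsto_id.atTop_mul_const hN)
  have htd : ∀ {s}, 0 < s → t s ^ finrank ℚ K = s * N := fun {s} hs => by
    rw [← Real.rpow_natCast, ← Real.rpow_mul (by positivity), one_div_mul_cancel hd.ne',
      Real.rpow_one]
  have hcount := (isBigO_ncard_smul_inter_span_sub volume
    (fractionalIdealLatticeBasis K (FractionalIdeal.mk0 K J)) (isBounded_normLeOne K)
    (isBigO_volume_boundaryLayer_normLeOne K)).comp_tendsto ht
  rw [mixedEmbedding.finrank] at hcount
  set c := volume.real (normLeOne K) / volume.real (ZSpan.fundamentalDomain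
    (fractionalIdealLatticeBasis K (FractionalIdeal.mk0 K J)))
  refine ⟨c * N / torsionOrder K, (hcount.const_mul_left (torsionOrder K : ℝ)⁻¹).congr' ?_ ?_
    |>.trans (isBigO_const_mul_self (N ^ (1 - 1 / (2 * d))) _ _)⟩
  · filter_upwards [eventually_gt_atTop 0] with s hs
    have hts : 0 < t s := Real.rpow_pos_of_pos (mul_pos hs hN) _
    rw [Function.comp_apply, ← card_idealSet_norm_le J hts, htd hs, ← card_isPrincipal_dvd_norm_le,
      ← card_absNorm_le_mk0_eq s hJ]
    push_cast
    field_simp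
  · filter_upwards [eventually_gt_atTop 0] with s hs
    have hexp : 1 / d * (d - 1 / 2) = 1 - 1 / (2 * d) := by field_simp
    rw [Function.comp_apply, ← Real.rpow_mul (by positivity), hexp, mul_comm s,
      Real.mul_rpow hN.le hs.le]

theorem finite_setOf_absNorm_le (K : Type*) [Field K] [NumberField K] (x : ℝ) :
    {I : Ideal (𝓞 K) | I ≠ ⊥ ∧ (absNorm I : ℝ) ≤ x}.Finite :=
  (Ideal.finite_setOfPred_absNorm_le (S := 𝓞 K) ⌊x⌋₊).subset fun _ hI => Nat.le_floor hI.2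

/-- The nonzero ideals of norm at most `x`. -/
def idealsNormLE (K : Type*) [Field K] [NumberField K] (x : ℝ) : Finset (Ideal (𝓞 K)) :=
  (finite_setOf_absNorm_le K x).toFinset

theorem mem_idealsNormLE {x : ℝ} {I : Ideal (𝓞 K)} :
    I ∈ idealsNormLE K x ↔ I ≠ ⊥ ∧ (absNorm I : ℝ) ≤ x := by
  simp [idealsNormLE]

/-- The members of `idealsNormLE K x`, regarded as non-zero-divisors of the monoid of ideals. -/
def idealsNormLEEquiv (K : Type*) [Field K] [NumberField K] (x : ℝ) :
    idealsNormLE K x ≃ {I : (Ideal (𝓞 K))⁰ // absNorm (I : Ideal (𝓞 K)) ≤ x} where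
  toFun I := ⟨⟨I, mem_nonZeroDivisors_of_ne_zero (mem_idealsNormLE.1 I.2).1⟩,
    (mem_idealsNormLE.1 I.2).2⟩
  invFun I := ⟨I.1.1, mem_idealsNormLE.2 ⟨nonZeroDivisors.coe_ne_zero I.1, I.2⟩⟩

theorem card_idealsNormLE (x : ℝ) :
    (idealsNormLE K x).card =
      Nat.card {I : (Ideal (𝓞 K))⁰ // absNorm (I : Ideal (𝓞 K)) ≤ x} := by
  rw [← Nat.card_eq_finsetCard, Nat.card_congr (idealsNormLEEquiv K x)]

theorem card_idealsNormLE_eq_sum_classGroup (x : ℝ) :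
    (idealsNormLE K x).card = ∑ C : ClassGroup (𝓞 K), Nat.card {I : (Ideal (𝓞 K))⁰ //
      absNorm (I : Ideal (𝓞 K)) ≤ x ∧ ClassGroup.mk0 I = C} := by
  have _ : Finite {I : (Ideal (𝓞 K))⁰ // absNorm (I : Ideal (𝓞 K)) ≤ x} :=
    Finite.of_equiv _ (idealsNormLEEquiv K x)
  rw [card_idealsNormLE, ← Nat.card_congr (Equiv.sigmaFiberEquiv fun
    I : {I : (Ideal (𝓞 K))⁰ // absNorm (I : Ideal (𝓞 K)) ≤ x} => ClassGroup.mk0 I.1),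
    Nat.card_sigma]
  exact Finset.sum_congr rfl fun C _ => Nat.card_congr
    (Equiv.subtypeSubtypeEquivSubtypeInter (fun I : (Ideal (𝓞 K))⁰ => absNorm I.1 ≤ x)
      fun I => ClassGroup.mk0 I = C)

theorem tendsto_div_of_isBigO_sub_mul {f : ℝ → ℝ} {c θ : ℝ} (hθ : θ < 1)
    (hf : (fun x => f x - c * x) =O[atTop] fun x => x ^ θ) :
    Tendsto (fun x => f x / x) atTop (𝓝 c) := by
  have hpow : (fun x : ℝ => x ^ θ) =o[atTop] fun x : ℝ => x := by
    refine isLittleO_of_tendsto' ?_ ((tendsto_rpow_neg_atTop (sub_pos.2 hθ)).congr' ?_)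
    · filter_upwards [eventually_ne_atTop 0] with x hx hx0 using absurd hx0 hx
    · filter_upwards [eventually_ne_atTop 0] with x hx
      rw [neg_sub, Real.rpow_sub_one hx]
  have hzero := (hf.trans_isLittleO hpow).tendsto_div_nhds_zero.add_const c
  rw [zero_add] at hzero
  refine hzero.congr' ?_
  filter_upwards [eventually_ne_atTop 0] with x hx
  field_simp
  ring

theorem isBigO_card_idealsNormLE_sub (K : Type*) [Field K] [NumberField K] :
    (fun x : ℝ => ((idealsNormLE K x).card : ℝ) - kappaK K * x) =O[atTop]
      fun x => x ^ (1 - 1 / (2 * (finrank ℚ K : ℝ))) := by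
  choose c hc using exists_isBigO_card_absNorm_le_mk0_eq_sub (K := K)
  have hsum : (fun x : ℝ => ((idealsNormLE K x).card : ℝ) - (∑ C, c C) * x) =O[atTop]
      fun x => x ^ (1 - 1 / (2 * (finrank ℚ K : ℝ))) := by
    refine (IsBigO.sum (s := Finset.univ) fun C _ => hc C).congr_left fun x => ?_
    rw [Finset.sum_apply, card_idealsNormLE_eq_sum_classGroup, Nat.cast_sum, Finset.sum_mul,
      Finset.sum_sub_distrib]
  have hexp : 1 - 1 / (2 * (finrank ℚ K : ℝ)) < 1 :=
    sub_lt_self _ (one_div_pos.2 (mul_pos two_pos (Nat.cast_pos.2 finrank_pos)))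
  have hκ : Tendsto (fun x : ℝ => ((idealsNormLE K x).card : ℝ) / x) atTop (𝓝 (kappaK K)) := by
    simp_rw [card_idealsNormLE]
    convert NumberField.Ideal.tendsto_norm_le_div_atTop₀ K using 2
    rw [kappaK]
    ring
  rwa [tendsto_nhds_unique (tendsto_div_of_isBigO_sub_mul hexp hsum) hκ] at hsum

theorem one_le_absNorm {I : Ideal (𝓞 K)} (hI : I ≠ ⊥) : (1 : ℝ) ≤ absNorm I :=
  Nat.one_le_cast.2 (Nat.one_le_iff_ne_zero.2 (absNorm_eq_zero_iff.not.2 hI))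

theorem idealsNormLE_eq_empty {x : ℝ} (hx : x < 1) : idealsNormLE K x = ∅ := by
  refine Finset.eq_empty_of_forall_notMem fun I hI => ?_
  obtain ⟨hI, hIx⟩ := mem_idealsNormLE.1 hI
  exact (hx.trans_le ((one_le_absNorm hI).trans hIx)).false

theorem idealsNormLE_mono {x y : ℝ} (hxy : x ≤ y) : idealsNormLE K x ⊆ idealsNormLE K y :=
  fun _ hI => mem_idealsNormLE.2 ((mem_idealsNormLE.1 hI).imp_right hxy.trans')

theorem kappaK_pos (K : Type*) [Field K] [NumberField K] : 0 < kappaK K := by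
  unfold kappaK
  have := Units.regulator_pos K
  have := Units.torsionOrder_pos K
  have : 0 < classNumber K := Fintype.card_pos
  have := discr_ne_zero K
  positivity

theorem exists_abs_card_idealsNormLE_sub_le (K : Type*) [Field K] [NumberField K] {θ : ℝ}
    (hθ : 1 - 1 / (2 * (finrank ℚ K : ℝ)) ≤ θ) (hθ1 : θ ≤ 1) :
    ∃ C : ℝ, 0 ≤ C ∧ ∀ x : ℝ, 0 < x →
      |((idealsNormLE K x).card : ℝ) - kappaK K * x| ≤ C * x ^ θ := by
  have hκ := kappaK_pos K
  have hθ0 : 0 ≤ θ := by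
    have : (1 : ℝ) ≤ finrank ℚ K := Nat.one_le_cast.2 finrank_pos
    refine le_trans ?_ hθ
    rw [sub_nonneg, div_le_one (by positivity)]
    linarith
  have hmono : (fun x : ℝ => x ^ (1 - 1 / (2 * (finrank ℚ K : ℝ)))) =O[atTop] fun x => x ^ θ := by
    refine IsBigO.of_norm_eventuallyLE ?_
    filter_upwards [eventually_ge_atTop 1] with x hx
    rw [Real.norm_of_nonneg (by positivity)]
    exact Real.rpow_le_rpow_of_exponent_le hx hθ
  obtain ⟨C, hC, hbound⟩ := ((isBigO_card_idealsNormLE_sub K).trans hmono).exists_nonneg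
  obtain ⟨x₀, hx₀⟩ := eventually_atTop.1 hbound.bound
  refine ⟨C + (idealsNormLE K x₀).card + kappaK K * |x₀| + kappaK K, by positivity,
    fun x hx => ?_⟩
  have hxθ : 0 < x ^ θ := Real.rpow_pos_of_pos hx θ
  rcases le_or_gt x₀ x with hlarge | hxx₀
  · have hle := hx₀ x hlarge
    rw [Real.norm_eq_abs, Real.norm_of_nonneg hxθ.le] at hle
    refine hle.trans ?_
    gcongr
    simp only [add_assoc]
    exact le_add_of_nonneg_right (by positivity)
  rcases lt_or_ge x 1 with hx1 | hx1
  · have hself : x ≤ x ^ θ := by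
      simpa using Real.rpow_le_rpow_of_exponent_ge hx hx1.le hθ1
    rw [idealsNormLE_eq_empty hx1, Finset.card_empty, Nat.cast_zero, zero_sub, abs_neg,
      abs_of_pos (by positivity)]
    gcongr
    exact le_add_of_nonneg_left (by positivity)
  · have hcard : ((idealsNormLE K x).card : ℝ) ≤ (idealsNormLE K x₀).card :=
      Nat.cast_le.2 (Finset.card_le_card (idealsNormLE_mono hxx₀.le))
    have hκx : kappaK K * x ≤ kappaK K * |x₀| := by
      gcongr
      exact hxx₀.le.trans (le_abs_self x₀)
    refine le_trans ?_ (le_mul_of_one_le_right (by positivity) (Real.one_le_rpow hx1 hθ0))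
    have : 0 ≤ kappaK K * x := by positivity
    exact abs_sub_le_iff.2 ⟨by linarith, by linarith⟩

end IdealCount

section Dyadic

theorem halving_induction {P : (x : ℝ) → 0 < x → Prop}
    (small : ∀ x (hx : 0 < x), x < 1 → P x hx)
    (step : ∀ x (hx : 0 < x), (∀ y (hy : 0 < y), y ≤ x / 2 → P y hy) → P x hx)
    (x : ℝ) (hx : 0 < x) : P x hx := by
  obtain ⟨k, hk⟩ := pow_unbounded_of_one_lt x one_lt_two
  induction k generalizing x with
  | zero => exact small x hx (by simpa using hk)
  | succ k ih =>
    refine step x hx fun y hy hyx => ih y hy ?_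
    rw [pow_succ] at hk
    linarith

variable {ι : Type*} {n : ι → ℝ} {S : ℝ → Finset ι} {a : ι → ℝ} {C : ℝ}

theorem nonneg_of_sum_le_mul (ha : ∀ i, 0 ≤ a i) (hC : ∀ t, 0 < t → ∑ i ∈ S t, a i ≤ C * t) :
    0 ≤ C := by
  simpa using (Finset.sum_nonneg fun i _ => ha i).trans (hC 1 one_pos)

theorem sum_sdiff_half_mul_le [DecidableEq ι] (hS : ∀ x i, i ∈ S x ↔ n i ≤ x)
    (ha : ∀ i, 0 ≤ a i) (hC : ∀ t, 0 < t → ∑ i ∈ S t, a i ≤ C * t) {x B : ℝ} (hx : 0 < x)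
    (hB : 0 ≤ B) {f : ι → ℝ} (hf : ∀ i, x / 2 < n i → f i ≤ B) :
    ∑ i ∈ S x \ S (x / 2), a i * f i ≤ B * (C * x) := by
  calc ∑ i ∈ S x \ S (x / 2), a i * f i
      ≤ ∑ i ∈ S x \ S (x / 2), a i * B := by
        refine Finset.sum_le_sum fun i hi => mul_le_mul_of_nonneg_left (hf i ?_) (ha i)
        exact not_le.1 fun h => (Finset.mem_sdiff.1 hi).2 ((hS _ i).2 h)
    _ ≤ ∑ i ∈ S x, a i * B :=
        Finset.sum_le_sum_of_subset_of_nonneg Finset.sdiff_subset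
          fun i _ _ => mul_nonneg (ha i) hB
    _ = B * ∑ i ∈ S x, a i := by rw [← Finset.sum_mul, mul_comm]
    _ ≤ B * (C * x) := mul_le_mul_of_nonneg_left (hC x hx) hB

theorem half_subset (hS : ∀ x i, i ∈ S x ↔ n i ≤ x) {x : ℝ} (hx : 0 < x) : S (x / 2) ⊆ S x :=
  fun i hi => (hS x i).2 (((hS _ i).1 hi).trans (half_le_self hx.le))

theorem exists_sum_mul_div_rpow_le (hn : ∀ i, 1 ≤ n i) (hS : ∀ x i, i ∈ S x ↔ n i ≤ x)
    (ha : ∀ i, 0 ≤ a i) (hC : ∀ t, 0 < t → ∑ i ∈ S t, a i ≤ C * t) {θ : ℝ} (hθ0 : 0 ≤ θ)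
    (hθ1 : θ < 1) :
    ∃ C' : ℝ, 0 ≤ C' ∧ ∀ x, 0 < x → ∑ i ∈ S x, a i * (x / n i) ^ θ ≤ C' * x := by
  classical
  have hC0 := nonneg_of_sum_le_mul ha hC
  have hr2 : (2 : ℝ) ^ θ < 2 := by
    simpa using Real.rpow_lt_rpow_of_exponent_lt one_lt_two hθ1
  set r : ℝ := 2 ^ θ
  have hr0 : 0 < r := by positivity
  have h2r : 0 < 2 - r := sub_pos.2 hr2
  -- `C'` solves the fixed-point equation `r C + r C' / 2 = C'` of the halving step.
  refine ⟨2 * r * C / (2 - r), by positivity, fun x hx => ?_⟩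
  induction x, hx using halving_induction with
  | small x hx hx1 =>
    have hempty : S x = ∅ := Finset.eq_empty_of_forall_notMem fun i hi =>
      (hx1.trans_le ((hn i).trans ((hS x i).1 hi))).false
    rw [hempty, Finset.sum_empty]
    positivity
  | step x hx ih =>
    have hlarge : ∑ i ∈ S x \ S (x / 2), a i * (x / n i) ^ θ ≤ r * (C * x) := by
      refine sum_sdiff_half_mul_le hS ha hC hx hr0.le fun i hi => ?_
      have hni : 0 < n i := one_pos.trans_le (hn i)
      refine Real.rpow_le_rpow (by positivity) ?_ hθ0
      rw [div_le_iff₀ hni]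
      linarith
    have hscale : ∑ i ∈ S (x / 2), a i * (x / n i) ^ θ
        = r * ∑ i ∈ S (x / 2), a i * (x / 2 / n i) ^ θ := by
      rw [Finset.mul_sum]
      refine Finset.sum_congr rfl fun i _ => ?_
      have hni : 0 < n i := one_pos.trans_le (hn i)
      rw [show x / n i = 2 * (x / 2 / n i) by ring,
        Real.mul_rpow zero_le_two (by positivity)]
      ring
    rw [← Finset.sum_sdiff (half_subset hS hx), hscale]
    calc _ ≤ r * (C * x) + r * (2 * r * C / (2 - r) * (x / 2)) := by
          gcongr
          exact ih _ (half_pos hx) le_rfl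
      _ = _ := by field_simp; ring

theorem sum_mul_rpow_neg_two_pow_le (hn : ∀ i, 1 ≤ n i) (hS : ∀ x i, i ∈ S x ↔ n i ≤ x)
    (ha : ∀ i, 0 ≤ a i) (hC : ∀ t, 0 < t → ∑ i ∈ S t, a i ≤ C * t) {s : ℝ} (hs : 0 ≤ s) (k : ℕ) :
    ∑ i ∈ S (2 ^ k), a i * n i ^ (-s) ≤ C + 2 * C * ∑ j ∈ Finset.range k, (2 ^ (1 - s)) ^ j := by
  classical
  induction k with
  | zero =>
    rw [pow_zero, Finset.range_zero, Finset.sum_empty, mul_zero, add_zero]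
    calc _ ≤ ∑ i ∈ S 1, a i := Finset.sum_le_sum fun i _ => mul_le_of_le_one_right (ha i)
            (Real.rpow_le_one_of_one_le_of_nonpos (hn i) (neg_nonpos.2 hs))
      _ ≤ C := by simpa using hC 1 one_pos
  | succ k ih =>
    have hhalf : (2 : ℝ) ^ (k + 1) / 2 = 2 ^ k := by ring
    have hblock : ∑ i ∈ S (2 ^ (k + 1)) \ S (2 ^ k), a i * n i ^ (-s)
        ≤ ((2 : ℝ) ^ k) ^ (-s) * (C * 2 ^ (k + 1)) := by
      rw [← hhalf]
      refine sum_sdiff_half_mul_le hS ha hC (by positivity) (by positivity) fun i hi => ?_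
      exact Real.rpow_le_rpow_of_nonpos (by positivity) hi.le (neg_nonpos.2 hs)
    have hpow : ((2 : ℝ) ^ k) ^ (-s) * (C * 2 ^ (k + 1)) = 2 * C * (2 ^ (1 - s)) ^ k := by
      rw [Real.rpow_pow_comm zero_le_two, sub_eq_add_neg, Real.rpow_add (by positivity),
        Real.rpow_one]
      ring
    have hsub := half_subset hS (x := 2 ^ (k + 1)) (by positivity)
    rw [hhalf] at hsub
    rw [← Finset.sum_sdiff hsub, Finset.sum_range_succ]
    linarith

theorem summable_mul_rpow_neg (hn : ∀ i, 1 ≤ n i) (hS : ∀ x i, i ∈ S x ↔ n i ≤ x)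
    (ha : ∀ i, 0 ≤ a i) (hC : ∀ t, 0 < t → ∑ i ∈ S t, a i ≤ C * t) {s : ℝ} (hs : 1 < s) :
    Summable fun i => a i * n i ^ (-s) := by
  have hC0 := nonneg_of_sum_le_mul ha hC
  have hn0 : ∀ i, 0 < n i := fun i => one_pos.trans_le (hn i)
  have hr1 : (2 : ℝ) ^ (1 - s) < 1 :=
    Real.rpow_lt_one_of_one_lt_of_neg one_lt_two (sub_neg.2 hs)
  have hnonneg : ∀ i, 0 ≤ a i * n i ^ (-s) := fun i =>
    mul_nonneg (ha i) (Real.rpow_nonneg (hn0 i).le _)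
  refine summable_of_sum_le (c := C + 2 * C * (1 - 2 ^ (1 - s))⁻¹) hnonneg fun T => ?_
  obtain ⟨k, hk⟩ := pow_unbounded_of_one_lt (∑ i ∈ T, n i) one_lt_two
  have hTS : T ⊆ S (2 ^ k) := fun i hi => (hS _ i).2
    ((Finset.single_le_sum (f := n) (fun j _ => (hn0 j).le) hi).trans hk.le)
  calc ∑ i ∈ T, a i * n i ^ (-s)
      ≤ ∑ i ∈ S (2 ^ k), a i * n i ^ (-s) :=
        Finset.sum_le_sum_of_subset_of_nonneg hTS fun i _ _ => hnonneg i
    _ ≤ C + 2 * C * ∑ j ∈ Finset.range k, (2 ^ (1 - s)) ^ j :=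
        sum_mul_rpow_neg_two_pow_le hn hS ha hC (zero_le_one.trans hs.le) k
    _ ≤ C + 2 * C * (1 - 2 ^ (1 - s))⁻¹ := by
        gcongr
        rw [← tsum_geometric_of_lt_one (by positivity) hr1]
        exact (summable_geometric_of_lt_one (by positivity) hr1).sum_le_tsum _
          fun _ _ => by positivity

theorem le_two_mul_of_eq_add_div {F V : ℝ → ℝ} {n C : ℝ} (hn : 2 ≤ n) (hC : 0 ≤ C)
    (hV : ∀ x, x < 1 → V x = 0) (hF : ∀ y, 0 < y → F y ≤ C * y)
    (hrec : ∀ x, 0 < x → V x = F (x / n) + V (x / n)) {x : ℝ} (hx : 0 < x) :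
    V x ≤ 2 * C * (x / n) := by
  have : 0 < n := two_pos.trans_le hn
  induction x, hx using halving_induction with
  | small x hx hx1 => rw [hV x hx1]; positivity
  | step x hx ih =>
    calc V x = F (x / n) + V (x / n) := hrec x hx
      _ ≤ C * (x / n) + 2 * C * (x / n / n) := by
        gcongr
        · exact hF _ (by positivity)
        · exact ih _ (by positivity) (by gcongr)
      _ ≤ C * (x / n) + 2 * C * (x / n / 2) := by gcongr
      _ = 2 * C * (x / n) := by ring

/-- The density, among `h`-free ideals, of those divisible by a given prime ideal of norm `n`. -/
def hfreeMultipleDensity (h : ℕ) (n : ℝ) : ℝ := (n ^ (h - 1) - 1) / (n ^ h - 1)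

theorem hfreeMultipleDensity_nonneg (h : ℕ) {n : ℝ} (hn : 1 ≤ n) :
    0 ≤ hfreeMultipleDensity h n :=
  div_nonneg (sub_nonneg.2 (one_le_pow₀ hn)) (sub_nonneg.2 (one_le_pow₀ hn))

section HFreeMultipleDensity

variable {h : ℕ} {n : ℝ}

theorem hfreeMultipleDensity_le (hh : h ≠ 0) (hn : 1 < n) :
    hfreeMultipleDensity h n ≤ 1 / n := by
  have hnh : 1 < n ^ h := one_lt_pow₀ hn hh
  rw [hfreeMultipleDensity, div_le_div_iff₀ (by linarith) (by linarith), sub_mul,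
    pow_sub_one_mul hh]
  linarith

theorem hfreeMultipleDensity_mul_eq (hh : h ≠ 0) (hn : 1 < n) (x : ℝ) :
    hfreeMultipleDensity h n * x
      = x / n - x / n ^ h + hfreeMultipleDensity h n * (x / n ^ h) := by
  have hnh : n ^ h - 1 ≠ 0 := (sub_pos.2 (one_lt_pow₀ hn hh)).ne'
  obtain ⟨g, rfl⟩ := Nat.exists_eq_succ_of_ne_zero hh
  rw [hfreeMultipleDensity, Nat.succ_eq_add_one, Nat.add_sub_cancel]
  field_simp
  ring

theorem two_le_pow_rpow (hn : 2 ≤ n) (hh : 2 ≤ h) {θ : ℝ} (hθ : 1 / 2 ≤ θ) :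
    2 ≤ (n ^ h) ^ θ := by
  have hnh : (2 : ℝ) ^ (2 : ℝ) ≤ n ^ h := calc
    (2 : ℝ) ^ (2 : ℝ) = 2 ^ 2 := Real.rpow_two 2
    _ ≤ n ^ 2 := by gcongr
    _ ≤ n ^ h := pow_le_pow_right₀ (by linarith) hh
  calc (2 : ℝ) = 2 ^ (1 : ℝ) := (Real.rpow_one 2).symm
    _ ≤ 2 ^ (2 * θ) := Real.rpow_le_rpow_of_exponent_le one_le_two (by linarith)
    _ = (2 ^ (2 : ℝ)) ^ θ := Real.rpow_mul zero_le_two 2 θ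
    _ ≤ (n ^ h) ^ θ := Real.rpow_le_rpow (by positivity) hnh (by linarith)

theorem abs_sub_hfreeMultipleDensity_mul_le_of_div_pow {F G : ℝ → ℝ} {c C θ x : ℝ} (hn : 2 ≤ n)
    (hh : 2 ≤ h) (hC : 0 ≤ C) (hθ : 1 / 2 ≤ θ) (hx : 0 < x)
    (hF : ∀ y, 0 < y → |F y - c * y| ≤ C * y ^ θ)
    (hrec : G x = F (x / n) - F (x / n ^ h) + G (x / n ^ h))
    (hG : |G (x / n ^ h) - c * hfreeMultipleDensity h n * (x / n ^ h)|
      ≤ 4 * C * (x / n ^ h / n) ^ θ) :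
    |G x - c * hfreeMultipleDensity h n * x| ≤ 4 * C * (x / n) ^ θ := by
  have : 0 < n := by linarith
  set δ := hfreeMultipleDensity h n
  set y := x / n ^ h with hy
  have hyn : y ≤ x / n := by
    rw [hy]
    gcongr
    exact le_self_pow₀ (by linarith) (by lia)
  have hyn_rpow : (y / n) ^ θ ≤ (x / n) ^ θ / 2 := by
    rw [hy, div_right_comm, Real.div_rpow (by positivity) (by positivity)]
    gcongr
    exact two_le_pow_rpow hn hh hθ
  have hsplit : G x - c * δ * x
      = (F (x / n) - c * (x / n)) - (F y - c * y) + (G y - c * δ * y) := by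
    rw [hrec, mul_assoc, hfreeMultipleDensity_mul_eq (by lia) (by linarith) x]
    ring
  have hFy : |F y - c * y| ≤ C * (x / n) ^ θ := (hF y (by positivity)).trans (by gcongr)
  calc |G x - c * δ * x|
      ≤ |F (x / n) - c * (x / n)| + |F y - c * y| + |G y - c * δ * y| := by
        rw [hsplit]
        exact (abs_add_le _ _).trans (by gcongr; exact abs_sub _ _)
    _ ≤ C * (x / n) ^ θ + C * (x / n) ^ θ + 4 * C * ((x / n) ^ θ / 2) := by
        gcongr
        · exact hF _ (by positivity)
        · exact hG.trans (by gcongr)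
    _ = 4 * C * (x / n) ^ θ := by ring

-- The recursion is the one satisfied by the number `G x` of multiples of a prime of norm `n` among
-- the `h`-free ideals counted by `F`.
theorem abs_sub_hfreeMultipleDensity_mul_le {F G : ℝ → ℝ} {c C θ : ℝ} (hn : 2 ≤ n) (hh : 2 ≤ h)
    (hc : 0 ≤ c) (hcC : c ≤ C) (hθ : 1 / 2 ≤ θ) (hθ1 : θ ≤ 1) (hG : ∀ x, x < 1 → G x = 0)
    (hF : ∀ y, 0 < y → |F y - c * y| ≤ C * y ^ θ)
    (hrec : ∀ x, 0 < x → G x = F (x / n) - F (x / n ^ h) + G (x / n ^ h)) {x : ℝ} (hx : 0 < x) :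
    |G x - c * hfreeMultipleDensity h n * x| ≤ 4 * C * (x / n) ^ θ := by
  have hn0 : 0 < n := by linarith
  have hC : 0 ≤ C := hc.trans hcC
  have hδ0 : 0 ≤ hfreeMultipleDensity h n := hfreeMultipleDensity_nonneg h (by linarith)
  induction x, hx using halving_induction with
  | small x hx hx1 =>
    have hself : x / n ≤ (x / n) ^ θ := by
      simpa using Real.rpow_le_rpow_of_exponent_ge (x := x / n) (by positivity)
        ((div_le_one hn0).2 (by linarith)) hθ1
    rw [hG x hx1, zero_sub, abs_neg, abs_of_nonneg (by positivity)]
    calc c * hfreeMultipleDensity h n * x ≤ C * (1 / n) * x := by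
          gcongr
          exact hfreeMultipleDensity_le (by lia) (by linarith)
      _ = 1 * C * (x / n) := by ring
      _ ≤ 4 * C * (x / n) ^ θ := by gcongr; norm_num
  | step x hx ih =>
    refine abs_sub_hfreeMultipleDensity_mul_le_of_div_pow hn hh hC hθ hx hF (hrec x hx)
      (ih _ (by positivity) ?_)
    gcongr
    exact hn.trans (le_self_pow₀ (by linarith) (by lia))

end HFreeMultipleDensity

end Dyadic

local notation "N(" I ")" => (Nat.cast (Ideal.absNorm I) : ℝ)

section PrimeIdeals

open Ideal Module

/-- The nonzero prime ideals of `𝓞 K`. -/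
abbrev NonzeroPrime (K : Type*) [Field K] :=
  {p : Ideal (𝓞 K) // p.IsPrime ∧ p ≠ ⊥}

/-- The nonzero ideals of `𝓞 K`. -/
abbrev NonzeroIdeal (K : Type*) [Field K] := {I : Ideal (𝓞 K) // I ≠ ⊥}

variable {K : Type*} [Field K] [NumberField K]

theorem absNorm_pos {I : Ideal (𝓞 K)} (hI : I ≠ ⊥) : 0 < N(I) :=
  one_pos.trans_le (one_le_absNorm hI)

theorem absNorm_le_of_dvd {I J : Ideal (𝓞 K)} (hJ : J ≠ ⊥) (hIJ : I ∣ J) : N(I) ≤ N(J) :=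
  Nat.cast_le.2 <| Nat.le_of_dvd (Nat.cast_pos.1 (absNorm_pos hJ)) (map_dvd absNorm hIJ)

theorem two_le_absNorm (p : NonzeroPrime K) : 2 ≤ N(p.1) := by
  have hpos : 0 < absNorm p.1 := Nat.cast_pos.1 (absNorm_pos p.2.2)
  have hne : absNorm p.1 ≠ 1 := absNorm_eq_one_iff.not.2 p.2.1.ne_top
  exact_mod_cast (by omega : 2 ≤ absNorm p.1)

theorem prime_val (p : NonzeroPrime K) : Prime p.1 := prime_of_isPrime p.2.2 p.2.1

theorem not_dvd_of_ne {p q : NonzeroPrime K} (hpq : p ≠ q) : ¬ p.1 ∣ q.1 := fun hdvd =>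
  hpq (Subtype.ext (associated_iff_eq.1 ((prime_val p).associated_of_dvd (prime_val q) hdvd)))

theorem isRelPrime_of_ne {p q : NonzeroPrime K} (hpq : p ≠ q) : IsRelPrime p.1 q.1 :=
  (prime_val p).irreducible.isRelPrime_iff_not_dvd.2 (not_dvd_of_ne hpq)

open scoped Classical in
/-- The nonzero prime ideals of norm at most `x`. -/
def primesNormLE (K : Type*) [Field K] [NumberField K] (x : ℝ) : Finset (NonzeroPrime K) :=
  (idealsNormLE K x).subtype fun p => p.IsPrime ∧ p ≠ ⊥

theorem mem_primesNormLE {x : ℝ} {p : NonzeroPrime K} : p ∈ primesNormLE K x ↔ N(p.1) ≤ x := by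
  classical
  rw [primesNormLE, Finset.mem_subtype, mem_idealsNormLE, and_iff_right p.2.2]

theorem mem_primesNormLE_of_dvd {x : ℝ} {p : NonzeroPrime K} {I : Ideal (𝓞 K)}
    (hI : I ∈ idealsNormLE K x) (hpI : p.1 ∣ I) : p ∈ primesNormLE K x := by
  rw [mem_idealsNormLE] at hI
  exact mem_primesNormLE.2 ((absNorm_le_of_dvd hI.1 hpI).trans hI.2)

open scoped Classical in
/-- `idealsNormLE` as a finset of the subtype over which `zetaK` is summed. -/
def nonzeroIdealsNormLE (K : Type*) [Field K] [NumberField K] (x : ℝ) :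
    Finset (NonzeroIdeal K) :=
  (idealsNormLE K x).subtype fun I => I ≠ ⊥

theorem mem_nonzeroIdealsNormLE {x : ℝ} {I : NonzeroIdeal K} :
    I ∈ nonzeroIdealsNormLE K x ↔ N(I.1) ≤ x := by
  classical
  rw [nonzeroIdealsNormLE, Finset.mem_subtype, mem_idealsNormLE, and_iff_right I.2]

theorem sum_nonzeroIdealsNormLE (x : ℝ) (f : Ideal (𝓞 K) → ℝ) :
    ∑ I ∈ nonzeroIdealsNormLE K x, f I.1 = ∑ I ∈ idealsNormLE K x, f I := by
  classical
  exact Finset.sum_subtype_of_mem f fun I hI => (mem_idealsNormLE.1 hI).1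

open scoped Classical in
theorem sum_idealsNormLE_ite_dvd (x : ℝ) {J : Ideal (𝓞 K)} (hJ : J ≠ ⊥) (f : Ideal (𝓞 K) → ℝ) :
    ∑ I ∈ idealsNormLE K x, (if J ∣ I then f I else 0)
      = ∑ I ∈ idealsNormLE K (x / N(J)), f (J * I) := by
  rw [← Finset.sum_filter]
  symm
  refine Finset.sum_bij (fun I _ => J * I) ?_ (fun _ _ _ _ h => mul_left_cancel₀ hJ h) ?_
    fun _ _ => rfl
  · intro I hI
    rw [mem_idealsNormLE, le_div_iff₀ (absNorm_pos hJ), mul_comm] at hI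
    rw [Finset.mem_filter, mem_idealsNormLE, map_mul, Nat.cast_mul]
    exact ⟨⟨mul_ne_zero hJ hI.1, hI.2⟩, dvd_mul_right J I⟩
  · intro I hI
    rw [Finset.mem_filter, mem_idealsNormLE] at hI
    obtain ⟨⟨hJI, hx⟩, I, rfl⟩ := hI
    rw [map_mul, Nat.cast_mul, mul_comm, ← le_div_iff₀ (absNorm_pos hJ)] at hx
    exact ⟨I, mem_idealsNormLE.2 ⟨right_ne_zero_of_mul hJI, hx⟩, rfl⟩

theorem finiteMultiplicity_nonzeroPrime (p : NonzeroPrime K) {I : Ideal (𝓞 K)} (hI : I ≠ ⊥) :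
    FiniteMultiplicity p.1 I :=
  FiniteMultiplicity.of_prime_left (prime_val p) hI

theorem multiplicity_nonzeroPrime_mul (p : NonzeroPrime K) {I J : Ideal (𝓞 K)} (hI : I ≠ ⊥)
    (hJ : J ≠ ⊥) : multiplicity p.1 (I * J) = multiplicity p.1 I + multiplicity p.1 J :=
  multiplicity_mul (prime_val p) (finiteMultiplicity_nonzeroPrime p (mul_ne_zero hI hJ))

theorem prod_primesNormLE_pow_multiplicity {x : ℝ} {I : Ideal (𝓞 K)}
    (hI : I ∈ idealsNormLE K x) : ∏ p ∈ primesNormLE K x, p.1 ^ multiplicity p.1 I = I := by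
  classical
  have hI0 := (mem_idealsNormLE.1 hI).1
  have hsub : (UniqueFactorizationMonoid.normalizedFactors I).toFinset
      ⊆ (primesNormLE K x).image Subtype.val := by
    intro p hp
    rw [Multiset.mem_toFinset] at hp
    have hprime := UniqueFactorizationMonoid.prime_of_normalized_factor p hp
    exact Finset.mem_image.2 ⟨⟨p, isPrime_of_prime hprime, hprime.ne_zero⟩,
      mem_primesNormLE_of_dvd hI (UniqueFactorizationMonoid.dvd_of_mem_normalizedFactors hp), rfl⟩
  conv_rhs => rw [← Ideal.prod_normalizedFactors_eq_self hI0,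
    Finset.prod_multiset_count_of_subset _ _ hsub, Finset.prod_image Subtype.val_injective.injOn]
  refine Finset.prod_congr rfl fun p _ => ?_
  rw [UniqueFactorizationMonoid.multiplicity_eq_count_normalizedFactors
    (prime_val p).irreducible hI0, normalize_eq]

theorem log_absNorm_eq_sum {x : ℝ} {I : Ideal (𝓞 K)} (hI : I ∈ idealsNormLE K x) :
    Real.log N(I) = ∑ p ∈ primesNormLE K x, multiplicity p.1 I * Real.log N(p.1) := by
  conv_lhs => rw [← prod_primesNormLE_pow_multiplicity hI]
  simp_rw [map_prod, map_pow, Nat.cast_prod, Nat.cast_pow]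
  rw [Real.log_prod fun p _ => pow_ne_zero _ (absNorm_pos p.2.2).ne']
  simp_rw [Real.log_pow]

theorem sum_multiplicity_eq (p : NonzeroPrime K) (x : ℝ) :
    ∑ I ∈ idealsNormLE K x, (multiplicity p.1 I : ℝ)
      = (idealsNormLE K (x / N(p.1))).card
        + ∑ I ∈ idealsNormLE K (x / N(p.1)), (multiplicity p.1 I : ℝ) := by
  classical
  calc ∑ I ∈ idealsNormLE K x, (multiplicity p.1 I : ℝ)
      = ∑ I ∈ idealsNormLE K x, if p.1 ∣ I then (multiplicity p.1 I : ℝ) else 0 := by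
        refine Finset.sum_congr rfl fun I _ => ?_
        split_ifs with hpI
        · rfl
        · rw [multiplicity_eq_zero.2 hpI, Nat.cast_zero]
    _ = ∑ I ∈ idealsNormLE K (x / N(p.1)), (1 + (multiplicity p.1 I : ℝ)) := by
        rw [sum_idealsNormLE_ite_dvd x p.2.2]
        refine Finset.sum_congr rfl fun I hI => ?_
        rw [multiplicity_nonzeroPrime_mul p p.2.2 (mem_idealsNormLE.1 hI).1, multiplicity_self,
          Nat.cast_add, Nat.cast_one]
    _ = _ := by rw [Finset.sum_add_distrib, Finset.sum_const, nsmul_one]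

theorem natCast_primorial_mem {x : ℝ} {p : NonzeroPrime K} (hp : N(p.1) ≤ x) :
    (primorial ⌊x⌋₊ : 𝓞 K) ∈ p.1 := by
  have := p.2.1
  have : NeZero p.1 := ⟨p.2.2⟩
  have hle : absNorm (under ℤ p.1) ≤ ⌊x⌋₊ :=
    (Nat.le_of_dvd (Nat.cast_pos.1 (absNorm_pos p.2.2))
      (Int.absNorm_under_dvd_absNorm p.1)).trans (Nat.le_floor hp)
  have hdvd : absNorm (under ℤ p.1) ∣ primorial ⌊x⌋₊ :=
    (Nat.absNorm_under_prime p.1).dvd_primorial_iff.2 hle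
  exact p.1.mem_of_dvd (Nat.cast_dvd_cast hdvd) (Int.absNorm_under_mem p.1)

theorem prod_primesNormLE_dvd_span_primorial (x : ℝ) :
    ∏ p ∈ primesNormLE K x, p.1 ∣ span {(primorial ⌊x⌋₊ : 𝓞 K)} := by
  refine Finset.prod_dvd_of_isRelPrime (fun p _ q _ hpq => isRelPrime_of_ne hpq) fun p hp => ?_
  exact dvd_span_singleton.2 (natCast_primorial_mem (mem_primesNormLE.1 hp))

theorem sum_log_absNorm_primesNormLE_le {x : ℝ} (hx : 0 ≤ x) :
    ∑ p ∈ primesNormLE K x, Real.log N(p.1) ≤ finrank ℚ K * Real.log 4 * x := by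
  have hprod : ∏ p ∈ primesNormLE K x, absNorm p.1 ≤ primorial ⌊x⌋₊ ^ finrank ℚ K := by
    have hdvd := map_dvd absNorm (prod_primesNormLE_dvd_span_primorial (K := K) x)
    rw [map_prod, absNorm_span_natCast, RingOfIntegers.rank] at hdvd
    exact Nat.le_of_dvd (pow_pos (primorial_pos _) _) hdvd
  calc ∑ p ∈ primesNormLE K x, Real.log N(p.1)
      = Real.log ((∏ p ∈ primesNormLE K x, absNorm p.1 : ℕ) : ℝ) := by
        rw [Nat.cast_prod, Real.log_prod fun p _ => (absNorm_pos p.2.2).ne']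
    _ ≤ Real.log ((primorial ⌊x⌋₊ ^ finrank ℚ K : ℕ) : ℝ) := by
        refine Real.log_le_log (Nat.cast_pos.2 ?_) (Nat.cast_le.2 hprod)
        exact Finset.prod_pos fun p _ => Nat.cast_pos.1 (absNorm_pos p.2.2)
    _ = finrank ℚ K * Chebyshev.theta x := by
        rw [Nat.cast_pow, Real.log_pow, Chebyshev.theta_eq_log_primorial]
    _ ≤ finrank ℚ K * Real.log 4 * x := by
        rw [mul_assoc]
        gcongr
        exact Chebyshev.theta_le_log4_mul_x hx

end PrimeIdeals

section FirstMertensTheorem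

open Ideal Module

variable (K : Type*) [Field K] [NumberField K]

/-- An exponent below `1` for the error terms in the counts of ideals and of `h`-free ideals: it
lies above the exponent `1 - 1 / (2 [K : ℚ])` of the count of ideals, and is at least `3 / 4`. -/
def errorExponent : ℝ := 1 - 1 / (4 * finrank ℚ K)

theorem errorExponent_lt_one : errorExponent K < 1 := by
  have : 0 < (finrank ℚ K : ℝ) := Nat.cast_pos.2 finrank_pos
  rw [errorExponent, sub_lt_self_iff]
  positivity

theorem three_quarters_le_errorExponent : 3 / 4 ≤ errorExponent K := by
  have hd : (1 : ℝ) ≤ finrank ℚ K := Nat.one_le_cast.2 finrank_pos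
  have hle : 1 / (4 * (finrank ℚ K : ℝ)) ≤ 1 / 4 :=
    one_div_le_one_div_of_le (by norm_num) (by linarith)
  rw [errorExponent]
  linarith

theorem exists_abs_card_idealsNormLE_sub_le_errorExponent :
    ∃ C : ℝ, 0 ≤ C ∧ ∀ x : ℝ, 0 < x →
      |((idealsNormLE K x).card : ℝ) - kappaK K * x| ≤ C * x ^ errorExponent K := by
  have hd : 0 < (finrank ℚ K : ℝ) := Nat.cast_pos.2 finrank_pos
  refine exists_abs_card_idealsNormLE_sub_le K ?_ (errorExponent_lt_one K).le
  exact sub_le_sub_left (one_div_le_one_div_of_le (by positivity) (by linarith)) 1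

theorem exists_card_idealsNormLE_le :
    ∃ C : ℝ, 0 ≤ C ∧ ∀ x : ℝ, 0 < x → ((idealsNormLE K x).card : ℝ) ≤ C * x := by
  obtain ⟨C, hC, hcard⟩ := exists_abs_card_idealsNormLE_sub_le K
    (sub_le_self 1 (by positivity)) le_rfl
  refine ⟨kappaK K + C, add_nonneg (kappaK_pos K).le hC, fun x hx => ?_⟩
  have := (abs_le.1 (hcard x hx)).2
  rw [Real.rpow_one] at this
  linarith

theorem exists_sum_log_div_absNorm_le :
    ∃ C : ℝ, ∀ x : ℝ, 0 < x → ∑ I ∈ idealsNormLE K x, Real.log (x / N(I)) ≤ C * x := by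
  obtain ⟨C, -, hcard⟩ := exists_card_idealsNormLE_le K
  obtain ⟨C', -, hsum⟩ := exists_sum_mul_div_rpow_le (n := fun I : NonzeroIdeal K => N(I.1))
    (a := fun _ => 1) (θ := 1 / 2) (fun I => one_le_absNorm I.2)
    (fun _ _ => mem_nonzeroIdealsNormLE) (fun _ => zero_le_one)
    (fun t ht => by
      rw [sum_nonzeroIdealsNormLE t fun _ => 1]
      simpa only [Finset.sum_const, nsmul_one] using hcard t ht) (by norm_num) (by norm_num)
  refine ⟨2 * C', fun x hx => ?_⟩
  calc ∑ I ∈ idealsNormLE K x, Real.log (x / N(I))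
      ≤ ∑ I ∈ idealsNormLE K x, 2 * (1 * (x / N(I)) ^ (1 / 2 : ℝ)) := by
        refine Finset.sum_le_sum fun I hI => ?_
        have := Real.log_le_rpow_div (div_pos hx (absNorm_pos (mem_idealsNormLE.1 hI).1)).le
          (ε := 1 / 2) (by norm_num)
        linarith
    _ ≤ 2 * (C' * x) := by
        rw [← Finset.mul_sum, ← sum_nonzeroIdealsNormLE x fun I => 1 * (x / N(I)) ^ (1 / 2 : ℝ)]
        exact mul_le_mul_of_nonneg_left (hsum x hx) zero_le_two
    _ = 2 * C' * x := (mul_assoc _ _ _).symm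

theorem exists_abs_card_mul_log_sub_le :
    ∃ C : ℝ, ∀ x : ℝ, 1 ≤ x →
      |((idealsNormLE K x).card - kappaK K * x) * Real.log x| ≤ C * x := by
  obtain ⟨C, hC, hcard⟩ := exists_abs_card_idealsNormLE_sub_le_errorExponent K
  set θ := errorExponent K
  have hθ : 0 < 1 - θ := sub_pos.2 (errorExponent_lt_one K)
  refine ⟨C / (1 - θ), fun x hx => ?_⟩
  have hx0 : 0 < x := by linarith
  rw [abs_mul, abs_of_nonneg (Real.log_nonneg hx)]
  calc |(idealsNormLE K x).card - kappaK K * x| * Real.log x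
      ≤ C * x ^ θ * (x ^ (1 - θ) / (1 - θ)) :=
        mul_le_mul (hcard x hx0) (Real.log_le_rpow_div hx0.le hθ) (Real.log_nonneg hx)
          (by positivity)
    _ = C / (1 - θ) * x ^ (θ + (1 - θ)) := by rw [Real.rpow_add hx0]; ring
    _ = C / (1 - θ) * x := by rw [add_sub_cancel, Real.rpow_one]

theorem exists_abs_sum_log_absNorm_sub_le :
    ∃ C : ℝ, ∀ x : ℝ, 1 ≤ x →
      |∑ I ∈ idealsNormLE K x, Real.log N(I) - kappaK K * x * Real.log x| ≤ C * x := by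
  obtain ⟨C₁, hmain⟩ := exists_abs_card_mul_log_sub_le K
  obtain ⟨C₂, herr⟩ := exists_sum_log_div_absNorm_le K
  refine ⟨C₁ + C₂, fun x hx => ?_⟩
  have hx0 : 0 < x := by linarith
  have hsplit : ∑ I ∈ idealsNormLE K x, Real.log N(I) - kappaK K * x * Real.log x
      = ((idealsNormLE K x).card - kappaK K * x) * Real.log x
        - ∑ I ∈ idealsNormLE K x, Real.log (x / N(I)) := by
    have : ∀ I ∈ idealsNormLE K x, Real.log (x / N(I)) = Real.log x - Real.log N(I) :=
      fun I hI => Real.log_div hx0.ne' (absNorm_pos (mem_idealsNormLE.1 hI).1).ne'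
    rw [Finset.sum_congr rfl this, Finset.sum_sub_distrib, Finset.sum_const, nsmul_eq_mul]
    ring
  have hnonneg : 0 ≤ ∑ I ∈ idealsNormLE K x, Real.log (x / N(I)) := by
    refine Finset.sum_nonneg fun I hI => Real.log_nonneg ?_
    obtain ⟨hI0, hIx⟩ := mem_idealsNormLE.1 hI
    rwa [one_le_div (absNorm_pos hI0)]
  rw [hsplit]
  refine (abs_sub _ _).trans ?_
  rw [abs_of_nonneg hnonneg, add_mul]
  exact add_le_add (hmain x hx) (herr x hx0)

variable {K}

theorem log_absNorm_nonneg (p : NonzeroPrime K) : 0 ≤ Real.log N(p.1) :=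
  Real.log_nonneg (one_le_absNorm p.2.2)

theorem sum_log_absNorm_eq_sum_primes (x : ℝ) :
    ∑ I ∈ idealsNormLE K x, Real.log N(I)
      = ∑ p ∈ primesNormLE K x,
          Real.log N(p.1) * ∑ I ∈ idealsNormLE K x, (multiplicity p.1 I : ℝ) := by
  simp_rw [Finset.mul_sum, mul_comm (Real.log _)]
  rw [Finset.sum_comm]
  exact Finset.sum_congr rfl fun I hI => log_absNorm_eq_sum hI

theorem sum_multiplicity_le {C : ℝ} (hC : 0 ≤ C)
    (hcard : ∀ x : ℝ, 0 < x → ((idealsNormLE K x).card : ℝ) ≤ C * x) (p : NonzeroPrime K) {x : ℝ}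
    (hx : 0 < x) : ∑ I ∈ idealsNormLE K x, (multiplicity p.1 I : ℝ) ≤ 2 * C * (x / N(p.1)) :=
  le_two_mul_of_eq_add_div (F := fun y => ((idealsNormLE K y).card : ℝ))
    (V := fun y => ∑ I ∈ idealsNormLE K y, (multiplicity p.1 I : ℝ)) (two_le_absNorm p) hC
    (fun y hy => by rw [idealsNormLE_eq_empty hy, Finset.sum_empty]) hcard
    (fun y _ => sum_multiplicity_eq p y) hx

variable (K) in
theorem exists_abs_sum_multiplicity_sub_le :
    ∃ C : ℝ, 0 ≤ C ∧ ∀ (p : NonzeroPrime K) (x : ℝ), 0 < x →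
      |∑ I ∈ idealsNormLE K x, (multiplicity p.1 I : ℝ) - kappaK K * (x / N(p.1))|
        ≤ C * ((x / N(p.1)) ^ errorExponent K + x * N(p.1) ^ (-2 : ℝ)) := by
  obtain ⟨C₁, hC₁, hcount⟩ := exists_abs_card_idealsNormLE_sub_le_errorExponent K
  obtain ⟨C₂, hC₂, hcard⟩ := exists_card_idealsNormLE_le K
  refine ⟨C₁ + 2 * C₂, by positivity, fun p x hx => ?_⟩
  have hp : 0 < N(p.1) := absNorm_pos p.2.2
  have hmain := hcount _ (div_pos hx hp)
  have htail := sum_multiplicity_le hC₂ hcard p (div_pos hx hp)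
  have htail0 : 0 ≤ ∑ I ∈ idealsNormLE K (x / N(p.1)), (multiplicity p.1 I : ℝ) :=
    Finset.sum_nonneg fun _ _ => Nat.cast_nonneg _
  have hsq : x / N(p.1) / N(p.1) = x * N(p.1) ^ (-2 : ℝ) := by
    rw [Real.rpow_neg hp.le, Real.rpow_two, div_div, ← sq, div_eq_mul_inv]
  rw [hsq] at htail
  have h₁ : 0 ≤ C₁ * (x * N(p.1) ^ (-2 : ℝ)) := by positivity
  have h₂ : 0 ≤ 2 * C₂ * (x / N(p.1)) ^ errorExponent K := by positivity
  rw [sum_multiplicity_eq p x, abs_le] at *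
  constructor <;> linarith

variable (K) in
theorem exists_abs_sum_log_absNorm_sub_primes_le :
    ∃ C : ℝ, ∀ x : ℝ, 0 < x →
      |∑ I ∈ idealsNormLE K x, Real.log N(I)
          - kappaK K * x * ∑ p ∈ primesNormLE K x, Real.log N(p.1) / N(p.1)| ≤ C * x := by
  obtain ⟨C, hC, hmult⟩ := exists_abs_sum_multiplicity_sub_le K
  have hn (p : NonzeroPrime K) : 1 ≤ N(p.1) := one_le_absNorm p.2.2
  have hchebyshev (t : ℝ) (ht : 0 < t) := sum_log_absNorm_primesNormLE_le (K := K) ht.le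
  have hθ : 0 ≤ errorExponent K := (by norm_num : (0 : ℝ) ≤ 3 / 4).trans
    (three_quarters_le_errorExponent K)
  obtain ⟨C', -, hdyadic⟩ := exists_sum_mul_div_rpow_le hn (fun _ _ => mem_primesNormLE)
    log_absNorm_nonneg hchebyshev hθ (errorExponent_lt_one K)
  have hsummable := summable_mul_rpow_neg hn (fun _ _ => mem_primesNormLE)
    log_absNorm_nonneg hchebyshev (s := 2) (by norm_num)
  set D := ∑' p : NonzeroPrime K, Real.log N(p.1) * N(p.1) ^ (-2 : ℝ)
  have hterm (p : NonzeroPrime K) : 0 ≤ Real.log N(p.1) * N(p.1) ^ (-2 : ℝ) :=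
    mul_nonneg (log_absNorm_nonneg p) (by positivity)
  refine ⟨C * (C' + D), fun x hx => ?_⟩
  rw [sum_log_absNorm_eq_sum_primes, Finset.mul_sum, ← Finset.sum_sub_distrib]
  calc _ ≤ ∑ p ∈ primesNormLE K x, C * (Real.log N(p.1) * (x / N(p.1)) ^ errorExponent K
          + x * (Real.log N(p.1) * N(p.1) ^ (-2 : ℝ))) := by
        refine (Finset.abs_sum_le_sum_abs _ _).trans (Finset.sum_le_sum fun p _ => ?_)
        have := mul_le_mul_of_nonneg_left (hmult p x hx) (log_absNorm_nonneg p)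
        rw [← abs_of_nonneg (log_absNorm_nonneg p), ← abs_mul,
          abs_of_nonneg (log_absNorm_nonneg p)] at this
        convert this using 1 <;> ring_nf
    _ = C * (∑ p ∈ primesNormLE K x, Real.log N(p.1) * (x / N(p.1)) ^ errorExponent K
          + x * ∑ p ∈ primesNormLE K x, Real.log N(p.1) * N(p.1) ^ (-2 : ℝ)) := by
        rw [← Finset.mul_sum, Finset.sum_add_distrib, ← Finset.mul_sum]
    _ ≤ C * (C' * x + x * D) := by
        gcongr
        · exact hdyadic x hx
        · exact hsummable.sum_le_tsum _ fun p _ => hterm p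
    _ = C * (C' + D) * x := by ring

variable (K) in
theorem exists_abs_sum_log_div_absNorm_sub_log_le :
    ∃ C : ℝ, ∀ x : ℝ, 1 ≤ x →
      |∑ p ∈ primesNormLE K x, Real.log N(p.1) / N(p.1) - Real.log x| ≤ C := by
  obtain ⟨C₁, hideals⟩ := exists_abs_sum_log_absNorm_sub_le K
  obtain ⟨C₂, hprimes⟩ := exists_abs_sum_log_absNorm_sub_primes_le K
  refine ⟨(C₁ + C₂) / kappaK K, fun x hx => ?_⟩
  have hx0 : 0 < x := by linarith
  have hκx : 0 < kappaK K * x := mul_pos (kappaK_pos K) hx0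
  have hbound := (abs_sub _ _).trans (add_le_add (hideals x hx) (hprimes x hx0))
  rw [sub_sub_sub_cancel_left, ← mul_sub, abs_mul, abs_of_pos hκx, ← add_mul,
    ← le_div_iff₀' hκx, mul_div_mul_right _ _ hx0.ne'] at hbound
  exact hbound

end FirstMertensTheorem

section EulerProduct

open Ideal Module

theorem prod_pow_ne_bot {K : Type*} [Field K] (k : ℕ) (T : Finset (NonzeroPrime K)) :
    ∏ p ∈ T, p.1 ^ k ≠ ⊥ :=
  Finset.prod_ne_zero_iff.2 fun p _ => pow_ne_zero k p.2.2

variable {K : Type*} [Field K] [NumberField K]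

theorem prod_pow_dvd_iff (k : ℕ) (T : Finset (NonzeroPrime K)) (I : Ideal (𝓞 K)) :
    ∏ p ∈ T, p.1 ^ k ∣ I ↔ ∀ p ∈ T, p.1 ^ k ∣ I :=
  ⟨fun hT _ hp => (Finset.dvd_prod_of_mem (fun p : NonzeroPrime K => p.1 ^ k) hp).trans hT,
    Finset.prod_dvd_of_isRelPrime fun _ _ _ _ hpq => (isRelPrime_of_ne hpq).pow⟩

theorem absNorm_prod_pow (k : ℕ) (T : Finset (NonzeroPrime K)) :
    N(∏ p ∈ T, p.1 ^ k) = ∏ p ∈ T, N(p.1) ^ k := by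
  simp_rw [map_prod, map_pow, Nat.cast_prod, Nat.cast_pow]

theorem prod_one_sub_eq_sum_powerset {ι : Type*} (s : Finset ι) (f : ι → ℝ) :
    ∏ i ∈ s, (1 - f i) = ∑ t ∈ s.powerset, (-1) ^ t.card * ∏ i ∈ t, f i := by
  simp_rw [sub_eq_add_neg, Finset.prod_one_add, Finset.prod_neg]

open scoped Classical in
theorem ite_forall_not_pow_dvd_eq_sum (k : ℕ) (P : Finset (NonzeroPrime K)) (I : Ideal (𝓞 K))
    (w : ℝ) :
    (if ∀ p ∈ P, ¬ p.1 ^ k ∣ I then w else 0)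
      = ∑ T ∈ P.powerset, (-1) ^ T.card * if ∏ p ∈ T, p.1 ^ k ∣ I then w else 0 := by
  have hprod : (if ∀ p ∈ P, ¬ p.1 ^ k ∣ I then w else 0)
      = (∏ p ∈ P, (1 - if p.1 ^ k ∣ I then 1 else 0)) * w := by
    have hfactor (p : NonzeroPrime K) :
        1 - (if p.1 ^ k ∣ I then 1 else 0) = if ¬ p.1 ^ k ∣ I then (1 : ℝ) else 0 := by
      split_ifs <;> norm_num
    simp_rw [hfactor, Finset.prod_ite_zero, Finset.prod_const_one, ite_mul, one_mul, zero_mul]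
  simp_rw [hprod, prod_one_sub_eq_sum_powerset, Finset.sum_mul, Finset.prod_ite_zero,
    prod_pow_dvd_iff, Finset.prod_const_one, mul_assoc, ite_mul, one_mul, zero_mul]

open scoped Classical in
theorem sum_ite_forall_not_pow_dvd (k : ℕ) (P : Finset (NonzeroPrime K)) (w : Ideal (𝓞 K) → ℝ)
    (x : ℝ) :
    ∑ I ∈ idealsNormLE K x, (if ∀ p ∈ P, ¬ p.1 ^ k ∣ I then w I else 0)
      = ∑ T ∈ P.powerset, (-1) ^ T.card *
          ∑ I ∈ idealsNormLE K (x / ∏ p ∈ T, N(p.1) ^ k), w ((∏ p ∈ T, p.1 ^ k) * I) := by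
  simp_rw [ite_forall_not_pow_dvd_eq_sum]
  rw [Finset.sum_comm]
  refine Finset.sum_congr rfl fun T _ => ?_
  rw [← Finset.mul_sum, sum_idealsNormLE_ite_dvd x (prod_pow_ne_bot k T), absNorm_prod_pow]

variable (K) in
theorem summable_absNorm_rpow_neg {s : ℝ} (hs : 1 < s) :
    Summable fun I : NonzeroIdeal K => N(I.1) ^ (-s) := by
  obtain ⟨C, -, hcard⟩ := exists_card_idealsNormLE_le K
  have := summable_mul_rpow_neg (a := fun _ => 1) (fun I : NonzeroIdeal K => one_le_absNorm I.2)
    (fun _ _ => mem_nonzeroIdealsNormLE) (fun _ => zero_le_one)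
    (fun t ht => by
      rw [sum_nonzeroIdealsNormLE t fun _ => 1]
      simpa only [Finset.sum_const, nsmul_one] using hcard t ht) hs
  simpa only [one_mul] using this

variable (K) in
theorem summable_nonzeroPrime_absNorm_rpow_neg {s : ℝ} (hs : 1 < s) :
    Summable fun p : NonzeroPrime K => N(p.1) ^ (-s) :=
  (summable_absNorm_rpow_neg K hs).comp_injective
    (i := fun p : NonzeroPrime K => (⟨p.1, p.2.2⟩ : NonzeroIdeal K))
    fun _ _ hpq => Subtype.ext (Subtype.mk.inj hpq)

variable {h : ℕ}

variable (K) in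
theorem summable_one_div_absNorm_pow (hh : 2 ≤ h) :
    Summable fun I : NonzeroIdeal K => 1 / N(I.1) ^ h := by
  refine (summable_absNorm_rpow_neg K (s := h) (Nat.one_lt_cast.2 hh)).congr fun I => ?_
  rw [Real.rpow_neg (Nat.cast_nonneg _), Real.rpow_natCast, one_div]

variable (K) in
theorem tendsto_sum_one_div_absNorm_pow (hh : 2 ≤ h) :
    Tendsto (fun z : ℝ => ∑ I ∈ idealsNormLE K z, 1 / N(I) ^ h) atTop (𝓝 (zetaK K h)) := by
  have hexhaust : Tendsto (nonzeroIdealsNormLE K) atTop atTop :=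
    tendsto_atTop_finset_of_monotone
      (fun _ _ hxy _ hI => mem_nonzeroIdealsNormLE.2 ((mem_nonzeroIdealsNormLE.1 hI).trans hxy))
      fun I => ⟨N(I.1), mem_nonzeroIdealsNormLE.2 le_rfl⟩
  exact ((summable_one_div_absNorm_pow K hh).hasSum.comp hexhaust).congr fun z =>
    sum_nonzeroIdealsNormLE z fun I => 1 / N(I) ^ h

theorem sum_one_div_absNorm_pow_le_zetaK (hh : 2 ≤ h) (z : ℝ) :
    ∑ I ∈ idealsNormLE K z, 1 / N(I) ^ h ≤ zetaK K h := by
  rw [← sum_nonzeroIdealsNormLE z fun I => 1 / N(I) ^ h]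
  exact (summable_one_div_absNorm_pow K hh).sum_le_tsum _ fun I _ => by positivity

theorem one_mem_idealsNormLE {z : ℝ} (hz : 1 ≤ z) : 1 ∈ idealsNormLE K z :=
  mem_idealsNormLE.2 ⟨one_ne_zero, by rwa [map_one, Nat.cast_one]⟩

variable (K) in
theorem zetaK_pos (hh : 2 ≤ h) : 0 < zetaK K h := by
  refine lt_of_lt_of_le ?_ (sum_one_div_absNorm_pow_le_zetaK hh 1)
  refine Finset.sum_pos (fun I hI => ?_) ⟨1, one_mem_idealsNormLE le_rfl⟩
  have := absNorm_pos (mem_idealsNormLE.1 hI).1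
  positivity

theorem exists_nonzeroPrime_dvd {I : Ideal (𝓞 K)} (hI : I ≠ ⊥) (hI1 : I ≠ 1) :
    ∃ p : NonzeroPrime K, p.1 ∣ I := by
  obtain ⟨q, hq, hqI⟩ := WfDvdMonoid.exists_irreducible_factor (mt isUnit_iff_eq_one.1 hI1) hI
  exact ⟨⟨q, isPrime_of_prime hq.prime, hq.ne_zero⟩, hqI⟩

open scoped Classical in
theorem tendsto_sum_ite_forall_not_dvd (hh : 2 ≤ h) (P : Finset (NonzeroPrime K)) :
    Tendsto (fun z : ℝ => ∑ I ∈ idealsNormLE K z, if ∀ p ∈ P, ¬ p.1 ∣ I then 1 / N(I) ^ h else 0)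
      atTop (𝓝 ((∏ p ∈ P, (1 - 1 / N(p.1) ^ h)) * zetaK K h)) := by
  have hsieve := sum_ite_forall_not_pow_dvd 1 P fun I => 1 / N(I) ^ h
  simp only [pow_one] at hsieve
  simp_rw [hsieve, prod_one_sub_eq_sum_powerset, Finset.sum_mul, mul_assoc]
  refine tendsto_finsetSum _ fun T _ => Tendsto.const_mul _ ?_
  have hpos : 0 < ∏ p ∈ T, N(p.1) := Finset.prod_pos fun p _ => absNorm_pos p.2.2
  refine (((tendsto_sum_one_div_absNorm_pow K hh).comp
    (tendsto_id.atTop_div_const hpos)).const_mul _).congr fun z => ?_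
  simp only [Function.comp_apply, id_eq, Finset.mul_sum, map_mul, Nat.cast_mul, map_prod,
    Nat.cast_prod, Finset.prod_div_distrib, Finset.prod_const_one, Finset.prod_pow,
    one_div_mul_one_div, mul_pow]

theorem one_le_prod_one_sub_mul_zetaK (hh : 2 ≤ h) (P : Finset (NonzeroPrime K)) :
    1 ≤ (∏ p ∈ P, (1 - 1 / N(p.1) ^ h)) * zetaK K h := by
  classical
  refine ge_of_tendsto (tendsto_sum_ite_forall_not_dvd hh P) ?_
  filter_upwards [eventually_ge_atTop 1] with z hz
  have hone : ∀ p ∈ P, ¬ p.1 ∣ 1 := fun p _ hp => (prime_val p).not_isUnit (isUnit_of_dvd_one hp)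
  calc (1 : ℝ) = if ∀ p ∈ P, ¬ p.1 ∣ 1 then 1 / N((1 : Ideal (𝓞 K))) ^ h else 0 := by
        rw [if_pos hone, map_one, Nat.cast_one, one_pow, div_one]
    _ ≤ ∑ I ∈ idealsNormLE K z, if ∀ p ∈ P, ¬ p.1 ∣ I then 1 / N(I) ^ h else 0 :=
        Finset.single_le_sum (f := fun I => if ∀ p ∈ P, ¬ p.1 ∣ I then 1 / N(I) ^ h else 0)
          (fun I _ => by positivity) (one_mem_idealsNormLE hz)

open scoped Classical in
theorem sum_ite_forall_primesNormLE_not_dvd_le_one {y : ℝ} (hy : 1 ≤ y) :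
    ∑ I ∈ idealsNormLE K y, (if ∀ p ∈ primesNormLE K y, ¬ p.1 ∣ I then 1 / N(I) ^ h else 0)
      ≤ 1 := by
  rw [Finset.sum_eq_single_of_mem 1 (one_mem_idealsNormLE hy)]
  · rw [map_one, Nat.cast_one, one_pow, div_one]
    split_ifs <;> norm_num
  · intro I hI hI1
    obtain ⟨p, hp⟩ := exists_nonzeroPrime_dvd (mem_idealsNormLE.1 hI).1 hI1
    exact if_neg fun hall => hall p (mem_primesNormLE_of_dvd hI hp) hp

theorem prod_one_sub_mul_zetaK_le (hh : 2 ≤ h) {y : ℝ} (hy : 1 ≤ y) :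
    (∏ p ∈ primesNormLE K y, (1 - 1 / N(p.1) ^ h)) * zetaK K h
      ≤ 1 + (zetaK K h - ∑ I ∈ idealsNormLE K y, 1 / N(I) ^ h) := by
  classical
  refine le_of_tendsto (tendsto_sum_ite_forall_not_dvd hh _) ?_
  filter_upwards [eventually_ge_atTop y] with z hz
  have hsub : idealsNormLE K y ⊆ idealsNormLE K z := idealsNormLE_mono hz
  have htail : ∑ I ∈ idealsNormLE K z \ idealsNormLE K y,
      (if ∀ p ∈ primesNormLE K y, ¬ p.1 ∣ I then 1 / N(I) ^ h else 0)
        ≤ ∑ I ∈ idealsNormLE K z \ idealsNormLE K y, 1 / N(I) ^ h := by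
    refine Finset.sum_le_sum fun I _ => ?_
    split_ifs
    · exact le_rfl
    · positivity
  have hhead := sum_ite_forall_primesNormLE_not_dvd_le_one (K := K) (h := h) hy
  have hsplit := Finset.sum_sdiff hsub (f := fun I => 1 / N(I) ^ h)
  have hzeta := sum_one_div_absNorm_pow_le_zetaK (K := K) hh z
  rw [← Finset.sum_sdiff hsub]
  linarith

variable (K) in
theorem tendsto_prod_one_sub_one_div_absNorm_pow (hh : 2 ≤ h) :
    Tendsto (fun y : ℝ => ∏ p ∈ primesNormLE K y, (1 - 1 / N(p.1) ^ h)) atTop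
      (𝓝 (1 / zetaK K h)) := by
  have hupper : Tendsto (fun y : ℝ => 1 + (zetaK K h - ∑ I ∈ idealsNormLE K y, 1 / N(I) ^ h))
      atTop (𝓝 1) := by
    simpa only [sub_self, add_zero] using
      ((tendsto_sum_one_div_absNorm_pow K hh).const_sub (zetaK K h)).const_add 1
  have hone : Tendsto (fun y : ℝ => (∏ p ∈ primesNormLE K y, (1 - 1 / N(p.1) ^ h)) * zetaK K h)
      atTop (𝓝 1) := by
    refine tendsto_of_tendsto_of_tendsto_of_le_of_le' tendsto_const_nhds hupper ?_ ?_
    · exact Eventually.of_forall fun y => one_le_prod_one_sub_mul_zetaK hh _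
    · filter_upwards [eventually_ge_atTop 1] with y hy using prod_one_sub_mul_zetaK_le hh hy
  exact (hone.div_const (zetaK K h)).congr fun y =>
    mul_div_cancel_right₀ _ (zetaK_pos K hh).ne'

end EulerProduct

section HFreeCount

open Ideal Module

variable {K : Type*} [Field K] [NumberField K] {h : ℕ}

open scoped Classical in
/-- The indicator function of the `h`-free ideals divisible by all the primes in `S`. -/
def hfreeIndicator (h : ℕ) (S : Finset (NonzeroPrime K)) (I : Ideal (𝓞 K)) : ℝ :=
  if HFreeI h I ∧ ∀ p ∈ S, p.1 ∣ I then 1 else 0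

/-- The number of `h`-free ideals of norm at most `x` divisible by all the primes in `S`. -/
def hfreeCount (h : ℕ) (S : Finset (NonzeroPrime K)) (x : ℝ) : ℝ :=
  ∑ I ∈ idealsNormLE K x, hfreeIndicator h S I

theorem hfreeCount_eq_zero (h : ℕ) (S : Finset (NonzeroPrime K)) {x : ℝ} (hx : x < 1) :
    hfreeCount h S x = 0 := by
  rw [hfreeCount, idealsNormLE_eq_empty hx, Finset.sum_empty]

theorem hfreeI_iff_multiplicity_lt {I : Ideal (𝓞 K)} (hI : I ≠ ⊥) :
    HFreeI h I ↔ ∀ p : NonzeroPrime K, multiplicity p.1 I < h := by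
  simp_rw [(finiteMultiplicity_nonzeroPrime _ hI).multiplicity_lt_iff_not_dvd]
  exact ⟨fun hfree p => hfree p.1 p.2.1 p.2.2, fun hfree p hp hp0 => hfree ⟨p, hp, hp0⟩⟩

theorem hfreeI_add_pow_mul_iff (k m : ℕ) (p : NonzeroPrime K) {I : Ideal (𝓞 K)} (hI : I ≠ ⊥) :
    HFreeI (k + m) (p.1 ^ k * I) ↔ HFreeI (k + m) I ∧ ¬ p.1 ^ m ∣ I := by
  have hpk : p.1 ^ k ≠ ⊥ := pow_ne_zero k p.2.2
  have hself : multiplicity p.1 (p.1 ^ k) = k := multiplicity_pow_self_of_prime (prime_val p) k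
  have hother (q : NonzeroPrime K) (hqp : q ≠ p) : multiplicity q.1 (p.1 ^ k) = 0 :=
    multiplicity_eq_zero.2 fun hdvd => not_dvd_of_ne hqp ((prime_val q).dvd_of_dvd_pow hdvd)
  rw [hfreeI_iff_multiplicity_lt (mul_ne_zero hpk hI), hfreeI_iff_multiplicity_lt hI,
    ← (finiteMultiplicity_nonzeroPrime p hI).multiplicity_lt_iff_not_dvd]
  simp_rw [multiplicity_nonzeroPrime_mul _ hpk hI]
  constructor
  · intro hfree
    have := hfree p
    exact ⟨fun q => (Nat.le_add_left _ _).trans_lt (hfree q), by omega⟩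
  · rintro ⟨hfree, hp⟩ q
    by_cases hqp : q = p
    · subst hqp
      omega
    · have := hfree q
      have := hother q hqp
      omega

theorem forall_dvd_pow_mul_iff {S : Finset (NonzeroPrime K)} {p : NonzeroPrime K} (hp : p ∉ S)
    (k : ℕ) (I : Ideal (𝓞 K)) : (∀ q ∈ S, q.1 ∣ p.1 ^ k * I) ↔ ∀ q ∈ S, q.1 ∣ I := by
  refine forall₂_congr fun q hq => ⟨fun hdvd => ?_, fun hdvd => hdvd.mul_left _⟩
  refine ((prime_val q).dvd_or_dvd hdvd).resolve_left fun hdvd => ?_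
  exact not_dvd_of_ne (ne_of_mem_of_not_mem hq hp) ((prime_val q).dvd_of_dvd_pow hdvd)

open scoped Classical in
theorem hfreeIndicator_insert (h : ℕ) (S : Finset (NonzeroPrime K)) (p : NonzeroPrime K)
    (I : Ideal (𝓞 K)) :
    hfreeIndicator h (insert p S) I = if p.1 ∣ I then hfreeIndicator h S I else 0 := by
  simp only [hfreeIndicator, Finset.forall_mem_insert, ← ite_and, and_left_comm]

open scoped Classical in
theorem hfreeIndicator_add_pow_mul {S : Finset (NonzeroPrime K)} {p : NonzeroPrime K} (hp : p ∉ S)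
    (k m : ℕ) {I : Ideal (𝓞 K)} (hI : I ≠ ⊥) :
    hfreeIndicator (k + m) S (p.1 ^ k * I)
      = if p.1 ^ m ∣ I then 0 else hfreeIndicator (k + m) S I := by
  simp only [hfreeIndicator, hfreeI_add_pow_mul_iff k m p hI, forall_dvd_pow_mul_iff hp]
  split_ifs <;> tauto

open scoped Classical in
theorem hfreeCount_insert_eq_sum {S : Finset (NonzeroPrime K)} {p : NonzeroPrime K} (hp : p ∉ S)
    (g : ℕ) (x : ℝ) :
    hfreeCount (1 + g) (insert p S) x
      = ∑ I ∈ idealsNormLE K (x / N(p.1)),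
          if p.1 ^ g ∣ I then 0 else hfreeIndicator (1 + g) S I := by
  simp_rw [hfreeCount, hfreeIndicator_insert, sum_idealsNormLE_ite_dvd x p.2.2]
  refine Finset.sum_congr rfl fun I hI => ?_
  have := hfreeIndicator_add_pow_mul hp 1 g (mem_idealsNormLE.1 hI).1
  rwa [pow_one] at this

open scoped Classical in
theorem sum_ite_pow_dvd_hfreeIndicator {S : Finset (NonzeroPrime K)} {p : NonzeroPrime K}
    (hp : p ∉ S) (g : ℕ) (x : ℝ) :
    ∑ I ∈ idealsNormLE K x, (if p.1 ^ g ∣ I then hfreeIndicator (g + 1) S I else 0)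
      = hfreeCount (g + 1) S (x / N(p.1) ^ g)
        - hfreeCount (g + 1) (insert p S) (x / N(p.1) ^ g) := by
  rw [sum_idealsNormLE_ite_dvd x (pow_ne_zero g p.2.2), map_pow, Nat.cast_pow, hfreeCount,
    hfreeCount, ← Finset.sum_sub_distrib]
  refine Finset.sum_congr rfl fun I hI => ?_
  rw [hfreeIndicator_add_pow_mul hp g 1 (mem_idealsNormLE.1 hI).1, pow_one,
    hfreeIndicator_insert]
  split_ifs <;> ring

open scoped Classical in
theorem hfreeCount_insert (hh : h ≠ 0) {S : Finset (NonzeroPrime K)} {p : NonzeroPrime K}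
    (hp : p ∉ S) (x : ℝ) :
    hfreeCount h (insert p S) x
      = hfreeCount h S (x / N(p.1)) - hfreeCount h S (x / N(p.1) ^ h)
        + hfreeCount h (insert p S) (x / N(p.1) ^ h) := by
  obtain ⟨g, rfl⟩ := Nat.exists_eq_add_one_of_ne_zero hh
  have hpow : x / N(p.1) / N(p.1) ^ g = x / N(p.1) ^ (g + 1) := by rw [div_div, ← pow_succ']
  have hnot := hfreeCount_insert_eq_sum hp g x
  have hdvd := sum_ite_pow_dvd_hfreeIndicator hp g (x / N(p.1))
  have hsplit : hfreeCount (g + 1) S (x / N(p.1))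
      = ∑ I ∈ idealsNormLE K (x / N(p.1)),
          (if p.1 ^ g ∣ I then 0 else hfreeIndicator (g + 1) S I)
        + ∑ I ∈ idealsNormLE K (x / N(p.1)),
          (if p.1 ^ g ∣ I then hfreeIndicator (g + 1) S I else 0) := by
    rw [hfreeCount, ← Finset.sum_add_distrib]
    refine Finset.sum_congr rfl fun I _ => ?_
    split_ifs <;> ring
  rw [hpow] at hdvd
  rw [add_comm 1 g] at hnot
  linarith

open scoped Classical in
theorem hfreeCount_empty_eq_sum (hh : h ≠ 0) {x y : ℝ} (hxy : x ≤ y) :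
    hfreeCount (K := K) h ∅ x
      = ∑ I ∈ idealsNormLE K x, if ∀ p ∈ primesNormLE K y, ¬ p.1 ^ h ∣ I then 1 else 0 := by
  refine Finset.sum_congr rfl fun I hI => if_congr ?_ rfl rfl
  simp only [Finset.notMem_empty, false_imp_iff, implies_true, and_true]
  refine ⟨fun hfree p _ => hfree p.1 p.2.1 p.2.2, fun hfree p hp hp0 hdvd => ?_⟩
  exact hfree ⟨p, hp, hp0⟩ (mem_primesNormLE_of_dvd (idealsNormLE_mono hxy hI)
    ((dvd_pow_self p hh).trans hdvd)) hdvd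

theorem div_prod_pow_rpow_le {θ x : ℝ} (hh : 2 ≤ h) (hθ : 3 / 4 ≤ θ) (hx : 0 ≤ x)
    (T : Finset (NonzeroPrime K)) :
    (x / ∏ p ∈ T, N(p.1) ^ h) ^ θ ≤ x ^ θ * ∏ p ∈ T, N(p.1) ^ (-(3 / 2) : ℝ) := by
  have hpos (p : NonzeroPrime K) : 0 < N(p.1) := absNorm_pos p.2.2
  have hprod : 0 ≤ ∏ p ∈ T, N(p.1) ^ h := Finset.prod_nonneg fun p _ => (pow_pos (hpos p) h).le
  rw [Real.div_rpow hx hprod, div_eq_mul_inv, ← Real.rpow_neg hprod,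
    ← Real.finsetProd_rpow _ _ fun p _ => (pow_pos (hpos p) h).le]
  gcongr with p _
  rw [← Real.rpow_natCast, ← Real.rpow_mul (hpos p).le]
  have : (2 : ℝ) ≤ h := Nat.ofNat_le_cast.2 hh
  exact Real.rpow_le_rpow_of_exponent_le (one_le_absNorm p.2.2) (by nlinarith)

theorem abs_hfreeCount_empty_sub_prod_le {C θ x y : ℝ} (hh : 2 ≤ h) (hC : 0 ≤ C)
    (hθ : 3 / 4 ≤ θ)
    (hcount : ∀ x : ℝ, 0 < x → |((idealsNormLE K x).card : ℝ) - kappaK K * x| ≤ C * x ^ θ)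
    (hx : 0 < x) (hxy : x ≤ y) :
    |hfreeCount (K := K) h ∅ x
        - kappaK K * x * ∏ p ∈ primesNormLE K y, (1 - 1 / N(p.1) ^ h)|
      ≤ C * Real.exp (∑' p : NonzeroPrime K, N(p.1) ^ (-(3 / 2) : ℝ)) * x ^ θ := by
  have hprod (T : Finset (NonzeroPrime K)) : 0 < ∏ p ∈ T, N(p.1) ^ h :=
    Finset.prod_pos fun p _ => pow_pos (absNorm_pos p.2.2) h
  have hterm (T : Finset (NonzeroPrime K)) :
      |(-1) ^ T.card * (idealsNormLE K (x / ∏ p ∈ T, N(p.1) ^ h)).card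
          - kappaK K * x * ((-1) ^ T.card * ∏ p ∈ T, 1 / N(p.1) ^ h)|
        ≤ C * x ^ θ * ∏ p ∈ T, N(p.1) ^ (-(3 / 2) : ℝ) := by
    calc _ = |(-1) ^ T.card * ((idealsNormLE K (x / ∏ p ∈ T, N(p.1) ^ h)).card
            - kappaK K * (x / ∏ p ∈ T, N(p.1) ^ h))| := by
          rw [Finset.prod_div_distrib, Finset.prod_const_one]
          ring_nf
      _ = |(idealsNormLE K (x / ∏ p ∈ T, N(p.1) ^ h)).card
            - kappaK K * (x / ∏ p ∈ T, N(p.1) ^ h)| := by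
          rw [abs_mul, abs_neg_one_pow, one_mul]
      _ ≤ C * (x / ∏ p ∈ T, N(p.1) ^ h) ^ θ := hcount _ (div_pos hx (hprod T))
      _ ≤ _ := by
          rw [mul_assoc]
          exact mul_le_mul_of_nonneg_left (div_prod_pow_rpow_le hh hθ hx.le T) hC
  rw [hfreeCount_empty_eq_sum (by omega) hxy, sum_ite_forall_not_pow_dvd,
    prod_one_sub_eq_sum_powerset, Finset.mul_sum, ← Finset.sum_sub_distrib]
  simp_rw [Finset.sum_const, nsmul_one]
  calc _ ≤ ∑ T ∈ (primesNormLE K y).powerset, C * x ^ θ * ∏ p ∈ T, N(p.1) ^ (-(3 / 2) : ℝ) :=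
        (Finset.abs_sum_le_sum_abs _ _).trans (Finset.sum_le_sum fun T _ => hterm T)
    _ = C * x ^ θ * ∏ p ∈ primesNormLE K y, (1 + N(p.1) ^ (-(3 / 2) : ℝ)) := by
        rw [← Finset.mul_sum, Finset.prod_one_add]
    _ ≤ C * x ^ θ * Real.exp (∑' p : NonzeroPrime K, N(p.1) ^ (-(3 / 2) : ℝ)) := by
        gcongr
        refine (Real.prod_one_add_le_exp_sum _ fun p => by positivity).trans ?_
        exact Real.exp_le_exp.2 <| (summable_nonzeroPrime_absNorm_rpow_neg K
          (by norm_num)).sum_le_tsum _ fun p _ => by positivity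
    _ = _ := by ring

variable (K) in
theorem exists_abs_hfreeCount_empty_sub_le (hh : 2 ≤ h) :
    ∃ C : ℝ, 0 ≤ C ∧ ∀ x : ℝ, 0 < x →
      |hfreeCount (K := K) h ∅ x - kappaK K / zetaK K h * x| ≤ C * x ^ errorExponent K := by
  obtain ⟨C, hC, hcount⟩ := exists_abs_card_idealsNormLE_sub_le_errorExponent K
  refine ⟨C * Real.exp (∑' p : NonzeroPrime K, N(p.1) ^ (-(3 / 2) : ℝ)), by positivity,
    fun x hx => ?_⟩
  have hlim := (((tendsto_prod_one_sub_one_div_absNorm_pow K hh).const_mul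
    (kappaK K * x)).const_sub (hfreeCount (K := K) h ∅ x)).abs
  rw [div_mul_eq_mul_div, ← mul_one_div]
  refine le_of_tendsto hlim ?_
  filter_upwards [eventually_ge_atTop x] with y hxy
  exact abs_hfreeCount_empty_sub_prod_le hh hC (three_quarters_le_errorExponent K) hcount hx hxy

theorem prod_hfreeMultipleDensity_le {θ : ℝ} (hh : h ≠ 0) (hθ : θ ≤ 1)
    (S : Finset (NonzeroPrime K)) :
    ∏ p ∈ S, hfreeMultipleDensity h N(p.1) ≤ (∏ p ∈ S, N(p.1)) ^ (-θ) := by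
  rw [← Real.finsetProd_rpow _ _ fun p _ => Nat.cast_nonneg _]
  refine Finset.prod_le_prod (fun p _ => hfreeMultipleDensity_nonneg h (one_le_absNorm p.2.2))
    fun p _ => ?_
  have hp : 2 ≤ N(p.1) := two_le_absNorm p
  calc hfreeMultipleDensity h N(p.1) ≤ 1 / N(p.1) := hfreeMultipleDensity_le hh (by linarith)
    _ = N(p.1) ^ (-1 : ℝ) := by rw [Real.rpow_neg_one, one_div]
    _ ≤ N(p.1) ^ (-θ) := Real.rpow_le_rpow_of_exponent_le (by linarith) (by linarith)

theorem abs_hfreeCount_sub_le {c C θ : ℝ} (hh : 2 ≤ h) (hθ : 1 / 2 ≤ θ) (hθ1 : θ ≤ 1) (hc : 0 ≤ c)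
    (hcC : c ≤ C)
    (hfree : ∀ x : ℝ, 0 < x → |hfreeCount (K := K) h ∅ x - c * x| ≤ C * x ^ θ)
    (S : Finset (NonzeroPrime K)) {x : ℝ} (hx : 0 < x) :
    |hfreeCount h S x - c * (∏ p ∈ S, hfreeMultipleDensity h N(p.1)) * x|
      ≤ 4 ^ S.card * C * (x / ∏ p ∈ S, N(p.1)) ^ θ := by
  classical
  induction S using Finset.induction_on generalizing x with
  | empty => simpa using hfree x hx
  | insert p S hp ih =>
    have hC : 0 ≤ C := hc.trans hcC
    have hP : 0 < ∏ q ∈ S, N(q.1) := Finset.prod_pos fun q _ => absNorm_pos q.2.2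
    have hpp : 0 < N(p.1) := absNorm_pos p.2.2
    have hscale {y : ℝ} (hy : 0 ≤ y) :
        4 ^ S.card * C * (y / ∏ q ∈ S, N(q.1)) ^ θ
          = 4 ^ S.card * C * (∏ q ∈ S, N(q.1)) ^ (-θ) * y ^ θ := by
      rw [Real.div_rpow hy hP.le, Real.rpow_neg hP.le]
      ring
    have hstep := abs_sub_hfreeMultipleDensity_mul_le (F := hfreeCount h S)
      (G := hfreeCount h (insert p S)) (c := c * ∏ q ∈ S, hfreeMultipleDensity h N(q.1))
      (C := 4 ^ S.card * C * (∏ q ∈ S, N(q.1)) ^ (-θ)) (two_le_absNorm p) hh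
      (mul_nonneg hc (Finset.prod_nonneg fun q _ =>
        hfreeMultipleDensity_nonneg h (one_le_absNorm q.2.2)))
      (mul_le_mul (hcC.trans (le_mul_of_one_le_left hC (one_le_pow₀ (by norm_num))))
        (prod_hfreeMultipleDensity_le (by omega) hθ1 S)
        (Finset.prod_nonneg fun q _ => hfreeMultipleDensity_nonneg h (one_le_absNorm q.2.2))
        (by positivity))
      hθ hθ1 (fun y hy => hfreeCount_eq_zero h _ hy)
      (fun y hy => (ih hy).trans_eq (hscale hy.le))
      (fun y _ => hfreeCount_insert (by omega) hp y) hx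
    rw [Finset.prod_insert hp, Finset.prod_insert hp, Finset.card_insert_of_notMem hp, ← div_div,
      pow_succ', mul_assoc 4, mul_assoc 4, hscale (by positivity), ← mul_assoc 4,
      mul_comm (hfreeMultipleDensity h N(p.1)), ← mul_assoc c]
    exact hstep

end HFreeCount

section SecondMomentExpansion

open Ideal

variable {K : Type*} [Field K] [NumberField K] {h : ℕ} {x : ℝ} {I : Ideal (𝓞 K)}

theorem primesNormLE_div_subset (p : NonzeroPrime K) :
    primesNormLE K (x / N(p.1)) ⊆ primesNormLE K x := by
  intro q hq
  rw [mem_primesNormLE] at hq ⊢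
  rw [le_div_iff₀ (absNorm_pos p.2.2)] at hq
  exact (le_mul_of_one_le_right (Nat.cast_nonneg _) (one_le_absNorm p.2.2)).trans hq

open scoped Classical in
theorem omegaK_eq_card_filter (hI : I ∈ idealsNormLE K x) :
    omegaK I = ((primesNormLE K x).filter fun p => p.1 ∣ I).card := by
  rw [omegaK, ← Finset.card_image_of_injective _ Subtype.val_injective, ← Set.ncard_coe_finset]
  congr 1
  ext p
  simp only [Finset.coe_image, Finset.coe_filter, Set.mem_image, Set.mem_ofPred_eq]
  constructor
  · rintro ⟨hp, hp0, hpI⟩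
    exact ⟨⟨p, hp, hp0⟩, ⟨mem_primesNormLE_of_dvd hI hpI, hpI⟩, rfl⟩
  · rintro ⟨q, ⟨-, hqI⟩, rfl⟩
    exact ⟨q.2.1, q.2.2, hqI⟩

theorem mem_primesNormLE_div_of_dvd (hI : I ∈ idealsNormLE K x) {p q : NonzeroPrime K}
    (hqp : q ≠ p) (hpI : p.1 ∣ I) (hqI : q.1 ∣ I) : q ∈ primesNormLE K (x / N(p.1)) := by
  rw [mem_idealsNormLE] at hI
  rw [mem_primesNormLE, le_div_iff₀ (absNorm_pos p.2.2), ← Nat.cast_mul, ← map_mul]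
  exact (absNorm_le_of_dvd hI.1 ((isRelPrime_of_ne hqp).mul_dvd hqI hpI)).trans hI.2

open scoped Classical in
theorem omegaK_sq_eq_sum (hI : I ∈ idealsNormLE K x) :
    (omegaK I : ℝ) ^ 2 = ∑ p ∈ primesNormLE K x, ((if p.1 ∣ I then 1 else 0) +
      ∑ q ∈ (primesNormLE K (x / N(p.1))).erase p, if p.1 ∣ I ∧ q.1 ∣ I then 1 else 0) := by
  rw [omegaK_eq_card_filter hI, sq]
  nth_rw 1 [Finset.card_filter]
  rw [Nat.cast_sum, Finset.sum_mul]
  refine Finset.sum_congr rfl fun p hp => ?_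
  by_cases hpI : p.1 ∣ I
  · have hfilter : ((primesNormLE K x).filter fun q => q.1 ∣ I).erase p
        = ((primesNormLE K (x / N(p.1))).erase p).filter fun q => q.1 ∣ I := by
      ext q
      simp only [Finset.mem_erase, Finset.mem_filter]
      constructor
      · exact fun ⟨hqp, _, hqI⟩ => ⟨⟨hqp, mem_primesNormLE_div_of_dvd hI hqp hpI hqI⟩, hqI⟩
      · exact fun ⟨⟨hqp, hq⟩, hqI⟩ => ⟨hqp, primesNormLE_div_subset p hq, hqI⟩
    rw [← Finset.card_erase_add_one (Finset.mem_filter.2 ⟨hp, hpI⟩), hfilter]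
    simp only [hpI, true_and, if_true, Finset.sum_boole]
    push_cast
    ring
  · simp [hpI]

open scoped Classical in
theorem sum_hfree_omegaK_sq_eq (h : ℕ) (x : ℝ) :
    ∑ᶠ I ∈ {I : Ideal (𝓞 K) | I ≠ ⊥ ∧ HFreeI h I ∧ N(I) ≤ x}, (omegaK I : ℝ) ^ 2
      = ∑ p ∈ primesNormLE K x, (hfreeCount h {p} x
        + ∑ q ∈ (primesNormLE K (x / N(p.1))).erase p, hfreeCount h {p, q} x) := by
  have hset : {I : Ideal (𝓞 K) | I ≠ ⊥ ∧ HFreeI h I ∧ N(I) ≤ x}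
      = ((idealsNormLE K x).filter (HFreeI h) : Finset (Ideal (𝓞 K))) := by
    ext I
    simp only [Set.mem_ofPred_eq, Finset.coe_filter, mem_idealsNormLE]
    tauto
  have hterm (I) (hI : I ∈ idealsNormLE K x) : (if HFreeI h I then (omegaK I : ℝ) ^ 2 else 0)
      = ∑ p ∈ primesNormLE K x, (hfreeIndicator h {p} I
        + ∑ q ∈ (primesNormLE K (x / N(p.1))).erase p, hfreeIndicator h {p, q} I) := by
    by_cases hfree : HFreeI h I <;> simp [hfreeIndicator, hfree, omegaK_sq_eq_sum hI]
  rw [hset, finsum_mem_coe_finset, Finset.sum_filter, Finset.sum_congr rfl hterm, Finset.sum_comm]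
  refine Finset.sum_congr rfl fun p _ => ?_
  rw [Finset.sum_add_distrib, Finset.sum_comm]
  rfl

open scoped Classical in
theorem sum_erase_hfreeMultipleDensity_mul (h : ℕ) (hx : 0 ≤ x) :
    ∑ p ∈ primesNormLE K x, ∑ q ∈ (primesNormLE K (x / N(p.1))).erase p,
        hfreeMultipleDensity h N(p.1) * hfreeMultipleDensity h N(q.1)
      = ∑ p ∈ primesNormLE K x, ∑ q ∈ primesNormLE K (x / N(p.1)),
          hfreeMultipleDensity h N(p.1) * hfreeMultipleDensity h N(q.1)
        - ∑ p ∈ primesNormLE K √x, hfreeMultipleDensity h N(p.1) ^ 2 := by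
  have hdiag : primesNormLE K √x
      = (primesNormLE K x).filter fun p => p ∈ primesNormLE K (x / N(p.1)) := by
    ext p
    rw [Finset.mem_filter, and_iff_right_of_imp (@primesNormLE_div_subset _ _ _ x p p),
      mem_primesNormLE, mem_primesNormLE, le_div_iff₀ (absNorm_pos p.2.2),
      Real.le_sqrt (Nat.cast_nonneg _) hx, sq]
  rw [hdiag, Finset.sum_filter, ← Finset.sum_sub_distrib]
  refine Finset.sum_congr rfl fun p _ => ?_
  split_ifs with hp
  · rw [Finset.sum_erase_eq_sub hp, sq]
  · rw [Finset.erase_eq_of_notMem hp, sub_zero]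

variable (K) in
theorem exists_abs_hfreeCount_sub_le (hh : 2 ≤ h) :
    ∃ C : ℝ, 0 ≤ C ∧ ∀ (S : Finset (NonzeroPrime K)) (x : ℝ), 0 < x →
      |hfreeCount h S x
          - kappaK K / zetaK K h * (∏ p ∈ S, hfreeMultipleDensity h N(p.1)) * x|
        ≤ 4 ^ S.card * C * (x / ∏ p ∈ S, N(p.1)) ^ errorExponent K := by
  obtain ⟨C, hC, hcount⟩ := exists_abs_hfreeCount_empty_sub_le K hh
  have hc : 0 ≤ kappaK K / zetaK K h := (div_pos (kappaK_pos K) (zetaK_pos K hh)).le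
  refine ⟨C + kappaK K / zetaK K h, by positivity, fun S x hx => abs_hfreeCount_sub_le hh
    (by linarith [three_quarters_le_errorExponent K]) (errorExponent_lt_one K).le hc
    (le_add_of_nonneg_left hC) (fun y hy => (hcount y hy).trans ?_) S hx⟩
  gcongr
  exact le_add_of_nonneg_right hc

variable (K) in
theorem exists_abs_sum_hfree_omegaK_sq_sub_le (hh : 2 ≤ h) :
    ∃ C : ℝ, ∀ x : ℝ, 0 < x →
      |∑ᶠ I ∈ {I : Ideal (𝓞 K) | I ≠ ⊥ ∧ HFreeI h I ∧ N(I) ≤ x}, (omegaK I : ℝ) ^ 2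
        - kappaK K / zetaK K h * x * (∑ p ∈ primesNormLE K x, hfreeMultipleDensity h N(p.1)
          + ∑ p ∈ primesNormLE K x, ∑ q ∈ primesNormLE K (x / N(p.1)),
              hfreeMultipleDensity h N(p.1) * hfreeMultipleDensity h N(q.1)
          - ∑ p ∈ primesNormLE K √x, hfreeMultipleDensity h N(p.1) ^ 2)|
      ≤ C * (∑ p ∈ primesNormLE K x, (x / N(p.1)) ^ errorExponent K
          + ∑ p ∈ primesNormLE K x, ∑ q ∈ primesNormLE K (x / N(p.1)),
              (x / N(p.1) / N(q.1)) ^ errorExponent K) := by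
  classical
  obtain ⟨C, hC, hcount⟩ := exists_abs_hfreeCount_sub_le K hh
  refine ⟨16 * C, fun x hx => ?_⟩
  have hsingle (p : NonzeroPrime K) :
      |hfreeCount h {p} x - kappaK K / zetaK K h * x * hfreeMultipleDensity h N(p.1)|
        ≤ 16 * C * (x / N(p.1)) ^ errorExponent K := by
    have hp := hcount {p} x hx
    simp only [Finset.prod_singleton, Finset.card_singleton, mul_right_comm _ _ x] at hp
    exact hp.trans (by gcongr; norm_num)
  have hpair (p q : NonzeroPrime K) (hqp : q ≠ p) :
      |hfreeCount h {p, q} x - kappaK K / zetaK K h * x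
          * (hfreeMultipleDensity h N(p.1) * hfreeMultipleDensity h N(q.1))|
        ≤ 16 * C * (x / N(p.1) / N(q.1)) ^ errorExponent K := by
    have hpq := hcount {p, q} x hx
    simp only [Finset.prod_pair hqp.symm, Finset.card_pair hqp.symm, mul_right_comm _ _ x,
      ← div_div] at hpq
    exact hpq.trans_eq (by norm_num)
  rw [sum_hfree_omegaK_sq_eq, add_sub_assoc, ← sum_erase_hfreeMultipleDensity_mul h hx.le,
    ← Finset.sum_add_distrib, ← Finset.sum_add_distrib, Finset.mul_sum, ← Finset.sum_sub_distrib,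
    Finset.mul_sum]
  refine (Finset.abs_sum_le_sum_abs _ _).trans (Finset.sum_le_sum fun p _ => ?_)
  rw [mul_add, mul_add, add_sub_add_comm, Finset.mul_sum, ← Finset.sum_sub_distrib, Finset.mul_sum]
  refine (abs_add_le _ _).trans (add_le_add (hsingle p) ?_)
  refine (Finset.abs_sum_le_sum_abs _ _).trans <| (Finset.sum_le_sum fun q hq =>
    hpair p q (Finset.ne_of_mem_erase hq)).trans ?_
  exact Finset.sum_le_sum_of_subset_of_nonneg (Finset.erase_subset _ _) fun q _ _ => by positivity

end SecondMomentExpansion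

section AbelSummation

open MeasureTheory

variable {ι : Type*} {n w : ι → ℝ} {T : Finset ι} {f f' v V Φ : ℝ → ℝ} {a b : ℝ}

theorem setIntegral_Icc_eq_sub_of_hasDerivAt (hab : a ≤ b)
    (hf : ∀ t ∈ Set.Icc a b, HasDerivAt f (f' t) t) (hf' : ContinuousOn f' (Set.Icc a b)) :
    ∫ t in Set.Icc a b, f' t = f b - f a := by
  rw [← Set.uIcc_of_le hab] at hf hf'
  rw [integral_Icc_eq_integral_Ioc, ← intervalIntegral.integral_of_le hab,
    intervalIntegral.integral_eq_sub_of_hasDerivAt hf hf'.intervalIntegrable]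

theorem eq_sub_integral_indicator (hf : ∀ t ∈ Set.Icc a b, HasDerivAt f (f' t) t)
    (hf' : ContinuousOn f' (Set.Icc a b)) {u : ℝ} (hu : u ∈ Set.Icc a b) :
    f u = f b - ∫ t in Set.Icc a b, (Set.Ici u).indicator f' t := by
  have hinter : Set.Icc a b ∩ Set.Ici u = Set.Icc u b := by
    rw [← Set.Ici_inter_Iic, Set.inter_right_comm, Set.Ici_inter_Ici, max_eq_right hu.1,
      Set.Ici_inter_Iic]
  have hsub : Set.Icc u b ⊆ Set.Icc a b := Set.Icc_subset_Icc_left hu.1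
  rw [setIntegral_indicator measurableSet_Ici, hinter, setIntegral_Icc_eq_sub_of_hasDerivAt hu.2
    (fun t ht => hf t (hsub ht)) (hf'.mono hsub), sub_sub_cancel]

theorem sum_mul_indicator_Ici_eq (n w : ι → ℝ) (T : Finset ι) (f' : ℝ → ℝ) (t : ℝ) :
    ∑ i ∈ T, w i * (Set.Ici (n i)).indicator f' t = f' t * ∑ i ∈ T with n i ≤ t, w i := by
  rw [Finset.sum_filter, Finset.mul_sum]
  refine Finset.sum_congr rfl fun i _ => ?_
  simp only [Set.indicator_apply, Set.mem_Ici]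
  split_ifs <;> ring

theorem integrableOn_mul_indicator_Ici (hf' : ContinuousOn f' (Set.Icc a b)) (c u : ℝ) :
    IntegrableOn (fun t => c * (Set.Ici u).indicator f' t) (Set.Icc a b) :=
  (hf'.integrableOn_Icc.indicator measurableSet_Ici).const_mul c

theorem sum_mul_eq_sub_integral (hn : ∀ i ∈ T, n i ∈ Set.Icc a b)
    (hf : ∀ t ∈ Set.Icc a b, HasDerivAt f (f' t) t) (hf' : ContinuousOn f' (Set.Icc a b)) :
    ∑ i ∈ T, w i * f (n i)
      = f b * ∑ i ∈ T, w i - ∫ t in Set.Icc a b, f' t * ∑ i ∈ T with n i ≤ t, w i := by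
  simp_rw [← sum_mul_indicator_Ici_eq]
  rw [integral_finsetSum _ fun i _ => integrableOn_mul_indicator_Ici hf' _ _, Finset.mul_sum,
    ← Finset.sum_sub_distrib]
  refine Finset.sum_congr rfl fun i hi => ?_
  rw [eq_sub_integral_indicator hf hf' (hn i hi), integral_const_mul]
  ring

theorem sub_eq_mul_sub_integral (hab : a ≤ b) (hf : ∀ t ∈ Set.Icc a b, HasDerivAt f (f' t) t)
    (hf' : ContinuousOn f' (Set.Icc a b)) (hV : ∀ t ∈ Set.Icc a b, HasDerivAt V (v t) t)
    (hΦ : ∀ t ∈ Set.Icc a b, HasDerivAt Φ (f t * v t) t) :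
    Φ b - Φ a = f b * (V b - V a) - ∫ t in Set.Icc a b, f' t * (V t - V a) := by
  have hcont : ContinuousOn (fun t => f' t * (V t - V a)) (Set.Icc a b) :=
    hf'.mul ((HasDerivAt.continuousOn hV).sub continuousOn_const)
  rw [setIntegral_Icc_eq_sub_of_hasDerivAt hab (f := fun t => f t * (V t - V a) - Φ t)
    (fun t ht => ?_) hcont]
  · ring
  · exact (((hf t ht).mul ((hV t ht).sub_const (V a))).sub (hΦ t ht)).congr_deriv (by ring)

theorem abs_sum_mul_sub_le {C : ℝ} (hab : a ≤ b) (hn : ∀ i ∈ T, n i ∈ Set.Icc a b)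
    (hf : ∀ t ∈ Set.Icc a b, HasDerivAt f (f' t) t) (hf' : ContinuousOn f' (Set.Icc a b))
    (hf'0 : ∀ t ∈ Set.Icc a b, f' t ≤ 0) (hV : ∀ t ∈ Set.Icc a b, HasDerivAt V (v t) t)
    (hΦ : ∀ t ∈ Set.Icc a b, HasDerivAt Φ (f t * v t) t)
    (hC : ∀ t ∈ Set.Icc a b, |∑ i ∈ T with n i ≤ t, w i - (V t - V a)| ≤ C) :
    |∑ i ∈ T, w i * f (n i) - (Φ b - Φ a)| ≤ C * (|f b| + (f a - f b)) := by
  have hb : |∑ i ∈ T, w i - (V b - V a)| ≤ C := by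
    simpa [Finset.filter_true_of_mem fun i hi => (hn i hi).2] using hC b ⟨hab, le_rfl⟩
  have hint : IntegrableOn (fun t => f' t * ∑ i ∈ T with n i ≤ t, w i) (Set.Icc a b) := by
    simp_rw [← sum_mul_indicator_Ici_eq]
    exact integrable_finsetSum _ fun i _ => integrableOn_mul_indicator_Ici hf' _ _
  have hintV : IntegrableOn (fun t => f' t * (V t - V a)) (Set.Icc a b) :=
    (hf'.mul ((HasDerivAt.continuousOn hV).sub continuousOn_const)).integrableOn_Icc
  have hf'int : ∫ t in Set.Icc a b, -f' t * C = C * (f a - f b) := by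
    rw [integral_mul_const, integral_neg, setIntegral_Icc_eq_sub_of_hasDerivAt hab hf hf']
    ring
  have hdom : IntegrableOn (fun t => -f' t * C) (Set.Icc a b) :=
    hf'.integrableOn_Icc.neg.mul_const C
  have herr : |∫ t in Set.Icc a b, f' t * (∑ i ∈ T with n i ≤ t, w i - (V t - V a))|
      ≤ C * (f a - f b) := by
    rw [← hf'int, ← Real.norm_eq_abs]
    refine norm_integral_le_of_norm_le hdom ?_
    refine (ae_restrict_iff' measurableSet_Icc).2 (Eventually.of_forall fun t ht => ?_)
    rw [norm_mul, Real.norm_of_nonpos (hf'0 t ht)]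
    exact mul_le_mul_of_nonneg_left (hC t ht) (neg_nonneg.2 (hf'0 t ht))
  calc |∑ i ∈ T, w i * f (n i) - (Φ b - Φ a)|
      = |f b * (∑ i ∈ T, w i - (V b - V a))
          - ∫ t in Set.Icc a b, f' t * (∑ i ∈ T with n i ≤ t, w i - (V t - V a))| := by
        simp_rw [mul_sub _ (Finset.sum _ _)]
        rw [integral_sub hint hintV, sum_mul_eq_sub_integral hn hf hf',
          sub_eq_mul_sub_integral hab hf hf' hV hΦ, sub_sub_sub_comm]
    _ ≤ |f b| * C + C * (f a - f b) := by
        refine (abs_sub _ _).trans (add_le_add ?_ herr)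
        rw [abs_mul]
        gcongr
    _ = C * (|f b| + (f a - f b)) := by ring

end AbelSummation

section Dilogarithm

/-- The dilogarithm `Li₂ x = ∑ xⁿ / n²`; the index is shifted so that the sum starts at `n = 1`. -/
def dilog (x : ℝ) : ℝ := ∑' n : ℕ, x ^ (n + 1) / ((n : ℝ) + 1) ^ 2

theorem hasSum_one_div_add_one_sq :
    HasSum (fun n : ℕ => 1 / ((n : ℝ) + 1) ^ 2) (Real.pi ^ 2 / 6) := by
  simpa using (hasSum_nat_add_iff' 1).2 hasSum_zeta_two

theorem dilog_zero : dilog 0 = 0 := by simp [dilog]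

theorem dilog_one : dilog 1 = Real.pi ^ 2 / 6 := by
  simpa [dilog] using hasSum_one_div_add_one_sq.tsum_eq

theorem continuousOn_dilog : ContinuousOn dilog (Set.Icc 0 1) := by
  refine continuousOn_tsum (fun n => by fun_prop) hasSum_one_div_add_one_sq.summable ?_
  intro n x hx
  rw [norm_div, norm_pow, Real.norm_of_nonneg hx.1, Real.norm_of_nonneg (by positivity)]
  gcongr
  exact pow_le_one₀ hx.1 hx.2

theorem dilog_nonneg {u : ℝ} (hu : 0 ≤ u) : 0 ≤ dilog u := tsum_nonneg fun n => by positivity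

theorem summable_dilog {u : ℝ} (hu0 : 0 ≤ u) (hu1 : u ≤ 1) :
    Summable fun n : ℕ => u ^ (n + 1) / ((n : ℝ) + 1) ^ 2 := by
  refine Summable.of_nonneg_of_le (fun n => by positivity) (fun n => ?_)
    hasSum_one_div_add_one_sq.summable
  gcongr
  exact pow_le_one₀ hu0 hu1

theorem dilog_le {u : ℝ} (hu0 : 0 ≤ u) (hu1 : u ≤ 1) : dilog u ≤ u * (Real.pi ^ 2 / 6) := by
  rw [dilog, ← hasSum_one_div_add_one_sq.tsum_eq, ← tsum_mul_left]
  refine (summable_dilog hu0 hu1).tsum_le_tsum (fun n => ?_)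
    (hasSum_one_div_add_one_sq.summable.mul_left u)
  rw [mul_one_div, pow_succ]
  gcongr
  exact mul_le_of_le_one_left hu0 (pow_le_one₀ hu0 hu1)

theorem tsum_pow_div_add_one {u : ℝ} (hu0 : 0 < u) (hu1 : u < 1) :
    ∑' n : ℕ, u ^ n / ((n : ℝ) + 1) = -Real.log (1 - u) / u := by
  have hlog := Real.hasSum_pow_div_log_of_abs_lt_one (abs_lt.2 ⟨by linarith, hu1⟩)
  rw [← (hlog.div_const u).tsum_eq]
  refine tsum_congr fun n => ?_
  rw [pow_succ]
  field_simp

theorem hasDerivAt_dilog {u : ℝ} (hu0 : 0 < u) (hu1 : u < 1) :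
    HasDerivAt dilog (-Real.log (1 - u) / u) u := by
  obtain ⟨r, hur, hr1⟩ := exists_between hu1
  rw [← tsum_pow_div_add_one hu0 hu1]
  refine hasDerivAt_tsum_of_isPreconnected
    (g := fun (n : ℕ) (y : ℝ) => y ^ (n + 1) / ((n : ℝ) + 1) ^ 2)
    (g' := fun n y => y ^ n / ((n : ℝ) + 1)) (t := Set.Ioo 0 r)
    (summable_geometric_of_lt_one (hu0.trans hur).le hr1) isOpen_Ioo isPreconnected_Ioo
    (fun n y _ => ?_) (fun n y hy => ?_) ⟨hu0, hur⟩ (summable_dilog hu0.le hu1.le) ⟨hu0, hur⟩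
  · refine ((hasDerivAt_pow (n + 1) y).div_const (((n : ℝ) + 1) ^ 2)).congr_deriv ?_
    have : (n : ℝ) + 1 ≠ 0 := by positivity
    push_cast
    field_simp
  · have hyn : 0 ≤ y ^ n := pow_nonneg hy.1.le n
    rw [Real.norm_of_nonneg (by positivity)]
    exact (div_le_self hyn (by simp)).trans (pow_le_pow_left₀ hy.1.le hy.2.le n)

theorem abs_log_one_sub_le {u : ℝ} (hu0 : 0 ≤ u) (hu1 : u ≤ 1 / 2) :
    |Real.log (1 - u)| ≤ 2 * u := by
  have hinv : (1 - u)⁻¹ ≤ 1 + 2 * u := by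
    rw [inv_le_iff_one_le_mul₀ (by linarith)]
    nlinarith
  rw [abs_of_nonpos (Real.log_nonpos (by linarith) (by linarith))]
  linarith [Real.one_sub_inv_le_log_of_pos (x := 1 - u) (by linarith)]

theorem tendsto_log_mul_log_one_sub :
    Tendsto (fun x => Real.log x * Real.log (1 - x)) (𝓝[>] 0) (𝓝 0) := by
  have hlim := (tendsto_log_mul_rpow_nhdsGT_zero zero_lt_one).abs.const_mul 2
  simp only [Real.rpow_one, abs_zero, mul_zero] at hlim
  refine squeeze_zero_norm' ?_ hlim
  filter_upwards [Ioo_mem_nhdsGT (show (0 : ℝ) < 1 / 2 by norm_num)] with x hx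
  rw [norm_mul, Real.norm_eq_abs, Real.norm_eq_abs, abs_mul, abs_of_pos hx.1]
  nlinarith [abs_nonneg (Real.log x), abs_log_one_sub_le hx.1.le hx.2.le]

theorem hasDerivAt_dilog_reflection {x : ℝ} (hx : x ∈ Set.Ioo (0 : ℝ) 1) :
    HasDerivAt (fun x => dilog x + dilog (1 - x) + Real.log x * Real.log (1 - x)) 0 x := by
  have hsub : HasDerivAt (fun x : ℝ => 1 - x) (-1) x := (hasDerivAt_id x).const_sub 1
  have hdilog :=
    (hasDerivAt_dilog (u := 1 - x) (by linarith [hx.2]) (by linarith [hx.1])).comp x hsub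
  have hx0 : x ≠ 0 := hx.1.ne'
  have hx1 : 1 - x ≠ 0 := (sub_pos.2 hx.2).ne'
  refine (((hasDerivAt_dilog hx.1 hx.2).add hdilog).add
    ((Real.hasDerivAt_log hx0).mul (hsub.log hx1))).congr_deriv ?_
  simp only [sub_sub_cancel]
  field_simp
  ring

theorem tendsto_dilog_reflection :
    Tendsto (fun x => dilog x + dilog (1 - x) + Real.log x * Real.log (1 - x)) (𝓝[>] 0)
      (𝓝 (Real.pi ^ 2 / 6)) := by
  have hmem : Set.Icc (0 : ℝ) 1 ∈ 𝓝[>] (0 : ℝ) := Icc_mem_nhdsGT zero_lt_one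
  have hid : Tendsto (fun x : ℝ => x) (𝓝[>] 0) (𝓝[Set.Icc 0 1] 0) :=
    tendsto_nhdsWithin_iff.2 ⟨tendsto_nhdsWithin_of_tendsto_nhds tendsto_id, hmem⟩
  have hsub : Tendsto (fun x : ℝ => 1 - x) (𝓝[>] 0) (𝓝[Set.Icc 0 1] 1) := by
    refine tendsto_nhdsWithin_iff.2 ⟨tendsto_nhdsWithin_of_tendsto_nhds ?_, ?_⟩
    · exact Continuous.tendsto' (by fun_prop) _ _ (sub_zero 1)
    · filter_upwards [hmem] with x hx using ⟨sub_nonneg.2 hx.2, sub_le_self 1 hx.1⟩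
  have hzero := (continuousOn_dilog 0 ⟨le_rfl, zero_le_one⟩).tendsto.comp hid
  have hone := (continuousOn_dilog 1 ⟨zero_le_one, le_rfl⟩).tendsto.comp hsub
  simpa [dilog_zero, dilog_one] using (hzero.add hone).add tendsto_log_mul_log_one_sub

theorem dilog_add_dilog_one_sub {x : ℝ} (hx : x ∈ Set.Ioo (0 : ℝ) 1) :
    dilog x + dilog (1 - x) + Real.log x * Real.log (1 - x) = Real.pi ^ 2 / 6 := by
  refine tendsto_nhds_unique (tendsto_const_nhds.congr' ?_) tendsto_dilog_reflection
  filter_upwards [Ioo_mem_nhdsGT (zero_lt_one (α := ℝ))] with y hy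
  exact isOpen_Ioo.is_const_of_deriv_eq_zero isPreconnected_Ioo
    (fun z hz => (hasDerivAt_dilog_reflection hz).differentiableAt.differentiableWithinAt)
    (fun z hz => (hasDerivAt_dilog_reflection hz).deriv) hx hy

theorem two_mul_dilog_half_add_sq_log_two :
    2 * dilog (1 / 2) + Real.log 2 ^ 2 = Real.pi ^ 2 / 6 := by
  rw [← dilog_add_dilog_one_sub (x := 1 / 2) ⟨by norm_num, by norm_num⟩, sub_half, one_div,
    Real.log_inv]
  ring

end Dilogarithm

section HyperbolaMethod

variable {ι : Type*} {n : ι → ℝ} {S : ℝ → Finset ι} {F : ι → ι → ℝ} {x : ℝ}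

theorem sum_sum_div_eq_sum_sum_ite (hn : ∀ i, 1 ≤ n i) (hS : ∀ x i, i ∈ S x ↔ n i ≤ x) {r : ℝ}
    (hrx : r ≤ x) :
    ∑ i ∈ S r, ∑ j ∈ S (x / n i), F i j
      = ∑ i ∈ S x, ∑ j ∈ S x, if n i ≤ r ∧ n i * n j ≤ x then F i j else 0 := by
  have hn0 (i) : 0 < n i := one_pos.trans_le (hn i)
  have houter : S r = (S x).filter fun i => n i ≤ r := by
    ext i
    rw [Finset.mem_filter, hS, hS, and_iff_right_of_imp hrx.trans']
  have hinner (i) : S (x / n i) = (S x).filter fun j => n i * n j ≤ x := by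
    ext j
    rw [Finset.mem_filter, hS, hS, le_div_iff₀ (hn0 i), mul_comm,
      and_iff_right_of_imp (le_mul_of_one_le_left (hn0 j).le (hn i)).trans]
  rw [houter, Finset.sum_filter]
  refine Finset.sum_congr rfl fun i _ => ?_
  rw [hinner, Finset.sum_filter]
  split_ifs with hi <;> simp [hi]

theorem sum_sum_eq_sum_sum_ite (hS : ∀ x i, i ∈ S x ↔ n i ≤ x) {r : ℝ} (hrx : r ≤ x) :
    ∑ i ∈ S r, ∑ j ∈ S r, F i j
      = ∑ i ∈ S x, ∑ j ∈ S x, if n i ≤ r ∧ n j ≤ r then F i j else 0 := by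
  have hfilter : S r = (S x).filter fun i => n i ≤ r := by
    ext i
    rw [Finset.mem_filter, hS, hS, and_iff_right_of_imp hrx.trans']
  rw [hfilter, Finset.sum_filter]
  refine Finset.sum_congr rfl fun i _ => ?_
  rw [Finset.sum_filter]
  split_ifs with hi <;> simp [hi]

theorem sum_sum_div_eq_hyperbola (hn : ∀ i, 1 ≤ n i) (hS : ∀ x i, i ∈ S x ↔ n i ≤ x)
    (hF : ∀ i j, F i j = F j i) (hx : 1 ≤ x) :
    ∑ i ∈ S x, ∑ j ∈ S (x / n i), F i j
      = 2 * ∑ i ∈ S √x, ∑ j ∈ S (x / n i), F i j - ∑ i ∈ S √x, ∑ j ∈ S √x, F i j := by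
  have hsq : √x * √x = x := Real.mul_self_sqrt (zero_le_one.trans hx)
  have hrx : √x ≤ x := Real.sqrt_le_iff.2 ⟨by linarith, by nlinarith⟩
  have hswap : ∑ i ∈ S √x, ∑ j ∈ S (x / n i), F i j
      = ∑ i ∈ S x, ∑ j ∈ S x, if n j ≤ √x ∧ n i * n j ≤ x then F i j else 0 := by
    rw [sum_sum_div_eq_sum_sum_ite hn hS hrx, Finset.sum_comm]
    refine Finset.sum_congr rfl fun i _ => Finset.sum_congr rfl fun j _ => ?_
    rw [mul_comm, hF]
  rw [two_mul]
  nth_rw 2 [hswap]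
  rw [sum_sum_div_eq_sum_sum_ite hn hS hrx, sum_sum_div_eq_sum_sum_ite hn hS le_rfl,
    sum_sum_eq_sum_sum_ite hS hrx, ← Finset.sum_add_distrib, ← Finset.sum_sub_distrib]
  refine Finset.sum_congr rfl fun i hi => ?_
  rw [← Finset.sum_add_distrib, ← Finset.sum_sub_distrib]
  refine Finset.sum_congr rfl fun j _ => ?_
  have hi0 := hn i
  have hj0 := hn j
  rw [hS] at hi
  by_cases hir : n i ≤ √x <;> by_cases hjr : n j ≤ √x
  · have : n i * n j ≤ x := by nlinarith
    simp [hi, hir, hjr, this]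
  · simp [hi, hir, hjr]
  · simp [hi, hir, hjr]
  · rw [not_le] at hir hjr
    have : ¬ n i * n j ≤ x := by
      rw [not_le, ← hsq]
      exact mul_lt_mul'' hir hjr (Real.sqrt_nonneg x) (Real.sqrt_nonneg x)
    simp [hir.not_ge, hjr.not_ge, this]

end HyperbolaMethod

section IteratedLogarithm

theorem isBigO_one_log_log : (fun _ : ℝ => (1 : ℝ)) =O[atTop] fun x => Real.log (Real.log x) :=
  (isLittleO_const_left.2 <| .inr <| tendsto_norm_atTop_atTop.comp <|
    Real.tendsto_log_atTop.comp Real.tendsto_log_atTop).isBigO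

theorem isBigO_inv_log_one : (fun x => (Real.log x)⁻¹) =O[atTop] fun _ : ℝ => (1 : ℝ) :=
  (Real.tendsto_log_atTop.inv_tendsto_atTop).isBigO_one ℝ

theorem isBigO_inv_log_log_log_mul : (fun x => (Real.log x)⁻¹) =O[atTop]
    fun x => Real.log (Real.log x) * (Real.log x)⁻¹ := by
  simpa only [one_mul] using isBigO_one_log_log.mul (isBigO_refl (fun x => (Real.log x)⁻¹) atTop)

theorem isBigO_inv_log_sqrt :
    (fun x => (Real.log √x)⁻¹) =O[atTop] fun x : ℝ => (Real.log x)⁻¹ := by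
  refine (isBigO_refl _ _ |>.const_mul_left 2).congr' ?_ EventuallyEq.rfl
  filter_upwards [eventually_ge_atTop 0] with x hx
  rw [Real.log_sqrt hx, inv_div, div_eq_mul_inv]

theorem log_log_sqrt {x : ℝ} (hx : 1 < x) :
    Real.log (Real.log √x) = Real.log (Real.log x) - Real.log 2 := by
  rw [Real.log_sqrt (by linarith), Real.log_div (Real.log_pos hx).ne' two_ne_zero]

theorem log_log_div {x y : ℝ} (hx : 1 < x) (hy : 0 < y) (hyx : y < x) :
    Real.log (Real.log (x / y))
      = Real.log (Real.log x) + Real.log (1 - Real.log y / Real.log x) := by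
  have hlog : Real.log x ≠ 0 := (Real.log_pos hx).ne'
  have hratio : 1 - Real.log y / Real.log x ≠ 0 := by
    rw [sub_ne_zero, ne_comm, Ne, div_eq_one_iff_eq hlog]
    exact (Real.log_lt_log hy hyx).ne
  rw [← Real.log_mul hlog hratio, Real.log_div (by positivity) hy.ne', mul_sub, mul_one,
    mul_div_cancel₀ _ hlog]

end IteratedLogarithm

section LogOneSubDiv

variable {u : ℝ}

theorem hasDerivAt_log_one_sub_div (hu0 : u ≠ 0) (hu1 : 1 - u ≠ 0) :
    HasDerivAt (fun u => Real.log (1 - u) / u)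
      ((-1 / (1 - u) * u - Real.log (1 - u) * 1) / u ^ 2) u :=
  (((hasDerivAt_id u).const_sub 1).log hu1).div (hasDerivAt_id u) hu0

theorem deriv_log_one_sub_div_nonpos (hu : u < 1) :
    (-1 / (1 - u) * u - Real.log (1 - u) * 1) / u ^ 2 ≤ 0 := by
  have hpos : 0 < 1 - u := sub_pos.2 hu
  have hlog := Real.one_sub_inv_le_log_of_pos hpos
  have hrw : -1 / (1 - u) * u = 1 - (1 - u)⁻¹ := by
    field_simp
    ring
  exact div_nonpos_of_nonpos_of_nonneg (by rw [hrw]; linarith) (sq_nonneg u)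

theorem continuousOn_deriv_log_one_sub_div {s : Set ℝ} (hs0 : ∀ u ∈ s, u ≠ 0)
    (hs1 : ∀ u ∈ s, 1 - u ≠ 0) :
    ContinuousOn (fun u => (-1 / (1 - u) * u - Real.log (1 - u) * 1) / u ^ 2) s := by
  have hsub : ContinuousOn (fun u : ℝ => 1 - u) s := by fun_prop
  exact (((continuousOn_const.div hsub hs1).mul continuousOn_id).sub
    ((hsub.log hs1).mul continuousOn_const)).div (continuousOn_id.pow 2)
    fun u hu => pow_ne_zero 2 (hs0 u hu)

end LogOneSubDiv

/-- A system of generalized primes: a family of reals `norm i ≥ 2`, finitely many below each bound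
and listed by `normLE`, which satisfies Chebyshev's upper bound and Mertens' first theorem. -/
structure MertensSystem (ι : Type*) where
  norm : ι → ℝ
  normLE : ℝ → Finset ι
  two_le_norm : ∀ i, 2 ≤ norm i
  mem_normLE : ∀ x i, i ∈ normLE x ↔ norm i ≤ x
  exists_sum_log_le : ∃ C, ∀ x, 0 < x → ∑ i ∈ normLE x, Real.log (norm i) ≤ C * x
  exists_abs_sum_log_div_sub_log_le :
    ∃ C, ∀ x, 1 ≤ x → |∑ i ∈ normLE x, Real.log (norm i) / norm i - Real.log x| ≤ C

namespace MertensSystem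

variable {ι : Type*} (s : MertensSystem ι) {i : ι} {A x y : ℝ} {a v : ι → ℝ}

/-- The constant of Mertens' second theorem for `s` is `A`. -/
def HasMertensConstant (A : ℝ) : Prop :=
  Tendsto (fun x => ∑ i ∈ s.normLE x, 1 / s.norm i - Real.log (Real.log x)) atTop (𝓝 A)

theorem one_lt_norm (i : ι) : 1 < s.norm i := one_lt_two.trans_le (s.two_le_norm i)

theorem norm_pos (i : ι) : 0 < s.norm i := two_pos.trans_le (s.two_le_norm i)

theorem log_norm_pos (i : ι) : 0 < Real.log (s.norm i) := Real.log_pos (s.one_lt_norm i)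

theorem log_two_le_log_norm (i : ι) : Real.log 2 ≤ Real.log (s.norm i) :=
  Real.log_le_log two_pos (s.two_le_norm i)

theorem normLE_eq_empty (hx : x < 2) : s.normLE x = ∅ :=
  Finset.eq_empty_of_forall_notMem fun i hi =>
    (hx.trans_le (s.two_le_norm i)).not_ge ((s.mem_normLE x i).1 hi)

theorem normLE_mono (hxy : x ≤ y) : s.normLE x ⊆ s.normLE y := fun i hi =>
  (s.mem_normLE y i).2 (((s.mem_normLE x i).1 hi).trans hxy)

theorem summable_log_mul_of_le (hv : ∀ i, 0 ≤ v i) (hv' : ∀ i, v i ≤ 1 / s.norm i ^ 2) :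
    Summable fun i => Real.log (s.norm i) * v i := by
  obtain ⟨C, hC⟩ := s.exists_sum_log_le
  refine (summable_mul_rpow_neg (fun i => (s.one_lt_norm i).le) s.mem_normLE
    (fun i => (s.log_norm_pos i).le) hC one_lt_two).of_nonneg_of_le
    (fun i => mul_nonneg (s.log_norm_pos i).le (hv i)) fun i => ?_
  have hsq : s.norm i ^ (-2 : ℝ) = 1 / s.norm i ^ 2 := by
    rw [Real.rpow_neg (s.norm_pos i).le, Real.rpow_two, one_div]
  rw [hsq]
  exact mul_le_mul_of_nonneg_left (hv' i) (s.log_norm_pos i).le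

theorem summable_of_summable_log_mul (hv : ∀ i, 0 ≤ v i)
    (hsum : Summable fun i => Real.log (s.norm i) * v i) : Summable v := by
  refine (hsum.mul_left (Real.log 2)⁻¹).of_nonneg_of_le hv fun i => ?_
  rw [← mul_assoc, inv_mul_eq_div]
  exact le_mul_of_one_le_left (hv i)
    ((one_le_div (Real.log_pos one_lt_two)).2 (s.log_two_le_log_norm i))

theorem isBigO_sum_sub_tsum (hv : ∀ i, 0 ≤ v i)
    (hsum : Summable fun i => Real.log (s.norm i) * v i) :
    (fun x => ∑ i ∈ s.normLE x, v i - ∑' i, v i) =O[atTop] fun x => (Real.log x)⁻¹ := by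
  have hlogv (i) : 0 ≤ Real.log (s.norm i) * v i := mul_nonneg (s.log_norm_pos i).le (hv i)
  have hsumv := s.summable_of_summable_log_mul hv hsum
  refine IsBigO.of_bound (∑' i, Real.log (s.norm i) * v i) ?_
  filter_upwards [eventually_gt_atTop 1] with x hx
  have hlogx : 0 < Real.log x := Real.log_pos hx
  have htail : Real.log x * ∑' i : ↥(s.normLE x : Set ι)ᶜ, v i
      ≤ ∑' i, Real.log (s.norm i) * v i := by
    rw [← tsum_mul_left]
    refine le_trans (Summable.tsum_le_tsum (fun i => ?_) ((hsumv.subtype _).mul_left _)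
      (hsum.subtype _)) (hsum.tsum_subtype_le _ _ hlogv)
    have hi : ¬ s.norm i ≤ x := fun h => i.2 ((s.mem_normLE x i).2 h)
    exact mul_le_mul_of_nonneg_right (Real.log_le_log (by linarith) (by linarith)) (hv i)
  have htail0 : 0 ≤ ∑' i : ↥(s.normLE x : Set ι)ᶜ, v i := tsum_nonneg fun i => hv i
  rw [← hsumv.sum_add_tsum_compl (s := s.normLE x), sub_add_cancel_left, norm_neg,
    Real.norm_of_nonneg htail0, Real.norm_of_nonneg (by positivity), ← div_eq_mul_inv,
    le_div_iff₀' hlogx]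
  exact htail

theorem exists_abs_sum_sdiff_sub_le [DecidableEq ι] : ∃ C, 0 ≤ C ∧ ∀ {L a b : ℝ} {f f' Φ : ℝ → ℝ},
    0 < L → 0 ≤ a → a ≤ b → (∀ t ∈ Set.Icc a b, HasDerivAt f (f' t) t) →
    ContinuousOn f' (Set.Icc a b) → (∀ t ∈ Set.Icc a b, f' t ≤ 0) →
    (∀ t ∈ Set.Icc a b, HasDerivAt Φ (f t) t) →
    |∑ i ∈ s.normLE (Real.exp (L * b)) \ s.normLE (Real.exp (L * a)),
        Real.log (s.norm i) / s.norm i / L * f (Real.log (s.norm i) / L) - (Φ b - Φ a)|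
      ≤ C / L * (|f b| + (f a - f b)) := by
  obtain ⟨C, hC⟩ := s.exists_abs_sum_log_div_sub_log_le
  have hC0 : 0 ≤ C := (abs_nonneg _).trans (hC 1 le_rfl)
  refine ⟨2 * C, by positivity, fun {L a b f f' Φ} hL ha hab hf hf' hf'0 hΦ => ?_⟩
  have hlog_le (t : ℝ) (i : ι) : Real.log (s.norm i) / L ≤ t ↔ s.norm i ≤ Real.exp (L * t) := by
    rw [div_le_iff₀' hL, Real.log_le_iff_le_exp (s.norm_pos i)]
  have hmem (i) (hi : i ∈ s.normLE (Real.exp (L * b)) \ s.normLE (Real.exp (L * a))) :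
      Real.log (s.norm i) / L ∈ Set.Icc a b := by
    rw [Finset.mem_sdiff, s.mem_normLE, s.mem_normLE, ← hlog_le, ← hlog_le] at hi
    exact ⟨(not_le.1 hi.2).le, hi.1⟩
  refine abs_sum_mul_sub_le hab hmem hf hf' hf'0 (V := id) (fun t _ => hasDerivAt_id t)
    (by simpa only [mul_one] using hΦ) fun t ht => ?_
  have hfilter : {i ∈ s.normLE (Real.exp (L * b)) \ s.normLE (Real.exp (L * a)) |
      Real.log (s.norm i) / L ≤ t} = s.normLE (Real.exp (L * t)) \ s.normLE (Real.exp (L * a)) := by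
    ext i
    simp only [Finset.mem_filter, Finset.mem_sdiff, s.mem_normLE, ← hlog_le]
    have := ht.2
    grind
  have hmono : s.normLE (Real.exp (L * a)) ⊆ s.normLE (Real.exp (L * t)) :=
    s.normLE_mono (Real.exp_le_exp.2 (mul_le_mul_of_nonneg_left ht.1 hL.le))
  have hCt := hC _ (Real.one_le_exp (mul_nonneg hL.le (ha.trans ht.1)))
  have hCa := hC _ (Real.one_le_exp (mul_nonneg hL.le ha))
  rw [Real.log_exp] at hCt hCa
  rw [hfilter, ← Finset.sum_div, Finset.sum_sdiff_eq_sub hmono, id, id, le_div_iff₀ hL,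
    ← abs_of_pos hL, ← abs_mul, abs_of_pos hL, sub_mul, div_mul_cancel₀ _ hL.ne']
  rw [abs_le] at hCt hCa ⊢
  constructor <;> linarith

theorem exists_abs_sum_sub_log_log_sub_le : ∃ C, ∀ x y, 1 < y → y ≤ x →
    |(∑ i ∈ s.normLE x, 1 / s.norm i - Real.log (Real.log x))
        - (∑ i ∈ s.normLE y, 1 / s.norm i - Real.log (Real.log y))| ≤ C * (Real.log y)⁻¹ := by
  classical
  obtain ⟨C, -, hC⟩ := s.exists_abs_sum_sdiff_sub_le
  refine ⟨C, fun x y hy hyx => ?_⟩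
  have hlogy : 0 < Real.log y := Real.log_pos hy
  have hlogyx : Real.log y ≤ Real.log x := Real.log_le_log (by linarith) hyx
  have hne (t) (ht : t ∈ Set.Icc (Real.log y) (Real.log x)) : t ≠ 0 := (hlogy.trans_le ht.1).ne'
  have hmain := hC (f := fun t => t⁻¹) (f' := fun t => -(t ^ 2)⁻¹) (Φ := Real.log) one_pos hlogy.le
    hlogyx (fun t ht => hasDerivAt_inv (hne t ht))
    ((continuousOn_id.pow 2).inv₀ fun t ht => pow_ne_zero 2 (hne t ht)).neg
    (fun t _ => neg_nonpos.2 (by positivity)) fun t ht => Real.hasDerivAt_log (hne t ht)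
  have hterm (i) : Real.log (s.norm i) / s.norm i / 1 * (Real.log (s.norm i) / 1)⁻¹
      = 1 / s.norm i := by
    have := (s.log_norm_pos i).ne'
    field_simp
  rw [one_mul, one_mul, Real.exp_log (by linarith), Real.exp_log (by linarith),
    abs_of_pos (inv_pos.2 (hlogy.trans_le hlogyx)), add_sub_cancel, div_one,
    Finset.sum_congr rfl fun i _ => hterm i, Finset.sum_sdiff_eq_sub (s.normLE_mono hyx)] at hmain
  rwa [sub_sub_sub_comm]

theorem HasMertensConstant.isBigO_sum_one_div_sub {s : MertensSystem ι}
    (hA : s.HasMertensConstant A) :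
    (fun x => ∑ i ∈ s.normLE x, 1 / s.norm i - Real.log (Real.log x) - A)
      =O[atTop] fun x => (Real.log x)⁻¹ := by
  obtain ⟨C, hC⟩ := s.exists_abs_sum_sub_log_log_sub_le
  refine IsBigO.of_bound C ?_
  filter_upwards [eventually_gt_atTop 1] with y hy
  rw [norm_sub_rev, Real.norm_of_nonneg (inv_nonneg.2 (Real.log_pos hy).le)]
  refine le_of_tendsto (hA.sub_const _).abs ?_
  filter_upwards [eventually_ge_atTop y] with x hx using hC x y hy hx

theorem HasMertensConstant.isBigO_sum_sub {s : MertensSystem ι} (hA : s.HasMertensConstant A)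
    (ha : ∀ i, a i ≤ 1 / s.norm i)
    (hsum : Summable fun i => Real.log (s.norm i) * (1 / s.norm i - a i)) :
    (fun x => ∑ i ∈ s.normLE x, a i - Real.log (Real.log x) - (A - ∑' i, (1 / s.norm i - a i)))
      =O[atTop] fun x => (Real.log x)⁻¹ := by
  refine (hA.isBigO_sum_one_div_sub.sub
    (s.isBigO_sum_sub_tsum (fun i => sub_nonneg.2 (ha i)) hsum)).congr_left fun x => ?_
  rw [Finset.sum_sub_distrib]
  ring

theorem log_norm_div_log_mem_Icc (hx : 1 < x) (hi : i ∈ s.normLE √x) :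
    Real.log (s.norm i) / Real.log x ∈ Set.Icc 0 (1 / 2) := by
  have hlog := Real.log_le_log (s.norm_pos i) ((s.mem_normLE _ i).1 hi)
  rw [Real.log_sqrt (by linarith)] at hlog
  refine ⟨div_nonneg (s.log_norm_pos i).le (Real.log_pos hx).le, ?_⟩
  rw [div_le_iff₀ (Real.log_pos hx)]
  linarith

theorem exists_abs_sum_sdiff_mul_log_one_sub_add_le [DecidableEq ι] : ∃ C, ∀ L a,
    0 < L → 0 < a → a ≤ 1 / 2 →
    |∑ i ∈ s.normLE (Real.exp (L * (1 / 2))) \ s.normLE (Real.exp (L * a)),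
        1 / s.norm i * Real.log (1 - Real.log (s.norm i) / L) + (dilog (1 / 2) - dilog a)|
      ≤ C * L⁻¹ := by
  obtain ⟨C, hC0, hC⟩ := s.exists_abs_sum_sdiff_sub_le
  refine ⟨C * (4 * Real.log 2), fun L a hL ha ha_half => ?_⟩
  have hpos (t) (ht : t ∈ Set.Icc a (1 / 2)) : 0 < t := ha.trans_le ht.1
  have hlt (t) (ht : t ∈ Set.Icc a (1 / 2)) : t < 1 := ht.2.trans_lt one_half_lt_one
  have hmain := hC (Φ := fun t => -dilog t) hL ha.le ha_half
    (fun t ht => hasDerivAt_log_one_sub_div (hpos t ht).ne' (sub_pos.2 (hlt t ht)).ne')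
    (continuousOn_deriv_log_one_sub_div (fun t ht => (hpos t ht).ne')
      fun t ht => (sub_pos.2 (hlt t ht)).ne')
    (fun t ht => deriv_log_one_sub_div_nonpos (hlt t ht))
    fun t ht => (hasDerivAt_dilog (hpos t ht) (hlt t ht)).neg.congr_deriv (by ring)
  have hterm (i) : Real.log (s.norm i) / s.norm i / L
      * (Real.log (1 - Real.log (s.norm i) / L) / (Real.log (s.norm i) / L))
      = 1 / s.norm i * Real.log (1 - Real.log (s.norm i) / L) := by
    have := (s.log_norm_pos i).ne'
    field_simp
  have hfa : Real.log (1 - a) / a ≤ 0 :=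
    div_nonpos_of_nonpos_of_nonneg (Real.log_nonpos (by linarith) (by linarith)) ha.le
  have hfb : Real.log (1 - 1 / 2) / (1 / 2) = -(2 * Real.log 2) := by
    rw [show (1 - 1 / 2 : ℝ) = 2⁻¹ by norm_num, Real.log_inv]
    ring
  rw [neg_sub_neg, ← neg_sub (dilog _), sub_neg_eq_add, Finset.sum_congr rfl fun i _ => hterm i,
    hfb, abs_neg, abs_of_pos (mul_pos two_pos (Real.log_pos one_lt_two))] at hmain
  calc _ ≤ _ := hmain
    _ ≤ C / L * (4 * Real.log 2) := mul_le_mul_of_nonneg_left (by linarith) (by positivity)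
    _ = C * (4 * Real.log 2) * L⁻¹ := by ring

theorem isBigO_sum_one_div_mul_log_one_sub_add_dilog :
    (fun x => ∑ i ∈ s.normLE √x, 1 / s.norm i * Real.log (1 - Real.log (s.norm i) / Real.log x)
      + dilog (1 / 2)) =O[atTop] fun x => (Real.log x)⁻¹ := by
  classical
  obtain ⟨C, hC⟩ := s.exists_abs_sum_sdiff_mul_log_one_sub_add_le
  refine IsBigO.of_bound (C + Real.log (3 / 2) * (Real.pi ^ 2 / 6)) ?_
  filter_upwards [eventually_ge_atTop 4] with x hx
  have hL : 0 < Real.log x := Real.log_pos (by linarith)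
  have hsqrt : 2 ≤ √x := Real.le_sqrt_of_sq_le (by linarith)
  have hexp_half : Real.exp (Real.log x * (1 / 2)) = √x := by
    rw [mul_one_div, ← Real.log_sqrt (by linarith), Real.exp_log (by linarith)]
  -- The cut-off `3 / 2` lies below every norm and avoids `u = 0`, where `log (1 - u) / u` is junk.
  have hexp : Real.exp (Real.log x * (Real.log (3 / 2) / Real.log x)) = 3 / 2 := by
    rw [mul_div_cancel₀ _ hL.ne', Real.exp_log (by norm_num)]
  have ha_half : Real.log (3 / 2) / Real.log x ≤ 1 / 2 := by
    rw [← mul_le_mul_iff_right₀ hL, ← Real.exp_le_exp, hexp, hexp_half]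
    linarith
  have ha : 0 < Real.log (3 / 2) / Real.log x := div_pos (Real.log_pos (by norm_num)) hL
  have hmain := hC _ _ hL ha ha_half
  rw [hexp_half, hexp, s.normLE_eq_empty (x := 3 / 2) (by norm_num), Finset.sdiff_empty,
    ← add_sub_assoc] at hmain
  have hdilog := dilog_le ha.le (ha_half.trans one_half_lt_one.le)
  have hdilog0 := dilog_nonneg ha.le
  rw [div_mul_eq_mul_div, div_eq_mul_inv (_ * _)] at hdilog
  rw [Real.norm_eq_abs, Real.norm_of_nonneg (inv_nonneg.2 hL.le), add_mul]
  rw [abs_le] at hmain ⊢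
  constructor <;> linarith

theorem isBigO_sum_mul_log_one_sub_add_dilog (ha : ∀ i, a i ≤ 1 / s.norm i)
    (hsum : Summable fun i => Real.log (s.norm i) * (1 / s.norm i - a i)) :
    (fun x => ∑ i ∈ s.normLE √x, a i * Real.log (1 - Real.log (s.norm i) / Real.log x)
      + dilog (1 / 2)) =O[atTop] fun x => (Real.log x)⁻¹ := by
  have hsplit : (fun x => ∑ i ∈ s.normLE √x,
      (1 / s.norm i - a i) * Real.log (1 - Real.log (s.norm i) / Real.log x))
      =O[atTop] fun x => (Real.log x)⁻¹ := by
    refine IsBigO.of_bound (2 * ∑' i, Real.log (s.norm i) * (1 / s.norm i - a i)) ?_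
    filter_upwards [eventually_gt_atTop 1] with x hx
    have hL : 0 < Real.log x := Real.log_pos hx
    have hnonneg (i) : 0 ≤ Real.log (s.norm i) * (1 / s.norm i - a i) :=
      mul_nonneg (s.log_norm_pos i).le (sub_nonneg.2 (ha i))
    rw [Real.norm_of_nonneg (inv_nonneg.2 hL.le)]
    calc ‖∑ i ∈ s.normLE √x,
          (1 / s.norm i - a i) * Real.log (1 - Real.log (s.norm i) / Real.log x)‖
        ≤ ∑ i ∈ s.normLE √x,
          (1 / s.norm i - a i) * (2 * (Real.log (s.norm i) / Real.log x)) := by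
          refine norm_sum_le_of_le _ fun i hi => ?_
          obtain ⟨hu0, hu1⟩ := s.log_norm_div_log_mem_Icc hx hi
          rw [norm_mul, Real.norm_of_nonneg (sub_nonneg.2 (ha i))]
          exact mul_le_mul_of_nonneg_left (abs_log_one_sub_le hu0 hu1) (sub_nonneg.2 (ha i))
      _ = 2 * (∑ i ∈ s.normLE √x, Real.log (s.norm i) * (1 / s.norm i - a i))
          * (Real.log x)⁻¹ := by
          rw [Finset.mul_sum, Finset.sum_mul]
          exact Finset.sum_congr rfl fun i _ => by ring
      _ ≤ _ := by
          gcongr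
          exact hsum.sum_le_tsum _ fun i _ => hnonneg i
  refine (s.isBigO_sum_one_div_mul_log_one_sub_add_dilog.sub hsplit).congr_left fun x => ?_
  simp only [sub_mul, Finset.sum_sub_distrib]
  ring

theorem sqrt_le_div_norm (hx : 0 ≤ x) (hi : i ∈ s.normLE √x) : √x ≤ x / s.norm i := by
  rw [s.mem_normLE] at hi
  rw [le_div_iff₀ (s.norm_pos i)]
  calc √x * s.norm i ≤ √x * √x := by gcongr
    _ = x := Real.mul_self_sqrt hx

theorem isBigO_sum_mul_comp_div {g : ℝ → ℝ} (ha : ∀ i, 0 ≤ a i)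
    (hg : g =O[atTop] fun x => (Real.log x)⁻¹) :
    (fun x => ∑ i ∈ s.normLE √x, a i * g (x / s.norm i))
      =O[atTop] fun x => (∑ i ∈ s.normLE √x, a i) * (Real.log x)⁻¹ := by
  obtain ⟨C, hC0, hC⟩ := hg.exists_nonneg
  obtain ⟨B, hB⟩ := eventually_atTop.1 hC.bound
  refine IsBigO.of_bound (2 * C) ?_
  filter_upwards [eventually_gt_atTop 1, Real.tendsto_sqrt_atTop.eventually_ge_atTop B]
    with x hx hxB
  have hx0 : 0 ≤ x := by linarith
  have hL : 0 < Real.log x := Real.log_pos hx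
  rw [Real.norm_of_nonneg (mul_nonneg (Finset.sum_nonneg fun i _ => ha i) (inv_nonneg.2 hL.le)),
    ← mul_assoc, mul_right_comm, Finset.mul_sum]
  refine norm_sum_le_of_le _ fun i hi => ?_
  have hdiv := s.sqrt_le_div_norm hx0 hi
  have hlog : Real.log x / 2 ≤ Real.log (x / s.norm i) := by
    rw [← Real.log_sqrt hx0]
    exact Real.log_le_log (Real.sqrt_pos.2 (by linarith)) hdiv
  have hgi := hB _ (hxB.trans hdiv)
  rw [Real.norm_of_nonneg (inv_nonneg.2 (by linarith))] at hgi
  rw [norm_mul, Real.norm_of_nonneg (ha i), mul_comm]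
  refine mul_le_mul_of_nonneg_right (hgi.trans ?_) (ha i)
  calc C * (Real.log (x / s.norm i))⁻¹ ≤ C * (Real.log x / 2)⁻¹ := by gcongr
    _ = 2 * C * (Real.log x)⁻¹ := by ring

variable {c : ℝ}

theorem isBigO_sum_sqrt_sub (hc : (fun x => ∑ i ∈ s.normLE x, a i - Real.log (Real.log x) - c)
      =O[atTop] fun x => (Real.log x)⁻¹) :
    (fun x => ∑ i ∈ s.normLE √x, a i - (Real.log (Real.log x) - Real.log 2 + c))
      =O[atTop] fun x => (Real.log x)⁻¹ := by
  refine ((hc.comp_tendsto Real.tendsto_sqrt_atTop).trans isBigO_inv_log_sqrt).congr' ?_ .rfl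
  filter_upwards [eventually_gt_atTop 1] with x hx
  rw [Function.comp_apply, log_log_sqrt hx, sub_sub]

theorem isBigO_sum_sqrt (hc : (fun x => ∑ i ∈ s.normLE x, a i - Real.log (Real.log x) - c)
      =O[atTop] fun x => (Real.log x)⁻¹) :
    (fun x => ∑ i ∈ s.normLE √x, a i) =O[atTop] fun x => Real.log (Real.log x) := by
  have hconst (r : ℝ) : (fun _ : ℝ => r) =O[atTop] fun x => Real.log (Real.log x) :=
    (isBigO_const_const r one_ne_zero _).trans isBigO_one_log_log
  refine ((((s.isBigO_sum_sqrt_sub hc).trans isBigO_inv_log_one).trans isBigO_one_log_log).add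
    ((isBigO_refl _ _).add (hconst (c - Real.log 2)))).congr_left fun x => ?_
  ring

-- With `u = log (norm i) / log x`, the inner sum is `log log x + c + log (1 - u)` up to
-- `O (1 / log x)`; the `log (1 - u)` contribute `-dilog (1 / 2)` on average.
theorem isBigO_sum_sqrt_sum_div_sub (ha0 : ∀ i, 0 ≤ a i)
    (hc : (fun x => ∑ i ∈ s.normLE x, a i - Real.log (Real.log x) - c)
      =O[atTop] fun x => (Real.log x)⁻¹) :
    (fun x => ∑ i ∈ s.normLE √x, ∑ j ∈ s.normLE (x / s.norm i), a i * a j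
      - ((Real.log (Real.log x) + c) * ∑ i ∈ s.normLE √x, a i
        + ∑ i ∈ s.normLE √x, a i * Real.log (1 - Real.log (s.norm i) / Real.log x)))
      =O[atTop] fun x => Real.log (Real.log x) * (Real.log x)⁻¹ := by
  refine ((s.isBigO_sum_mul_comp_div ha0 hc).trans
    ((s.isBigO_sum_sqrt hc).mul (isBigO_refl _ _))).congr' ?_ .rfl
  filter_upwards [eventually_gt_atTop 1] with x hx
  rw [Finset.mul_sum, ← Finset.sum_add_distrib, ← Finset.sum_sub_distrib]
  refine Finset.sum_congr rfl fun i hi => ?_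
  have hlt : s.norm i < x := by
    refine ((s.mem_normLE _ i).1 hi).trans_lt ?_
    rw [Real.sqrt_lt' (by linarith)]
    nlinarith
  rw [log_log_div hx (s.norm_pos i) hlt, ← Finset.mul_sum]
  ring

theorem isBigO_sum_sum_mul_sub (ha0 : ∀ i, 0 ≤ a i) (ha : ∀ i, a i ≤ 1 / s.norm i)
    (hsum : Summable fun i => Real.log (s.norm i) * (1 / s.norm i - a i))
    (hc : (fun x => ∑ i ∈ s.normLE x, a i - Real.log (Real.log x) - c)
      =O[atTop] fun x => (Real.log x)⁻¹) :
    (fun x => ∑ i ∈ s.normLE x, ∑ j ∈ s.normLE (x / s.norm i), a i * a j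
      - ((Real.log (Real.log x) + c) ^ 2 - Real.pi ^ 2 / 6))
      =O[atTop] fun x => Real.log (Real.log x) * (Real.log x)⁻¹ := by
  have hsqrt := s.isBigO_sum_sqrt_sub hc
  have hsq := hsqrt.mul (hsqrt.trans isBigO_inv_log_one)
  simp only [mul_one] at hsq
  refine (((((hsqrt.const_mul_left (2 * Real.log 2)).sub hsq).add
    ((s.isBigO_sum_mul_log_one_sub_add_dilog ha hsum).const_mul_left 2)).trans
    isBigO_inv_log_log_log_mul).add
    ((s.isBigO_sum_sqrt_sum_div_sub ha0 hc).const_mul_left 2)).congr' ?_ .rfl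
  filter_upwards [eventually_ge_atTop 1] with x hx
  rw [sum_sum_div_eq_hyperbola (fun i => (s.one_lt_norm i).le) s.mem_normLE
    (fun i j => mul_comm (a i) (a j)) hx, ← Finset.sum_mul_sum, ← two_mul_dilog_half_add_sq_log_two]
  ring

theorem div_rpow_mul_log_le {θ ε : ℝ} (hε : 0 < ε) (hx : 0 < x) (i : ι) :
    (x / s.norm i) ^ θ * Real.log x ≤ Real.log (s.norm i) * (x / s.norm i) ^ θ
      + (ε * Real.log 2)⁻¹ * (Real.log (s.norm i) * (x / s.norm i) ^ (θ + ε)) := by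
  have hdiv : 0 < x / s.norm i := div_pos hx (s.norm_pos i)
  have hlogx : Real.log x = Real.log (s.norm i) + Real.log (x / s.norm i) := by
    rw [Real.log_div hx.ne' (s.norm_pos i).ne']
    ring
  have hone : 1 ≤ (Real.log 2)⁻¹ * Real.log (s.norm i) := by
    rw [inv_mul_eq_div, one_le_div (Real.log_pos one_lt_two)]
    exact s.log_two_le_log_norm i
  calc (x / s.norm i) ^ θ * Real.log x
      = Real.log (s.norm i) * (x / s.norm i) ^ θ
        + (x / s.norm i) ^ θ * Real.log (x / s.norm i) := by rw [hlogx]; ring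
    _ ≤ Real.log (s.norm i) * (x / s.norm i) ^ θ + (x / s.norm i) ^ θ
        * ((x / s.norm i) ^ ε / ε * ((Real.log 2)⁻¹ * Real.log (s.norm i))) := by
        gcongr
        exact (Real.log_le_rpow_div hdiv.le hε).trans (le_mul_of_one_le_right (by positivity) hone)
    _ = _ := by rw [Real.rpow_add hdiv, mul_inv]; ring

theorem isBigO_sum_div_rpow {θ : ℝ} (hθ0 : 0 ≤ θ) (hθ1 : θ < 1) :
    (fun x => ∑ i ∈ s.normLE x, (x / s.norm i) ^ θ) =O[atTop] fun x => x * (Real.log x)⁻¹ := by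
  have hn (i) : 1 ≤ s.norm i := (s.one_lt_norm i).le
  have hlog (i) : 0 ≤ Real.log (s.norm i) := (s.log_norm_pos i).le
  obtain ⟨C, hC⟩ := s.exists_sum_log_le
  obtain ⟨ε, hε, hθε⟩ : ∃ ε, 0 < ε ∧ θ + ε < 1 := ⟨(1 - θ) / 2, by linarith, by linarith⟩
  obtain ⟨C₁, -, hC₁⟩ := exists_sum_mul_div_rpow_le hn s.mem_normLE hlog hC hθ0 hθ1
  obtain ⟨C₂, -, hC₂⟩ := exists_sum_mul_div_rpow_le hn s.mem_normLE hlog hC (by positivity) hθε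
  refine IsBigO.of_bound (C₁ + (ε * Real.log 2)⁻¹ * C₂) ?_
  filter_upwards [eventually_gt_atTop 1] with x hx
  have hx0 : 0 < x := by linarith
  have hL : 0 < Real.log x := Real.log_pos hx
  have hdiv (i) : 0 < x / s.norm i := div_pos hx0 (s.norm_pos i)
  rw [Real.norm_of_nonneg (Finset.sum_nonneg fun i _ => Real.rpow_nonneg (hdiv i).le θ),
    Real.norm_of_nonneg (by positivity), ← mul_assoc, ← div_eq_mul_inv, le_div_iff₀ hL,
    Finset.sum_mul]
  refine (Finset.sum_le_sum fun i _ => s.div_rpow_mul_log_le hε hx0 i).trans ?_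
  rw [Finset.sum_add_distrib, ← Finset.mul_sum, add_mul, mul_assoc]
  exact add_le_add (hC₁ x hx0) (mul_le_mul_of_nonneg_left (hC₂ x hx0) (by positivity))

theorem HasMertensConstant.isBigO_sum_sum_div_rpow {s : MertensSystem ι}
    (hA : s.HasMertensConstant A) {θ : ℝ} (hθ0 : 0 ≤ θ) (hθ1 : θ < 1) :
    (fun x => ∑ i ∈ s.normLE x, ∑ j ∈ s.normLE (x / s.norm i), (x / s.norm i / s.norm j) ^ θ)
      =O[atTop] fun x => x * (Real.log (Real.log x) * (Real.log x)⁻¹) := by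
  have hinner : (fun y => y⁻¹ * ∑ j ∈ s.normLE y, (y / s.norm j) ^ θ)
      =O[atTop] fun y => (Real.log y)⁻¹ := by
    refine ((isBigO_refl (fun y : ℝ => y⁻¹) atTop).mul
      (s.isBigO_sum_div_rpow hθ0 hθ1)).congr' .rfl ?_
    filter_upwards [eventually_ne_atTop 0] with y hy
    rw [inv_mul_cancel_left₀ hy]
  have houter := ((s.isBigO_sum_mul_comp_div (fun i => (one_div_pos.2 (s.norm_pos i)).le)
    hinner).trans ((s.isBigO_sum_sqrt hA.isBigO_sum_one_div_sub).mul (isBigO_refl _ _)))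
  have hxouter := (isBigO_refl (fun x : ℝ => x) atTop).mul (houter.const_mul_left 2)
  refine IsBigO.trans (IsBigO.of_bound 1 ?_) hxouter
  filter_upwards [eventually_ge_atTop 1] with x hx
  have hx0 : 0 < x := by linarith
  have hterm0 (i j) : 0 ≤ (x / s.norm i / s.norm j) ^ θ := Real.rpow_nonneg
    (div_nonneg (div_nonneg hx0.le (s.norm_pos i).le) (s.norm_pos j).le) θ
  have hsum : x * (2 * ∑ i ∈ s.normLE √x, 1 / s.norm i * ((x / s.norm i)⁻¹
        * ∑ j ∈ s.normLE (x / s.norm i), (x / s.norm i / s.norm j) ^ θ))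
      = 2 * ∑ i ∈ s.normLE √x, ∑ j ∈ s.normLE (x / s.norm i), (x / s.norm i / s.norm j) ^ θ := by
    rw [mul_left_comm, Finset.mul_sum]
    congr 1
    refine Finset.sum_congr rfl fun i _ => ?_
    have := (s.norm_pos i).ne'
    field_simp
  have hnonneg (r : ℝ) (f : ι → ℝ) :
      0 ≤ ∑ i ∈ s.normLE r, ∑ j ∈ s.normLE (f i), (x / s.norm i / s.norm j) ^ θ :=
    Finset.sum_nonneg fun i _ => Finset.sum_nonneg fun j _ => hterm0 i j
  rw [one_mul, hsum, Real.norm_of_nonneg (hnonneg _ _),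
    Real.norm_of_nonneg (mul_nonneg two_pos.le (hnonneg _ _)),
    sum_sum_div_eq_hyperbola (fun i => (s.one_lt_norm i).le) s.mem_normLE
      (fun i j => by rw [div_right_comm]) hx]
  exact sub_le_self _ (hnonneg _ fun _ => √x)

end MertensSystem

section SecondMoment

variable (K : Type*) [Field K] [NumberField K] {h : ℕ} {n A x : ℝ}

theorem one_div_sub_hfreeMultipleDensity (hh : h ≠ 0) (hn : 1 < n) :
    1 / n - hfreeMultipleDensity h n = (n - 1) / (n * (n ^ h - 1)) := by
  obtain ⟨k, rfl⟩ := Nat.exists_eq_succ_of_ne_zero hh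
  have hden : n ^ (k + 1) - 1 ≠ 0 := (sub_pos.2 (one_lt_pow₀ hn k.succ_ne_zero)).ne'
  rw [hfreeMultipleDensity, Nat.succ_eq_add_one, Nat.add_sub_cancel]
  field_simp
  ring

theorem one_div_sub_hfreeMultipleDensity_le (hh : 2 ≤ h) (hn : 1 < n) :
    1 / n - hfreeMultipleDensity h n ≤ 1 / n ^ 2 := by
  have hpow : n ^ 2 ≤ n ^ h := pow_le_pow_right₀ hn.le hh
  rw [one_div_sub_hfreeMultipleDensity (by lia) hn,
    div_le_div_iff₀ (mul_pos (by linarith) (by nlinarith)) (by positivity)]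
  nlinarith

/-- The prime ideals of `K`, as a system of generalized primes. -/
def primeMertensSystem : MertensSystem (NonzeroPrime K) where
  norm p := N(p.1)
  normLE := primesNormLE K
  two_le_norm := two_le_absNorm
  mem_normLE _ _ := mem_primesNormLE
  exists_sum_log_le := ⟨_, fun _ hx => sum_log_absNorm_primesNormLE_le hx.le⟩
  exists_abs_sum_log_div_sub_log_le := exists_abs_sum_log_div_absNorm_sub_log_le K

variable {K}

theorem finsum_isPrime_eq_sum_primesNormLE (f : Ideal (𝓞 K) → ℝ) :
    ∑ᶠ p ∈ {p : Ideal (𝓞 K) | p.IsPrime ∧ p ≠ ⊥ ∧ N(p) ≤ x}, f p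
      = ∑ p ∈ primesNormLE K x, f p.1 := by
  have hset : {p : Ideal (𝓞 K) | p.IsPrime ∧ p ≠ ⊥ ∧ N(p) ≤ x}
      = ((primesNormLE K x).map (Function.Embedding.subtype _) : Finset (Ideal (𝓞 K))) := by
    ext p
    simp only [Set.mem_ofPred_eq, Finset.coe_map, Function.Embedding.subtype_apply, Set.mem_image,
      SetLike.mem_coe, mem_primesNormLE, Subtype.exists, exists_and_left, exists_prop,
      ↓existsAndEq, and_true]
    tauto
  rw [hset, finsum_mem_coe_finset, Finset.sum_map]
  rfl

theorem hasMertensConstant_of_mertensK (hA : MertensK K A) :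
    (primeMertensSystem K).HasMertensConstant A :=
  hA.congr fun x => by
    rw [finsum_isPrime_eq_sum_primesNormLE]
    rfl

theorem C1K_eq_sub_tsum (hh : h ≠ 0) :
    C1K K h A = A - ∑' p : NonzeroPrime K, (1 / N(p.1) - hfreeMultipleDensity h N(p.1)) := by
  rw [C1K, tsum_congr fun p : NonzeroPrime K =>
    one_div_sub_hfreeMultipleDensity hh (one_lt_two.trans_le (two_le_absNorm p))]

variable (K) in
theorem summable_log_absNorm_mul_sub (hh : 2 ≤ h) :
    Summable fun p : NonzeroPrime K =>
      Real.log N(p.1) * (1 / N(p.1) - hfreeMultipleDensity h N(p.1)) :=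
  (primeMertensSystem K).summable_log_mul_of_le
    (fun p => sub_nonneg.2 (hfreeMultipleDensity_le (by lia)
      ((primeMertensSystem K).one_lt_norm p)))
    fun p => one_div_sub_hfreeMultipleDensity_le hh ((primeMertensSystem K).one_lt_norm p)

theorem isBigO_sum_hfreeMultipleDensity_sub (hh : 2 ≤ h) (hA : MertensK K A) :
    (fun x => ∑ p ∈ primesNormLE K x, hfreeMultipleDensity h N(p.1)
      - Real.log (Real.log x) - C1K K h A) =O[atTop] fun x => (Real.log x)⁻¹ := by
  rw [C1K_eq_sub_tsum (by lia)]
  exact (hasMertensConstant_of_mertensK hA).isBigO_sum_sub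
    (fun p => hfreeMultipleDensity_le (by lia) ((primeMertensSystem K).one_lt_norm p))
    (summable_log_absNorm_mul_sub K hh)

theorem isBigO_sum_sum_hfreeMultipleDensity_sub (hh : 2 ≤ h) (hA : MertensK K A) :
    (fun x => ∑ p ∈ primesNormLE K x, ∑ q ∈ primesNormLE K (x / N(p.1)),
        hfreeMultipleDensity h N(p.1) * hfreeMultipleDensity h N(q.1)
      - ((Real.log (Real.log x) + C1K K h A) ^ 2 - Real.pi ^ 2 / 6))
      =O[atTop] fun x => Real.log (Real.log x) * (Real.log x)⁻¹ :=
  (primeMertensSystem K).isBigO_sum_sum_mul_sub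
    (fun p => hfreeMultipleDensity_nonneg h ((primeMertensSystem K).one_lt_norm p).le)
    (fun p => hfreeMultipleDensity_le (by lia) ((primeMertensSystem K).one_lt_norm p))
    (summable_log_absNorm_mul_sub K hh) (isBigO_sum_hfreeMultipleDensity_sub hh hA)

variable (K) in
theorem isBigO_sum_sqrt_hfreeMultipleDensity_sq_sub (hh : h ≠ 0) :
    (fun x => ∑ p ∈ primesNormLE K √x, hfreeMultipleDensity h N(p.1) ^ 2
      - ∑' p : NonzeroPrime K, hfreeMultipleDensity h N(p.1) ^ 2)
      =O[atTop] fun x => (Real.log x)⁻¹ := by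
  have hsum := (primeMertensSystem K).summable_log_mul_of_le
      (v := fun p => hfreeMultipleDensity h N(p.1) ^ 2) (fun p => sq_nonneg _) fun p => by
    have hp := (primeMertensSystem K).one_lt_norm p
    rw [← one_div_pow]
    exact pow_le_pow_left₀ (hfreeMultipleDensity_nonneg h hp.le) (hfreeMultipleDensity_le hh hp) 2
  exact (((primeMertensSystem K).isBigO_sum_sub_tsum (fun p => sq_nonneg _) hsum).comp_tendsto
    Real.tendsto_sqrt_atTop).trans isBigO_inv_log_sqrt

theorem C2K_eq_sub_tsum :
    C2K K h A = C1K K h A ^ 2 + C1K K h A - Real.pi ^ 2 / 6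
      - ∑' p : NonzeroPrime K, hfreeMultipleDensity h N(p.1) ^ 2 := by
  rw [C2K, BconstK, neg_div, ← sub_eq_add_neg]
  rfl

theorem isBigO_densities_sub (hh : 2 ≤ h) (hA : MertensK K A) :
    (fun x => ∑ p ∈ primesNormLE K x, hfreeMultipleDensity h N(p.1)
        + ∑ p ∈ primesNormLE K x, ∑ q ∈ primesNormLE K (x / N(p.1)),
            hfreeMultipleDensity h N(p.1) * hfreeMultipleDensity h N(q.1)
        - ∑ p ∈ primesNormLE K √x, hfreeMultipleDensity h N(p.1) ^ 2
      - (Real.log (Real.log x) ^ 2 + (2 * C1K K h A + 1) * Real.log (Real.log x) + C2K K h A))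
      =O[atTop] fun x => Real.log (Real.log x) * (Real.log x)⁻¹ := by
  have hsq := isBigO_sum_sqrt_hfreeMultipleDensity_sq_sub K (h := h) (by lia)
  refine ((((isBigO_sum_hfreeMultipleDensity_sub hh hA).sub hsq).trans
    isBigO_inv_log_log_log_mul).add
    (isBigO_sum_sum_hfreeMultipleDensity_sub hh hA)).congr_left fun x => ?_
  rw [C2K_eq_sub_tsum]
  ring

theorem isBigO_sum_hfree_omegaK_sq_sub (hh : 2 ≤ h) (hA : MertensK K A) :
    (fun x => ∑ᶠ I ∈ {I : Ideal (𝓞 K) | I ≠ ⊥ ∧ HFreeI h I ∧ N(I) ≤ x}, (omegaK I : ℝ) ^ 2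
      - kappaK K / zetaK K h * x * (∑ p ∈ primesNormLE K x, hfreeMultipleDensity h N(p.1)
        + ∑ p ∈ primesNormLE K x, ∑ q ∈ primesNormLE K (x / N(p.1)),
            hfreeMultipleDensity h N(p.1) * hfreeMultipleDensity h N(q.1)
        - ∑ p ∈ primesNormLE K √x, hfreeMultipleDensity h N(p.1) ^ 2))
      =O[atTop] fun x => x * (Real.log (Real.log x) * (Real.log x)⁻¹) := by
  obtain ⟨C, hC⟩ := exists_abs_sum_hfree_omegaK_sq_sub_le K hh
  have hθ0 : 0 ≤ errorExponent K := by linarith [three_quarters_le_errorExponent K]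
  have hsingle := ((primeMertensSystem K).isBigO_sum_div_rpow hθ0 (errorExponent_lt_one K)).trans
    ((isBigO_refl (fun x : ℝ => x) atTop).mul isBigO_inv_log_log_log_mul)
  have hdouble := (hasMertensConstant_of_mertensK hA).isBigO_sum_sum_div_rpow hθ0
    (errorExponent_lt_one K)
  refine IsBigO.trans (IsBigO.of_bound 1 ?_) ((hsingle.add hdouble).const_mul_left C)
  filter_upwards [eventually_gt_atTop 0] with x hx
  rw [one_mul, Real.norm_eq_abs]
  exact (hC x hx).trans (le_abs_self _)

end SecondMoment

/-- Second moment of `ω` over `h`-free ideals of a number field. -/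
theorem second_moment_omega_hfree_ideals (K : Type*) [Field K] [NumberField K]
    (h : ℕ) (hh : 2 ≤ h) (A : ℝ) (hA : MertensK K A) :
    (fun x : ℝ =>
        (∑ᶠ I ∈ {I : Ideal (𝓞 K) | I ≠ ⊥ ∧ HFreeI h I ∧ (Ideal.absNorm I : ℝ) ≤ x},
            (omegaK I : ℝ) ^ 2)
          - kappaK K / zetaK K h * (x * Real.log (Real.log x) ^ 2)
          - kappaK K * (2 * C1K K h A + 1) / zetaK K h * (x * Real.log (Real.log x))
          - kappaK K * C2K K h A / zetaK K h * x)
      =O[atTop] fun x : ℝ => x * Real.log (Real.log x) / Real.log x := by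
  have hmain := ((isBigO_refl (fun x : ℝ => x) atTop).mul
    (isBigO_densities_sub hh hA)).const_mul_left (kappaK K / zetaK K h)
  refine ((isBigO_sum_hfree_omegaK_sq_sub hh hA).add hmain).congr (fun x => ?_) fun x => ?_
  · ring
  · rw [← mul_assoc, div_eq_mul_inv]
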